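/- Let $s \ge 6$ be an integer and $N_r = 100$. Suppose $f_0 : \mathbb{R}^3 \times \mathbb{R}^3 \to [0,\infty)$ is $s$-times continuously differentiable, radially symmetric in the sense that $f_0(Rx, Rv) = f_0(x,v)$ for every $R \in SO(3)$, and for every multi-index $\alpha$ with $|\alpha| \le s$ the function $(1+|x|+|v|)^{N_r} \partial^{\alpha}_{x,v} f_0$ lies in $L^2(\mathbb{R}^3 \times \mathbb{R}^3)$. Then there exists a global classical solution $f$ of the relativistic Vlasov–Poisson system on $[0,\infty)$ with $f(0,\cdot,\cdot) = f_0$, and for every $T > 0$ the electric field satisfies $\sup_{t \in [0,T]} \sup_{x \in \mathbb{R}^3} |E(t,x)| < \infty$. -/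

import Mathlib

open MeasureTheory Real Set
noncomputable section

abbrev E3 := EuclideanSpace ℝ (Fin 3)

/-- The relativistic velocity `v̂ = v / √(1+|v|²)`. -/
def vhat (v : E3) : E3 := (Real.sqrt (1 + ‖v‖ ^ 2))⁻¹ • v

/-- The spatial density `ρ(t,x) = ∫ f(t,x,v) dv`. -/
def rvpRho (f : ℝ → E3 → E3 → ℝ) (t : ℝ) (x : E3) : ℝ := ∫ v, f t x v

/-- The electric field `E(t,x) = (4π)⁻¹ ∫ (x-y) ρ(t,y)/|x-y|³ dy`. -/
def rvpField (f : ℝ → E3 → E3 → ℝ) (t : ℝ) (x : E3) : E3 :=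
  (4 * Real.pi)⁻¹ • ∫ y, (rvpRho f t y / ‖x - y‖ ^ 3) • (x - y)

/-- `f` is a classical solution of the relativistic Vlasov–Poisson system on the
time interval `I`: it is nonnegative, `C¹`, and satisfies the transport equation
`∂ₜ f + v̂ ⋅ ∇ₓ f + E ⋅ ∇ᵥ f = 0` pointwise (phrased as the vanishing of the
derivative of `f` in the direction `(1, v̂, E(t,x))`). -/
def IsRVPSolution (I : Set ℝ) (f : ℝ → E3 → E3 → ℝ) : Prop :=
  (∀ t ∈ I, ∀ x v, 0 ≤ f t x v) ∧
  ContDiffOn ℝ 1 (fun p : ℝ × E3 × E3 => f p.1 p.2.1 p.2.2) (I ×ˢ (Set.univ : Set (E3 × E3))) ∧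
  ∀ t ∈ I, ∀ x v,
    fderivWithin ℝ (fun p : ℝ × E3 × E3 => f p.1 p.2.1 p.2.2)
      (I ×ˢ (Set.univ : Set (E3 × E3))) (t, x, v) (1, vhat v, rvpField f t x) = 0

/-!
The field of a radial solution is `E = m(t, |x|) x / (4π |x|³)` with `m` the enclosed mass, and the
mass is carried by the characteristics of `E`: a solution is a fixed point of the map
"field ↦ characteristics ↦ enclosed mass ↦ field". With `m / |x|³` capped at a constant `K`, this
map sends Lipschitz fields to Lipschitz fields and Picard iteration converges for all times;
volume preservation of the flow, which controls the mass in shells, holds because the flow is a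
limit of compositions of symplectic Euler steps, each made of two shears.

Conservation of energy bounds `min(m, K r³)²` by a multiple of `r`, uniformly in `K`. If momenta
have grown by at most `Q`, the density is `O((1 + Q)⁴)`, and interpolating between these two bounds
makes the force integrable along trajectories. As `x · v` is increasing, a trajectory first moves
inward, losing energy, and then outward, gaining at most `O((1 + Q)^(4/5))`. Hence `Q` is bounded
independently of `K` and of time, and for large `K` the cap is never active.

The spatial density is then continuous and radial, so `E` is `C¹` in `x` and the transported datum
is `C¹`; by Newton's shell theorem `E` is its Coulomb field. Sobolev's inequality on unit cubes
supplies the pointwise decay of the datum.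
-/

section Gronwall

open Filter Topology

theorem abs_le_of_mem_uIcc {s t r T : ℝ} (hs : |s| ≤ T) (ht : |t| ≤ T) (hr : r ∈ uIcc s t) :
    |r| ≤ T :=
  abs_le.2 (uIcc_subset_Icc (abs_le.1 hs) (abs_le.1 ht) hr)

theorem integral_exp_mul_le {c r : ℝ} (hc : 0 < c) :
    ∫ τ in (0 : ℝ)..r, exp (c * τ) ≤ exp (c * r) / c := by
  rw [intervalIntegral.integral_comp_mul_left (fun τ => exp τ) hc.ne', integral_exp, mul_zero,
    exp_zero, smul_eq_mul, div_eq_inv_mul]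
  gcongr
  linarith

theorem integral_exp_mul_abs_le {c r : ℝ} (hc : 0 < c) (hr : 0 ≤ r) :
    ∫ τ in (0 : ℝ)..r, exp (c * |τ|) ≤ exp (c * r) / c := by
  refine (intervalIntegral.integral_congr fun τ hτ => ?_).trans_le (integral_exp_mul_le hc)
  rw [uIcc_of_le hr] at hτ
  simp only [abs_of_nonneg hτ.1]

theorem abs_integral_exp_mul_abs_sub_le {c : ℝ} (hc : 0 < c) (s t : ℝ) :
    |∫ τ in s..t, exp (c * |τ - s|)| ≤ exp (c * |t - s|) / c := by
  have centred : ∫ τ in s..t, exp (c * |τ - s|) = ∫ τ in (0 : ℝ)..(t - s), exp (c * |τ|) := by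
    rw [intervalIntegral.integral_comp_sub_right (fun τ => exp (c * |τ|)) s, sub_self]
  rw [centred]
  generalize t - s = r
  have forward {u : ℝ} (hu : 0 ≤ u) :
      |∫ τ in (0 : ℝ)..u, exp (c * |τ|)| ≤ exp (c * |u|) / c := by
    rw [abs_of_nonneg (intervalIntegral.integral_nonneg hu fun τ _ => (exp_pos _).le),
      abs_of_nonneg hu]
    exact integral_exp_mul_abs_le hc hu
  rcases le_total 0 r with hr | hr
  · exact forward hr
  · have reflected :
        ∫ τ in (0 : ℝ)..r, exp (c * |τ|) = -∫ τ in (0 : ℝ)..(-r), exp (c * |τ|) := by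
      have := intervalIntegral.integral_comp_neg (a := 0) (b := r) fun τ => exp (c * |τ|)
      simp only [abs_neg, neg_zero] at this
      rw [this, intervalIntegral.integral_symm]
    rw [reflected, abs_neg, ← abs_neg r]
    exact forward (neg_nonneg.2 hr)

theorem gronwallBound_le {δ K ε x : ℝ} (hK : 0 ≤ K) (hε : 0 ≤ ε) :
    gronwallBound δ K ε x ≤ (δ + ε * x) * exp (K * x) := by
  rcases hK.eq_or_lt with rfl | hK
  · simp [gronwallBound_K0]
  · have exp_sub_one_le : exp (K * x) - 1 ≤ K * x * exp (K * x) := by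
      have := mul_le_mul_of_nonneg_right (one_sub_le_exp_neg (K * x)) (exp_pos (K * x)).le
      rw [← exp_add, neg_add_cancel, exp_zero] at this
      linarith
    calc gronwallBound δ K ε x = δ * exp (K * x) + ε / K * (exp (K * x) - 1) := by
          rw [gronwallBound_of_K_ne_0 hK.ne']
      _ ≤ δ * exp (K * x) + ε / K * (K * x * exp (K * x)) := by gcongr
      _ = (δ + ε * x) * exp (K * x) := by field_simp

variable {X : Type*} [NormedAddCommGroup X] [NormedSpace ℝ X]

theorem norm_le_of_norm_deriv_le_of_le {w w' : ℝ → X} {K ε s t : ℝ} (hK : 0 ≤ K) (hε : 0 ≤ ε)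
    (hst : s ≤ t) (hw : ∀ r ∈ Icc s t, HasDerivAt w (w' r) r)
    (hb : ∀ r ∈ Icc s t, ‖w' r‖ ≤ K * ‖w r‖ + ε) :
    ‖w t‖ ≤ (‖w s‖ + ε * (t - s)) * exp (K * (t - s)) :=
  (norm_le_gronwallBound_of_norm_deriv_right_le
    (fun r hr => (hw r hr).continuousAt.continuousWithinAt)
    (fun r hr => (hw r (Ico_subset_Icc_self hr)).hasDerivWithinAt) le_rfl
    (fun r hr => hb r (Ico_subset_Icc_self hr)) t ⟨hst, le_rfl⟩).trans (gronwallBound_le hK hε)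

theorem norm_le_of_norm_deriv_le {w w' : ℝ → X} {K ε s t : ℝ} (hK : 0 ≤ K) (hε : 0 ≤ ε)
    (hw : ∀ r ∈ uIcc s t, HasDerivAt w (w' r) r)
    (hb : ∀ r ∈ uIcc s t, ‖w' r‖ ≤ K * ‖w r‖ + ε) :
    ‖w t‖ ≤ (‖w s‖ + ε * |t - s|) * exp (K * |t - s|) := by
  rcases le_total s t with h | h
  · rw [uIcc_of_le h] at hw hb
    rw [abs_of_nonneg (sub_nonneg.2 h)]
    exact norm_le_of_norm_deriv_le_of_le hK hε h hw hb
  · rw [uIcc_of_ge h] at hw hb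
    have mem {r : ℝ} (hr : r ∈ Icc (-s) (-t)) : -r ∈ Icc t s :=
      ⟨le_neg_of_le_neg hr.2, neg_le_of_neg_le hr.1⟩
    have reversed := norm_le_of_norm_deriv_le_of_le (w := fun r => w (-r)) (w' := fun r => -w' (-r))
      hK hε (neg_le_neg h)
      (fun r hr => by simpa [Function.comp_def] using (hw _ (mem hr)).scomp r (hasDerivAt_neg r))
      (fun r hr => (norm_neg _).trans_le (hb _ (mem hr)))
    rw [abs_of_nonpos (sub_nonpos.2 h)]
    simpa only [neg_neg, neg_sub_neg, neg_sub] using reversed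

theorem eventually_abs_fst_le {Y : Type*} [TopologicalSpace Y] (t : ℝ) (y : Y) :
    ∀ᶠ p : ℝ × Y in 𝓝 (t, y), |p.1| ≤ |t| + 1 :=
  ((continuous_abs.comp continuous_fst).continuousAt.eventually_lt continuousAt_const
    (lt_add_one |t|)).mono fun _ => le_of_lt

end Gronwall

section LipschitzFamily

open Filter Topology
open scoped NNReal

/-- A family of maps `v t : X → X` depending continuously on the time `t`, with Lipschitz constant
`K T` on the time interval `[-T, T]`. Vector fields, their flows and electric fields are all
families of this kind. -/
structure IsLipschitzFamily {X : Type*} [NormedAddCommGroup X] (K : ℝ → ℝ≥0) (v : ℝ → X → X) :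
    Prop where
  lipschitzWith : ∀ {T t : ℝ}, |t| ≤ T → LipschitzWith (K T) (v t)
  continuous_time : ∀ x, Continuous fun t => v t x

namespace IsLipschitzFamily

variable {X : Type*} [NormedAddCommGroup X] {K : ℝ → ℝ≥0} {v : ℝ → X → X}

theorem norm_sub_le (h : IsLipschitzFamily K v) {T t : ℝ} (ht : |t| ≤ T) (x y : X) :
    ‖v t x - v t y‖ ≤ K T * ‖x - y‖ :=
  (h.lipschitzWith ht).norm_sub_le x y

theorem continuous_uncurry (h : IsLipschitzFamily K v) : Continuous fun p : ℝ × X => v p.1 p.2 := by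
  refine continuous_iff_continuousAt.2 fun ⟨t, x⟩ => ?_
  have hU : {r : ℝ | |r| < |t| + 1} ∈ 𝓝 t :=
    (isOpen_lt continuous_abs continuous_const).mem_nhds (lt_add_one |t|)
  refine (continuousOn_prod_of_continuousOn_lipschitzOnWith' (fun p : ℝ × X => v p.1 p.2)
    (s := {r : ℝ | |r| < |t| + 1}) (t := univ) (K (|t| + 1)) (fun r hr => ?_)
    fun y _ => (h.continuous_time y).continuousOn).continuousAt (prod_mem_nhds hU univ_mem)
  exact (h.lipschitzWith (le_of_lt hr)).lipschitzOnWith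

variable [NormedSpace ℝ X]

theorem norm_integral_sub_le (h : IsLipschitzFamily K v) {T s t c C : ℝ} (hc : 0 < c)
    (hs : |s| ≤ T) (ht : |t| ≤ T) {α β : ℝ → X}
    (hαβ : ∀ τ, |τ| ≤ T → ‖α τ - β τ‖ ≤ C * exp (c * |τ - s|)) :
    ‖∫ τ in s..t, (v τ (α τ) - v τ (β τ))‖ ≤ K T / c * C * exp (c * |t - s|) := by
  have hC : 0 ≤ C := by simpa using (norm_nonneg _).trans (hαβ s hs)
  calc ‖∫ τ in s..t, (v τ (α τ) - v τ (β τ))‖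
      ≤ |∫ τ in s..t, K T * C * exp (c * |τ - s|)| := by
        refine intervalIntegral.norm_integral_le_abs_of_norm_le ?_
          (by apply Continuous.intervalIntegrable; fun_prop)
        refine (ae_restrict_mem measurableSet_uIoc).mono fun τ hτ => ?_
        have hτ : |τ| ≤ T := abs_le_of_mem_uIcc hs ht (uIoc_subset_uIcc hτ)
        exact (h.norm_sub_le hτ _ _).trans ((mul_le_mul_of_nonneg_left (hαβ τ hτ) (K T).2).trans_eq
          (mul_assoc _ _ _).symm)
    _ = K T * C * |∫ τ in s..t, exp (c * |τ - s|)| := by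
        rw [intervalIntegral.integral_const_mul, abs_mul, abs_of_nonneg (by positivity)]
    _ ≤ K T * C * (exp (c * |t - s|) / c) := by
        gcongr
        exact abs_integral_exp_mul_abs_sub_le hc s t
    _ = K T / c * C * exp (c * |t - s|) := by ring

theorem continuous_comp_weighted (h : IsLipschitzFamily K v) {T : ℝ} (hT : -T ≤ T)
    (c s : ℝ) (W : C(Icc (-T) T, X)) :
    Continuous fun τ => v τ (exp (c * |τ - s|) • IccExtend hT W τ) :=
  h.continuous_uncurry.comp (continuous_id.prodMk (.smul (by fun_prop) W.continuous.Icc_extend'))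

/-- The Picard operator for `α' = v t α`, `α s = x₀` on `[-T, T]`, conjugated by the weight
`exp (c * |t - s|)`: its argument `W` stands for the curve `exp (c * |t - s|) • W t`. -/
def weightedPicard (h : IsLipschitzFamily K v) {T : ℝ} (hT : -T ≤ T) (c s : ℝ) (x₀ : X)
    (W : C(Icc (-T) T, X)) : C(Icc (-T) T, X) where
  toFun t := exp (-(c * |(t : ℝ) - s|)) •
    (x₀ + ∫ τ in s..t, v τ (exp (c * |τ - s|) • IccExtend hT W τ))
  continuous_toFun := by
    have primitive := (intervalIntegral.continuous_primitive (μ := volume)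
      (fun a b => (h.continuous_comp_weighted hT c s W).intervalIntegrable a b) s).comp
        (continuous_subtype_val (p := fun t => t ∈ Icc (-T) T))
    exact .smul (by fun_prop) (continuous_const.add primitive)

theorem dist_weightedPicard_le (h : IsLipschitzFamily K v) {T c s : ℝ} (hT : -T ≤ T) (hc : 0 < c)
    (hs : |s| ≤ T) (x₀ : X) (W₁ W₂ : C(Icc (-T) T, X)) :
    dist (h.weightedPicard hT c s x₀ W₁) (h.weightedPicard hT c s x₀ W₂) ≤
      K T / c * dist W₁ W₂ := by
  refine (ContinuousMap.dist_le (by positivity)).2 fun t => ?_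
  have integrand_sub (τ : ℝ) : ‖exp (c * |τ - s|) • IccExtend hT W₁ τ -
      exp (c * |τ - s|) • IccExtend hT W₂ τ‖ ≤ dist W₁ W₂ * exp (c * |τ - s|) := by
    rw [← smul_sub, norm_smul, norm_of_nonneg (exp_pos _).le, mul_comm, ← dist_eq_norm]
    gcongr
    exact ContinuousMap.dist_apply_le_dist _
  have picard_sub : h.weightedPicard hT c s x₀ W₁ t - h.weightedPicard hT c s x₀ W₂ t =
      exp (-(c * |(t : ℝ) - s|)) • ∫ τ in s..t, (v τ (exp (c * |τ - s|) • IccExtend hT W₁ τ) -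
        v τ (exp (c * |τ - s|) • IccExtend hT W₂ τ)) := by
    rw [intervalIntegral.integral_sub
      ((h.continuous_comp_weighted hT c s W₁).intervalIntegrable _ _)
      ((h.continuous_comp_weighted hT c s W₂).intervalIntegrable _ _)]
    simp only [weightedPicard, ContinuousMap.coe_mk, ← smul_sub, add_sub_add_left_eq_sub]
  calc dist (h.weightedPicard hT c s x₀ W₁ t) (h.weightedPicard hT c s x₀ W₂ t)
      ≤ exp (-(c * |(t : ℝ) - s|)) * (K T / c * dist W₁ W₂ * exp (c * |(t : ℝ) - s|)) := by
        rw [dist_eq_norm, picard_sub, norm_smul, norm_of_nonneg (exp_pos _).le]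
        gcongr
        exact h.norm_integral_sub_le hc hs (abs_le.2 t.2) fun τ _ => integrand_sub τ
    _ = K T / c * dist W₁ W₂ := by
        rw [exp_neg]
        field_simp

theorem eqOn_Ioo (h : IsLipschitzFamily K v) {T s : ℝ} (hs : s ∈ Ioo (-T) T) {α β : ℝ → X}
    (hα : ∀ t ∈ Ioo (-T) T, HasDerivAt α (v t (α t)) t)
    (hβ : ∀ t ∈ Ioo (-T) T, HasDerivAt β (v t (β t)) t) (hs_eq : α s = β s) :
    EqOn α β (Ioo (-T) T) :=
  ODE_solution_unique_of_mem_Ioo (s := fun _ => univ) (K := K T)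
    (fun _ ht => (h.lipschitzWith (abs_le.2 (Ioo_subset_Icc_self ht))).lipschitzOnWith) hs
    (fun t ht => ⟨hα t ht, trivial⟩) (fun t ht => ⟨hβ t ht, trivial⟩) hs_eq

variable [CompleteSpace X]

theorem exists_hasDerivAt_Ioo (h : IsLipschitzFamily K v) {T s : ℝ} (hs : |s| ≤ T) (x₀ : X) :
    ∃ α : ℝ → X, α s = x₀ ∧ ∀ t ∈ Ioo (-T) T, HasDerivAt α (v t (α t)) t := by
  have hT : -T ≤ T := (abs_le.1 hs).1.trans (abs_le.1 hs).2
  set c : ℝ := 2 * K T + 1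
  have hc : 0 < c := by positivity
  have contracting : ContractingWith (1 / 2) (h.weightedPicard hT c s x₀) := by
    refine ⟨by norm_num, LipschitzWith.of_dist_le_mul fun W₁ W₂ => ?_⟩
    refine (h.dist_weightedPicard_le hT hc hs x₀ W₁ W₂).trans
      (mul_le_mul_of_nonneg_right ?_ dist_nonneg)
    rw [div_le_iff₀ hc]
    push_cast
    linarith
  obtain ⟨W, fixed, -⟩ := contracting.exists_fixedPoint 0 (edist_ne_top _ _)
  let α : ℝ → X := fun t => x₀ + ∫ τ in s..t, v τ (exp (c * |τ - s|) • IccExtend hT W τ)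
  have unweighted {t : ℝ} (ht : t ∈ Icc (-T) T) : exp (c * |t - s|) • IccExtend hT W t = α t := by
    rw [IccExtend_of_mem hT W ht, ← fixed.eq]
    simp only [weightedPicard, ContinuousMap.coe_mk, smul_smul, ← exp_add, add_neg_cancel,
      exp_zero, one_smul, α]
  refine ⟨α, by simp [α], fun t ht => ?_⟩
  rw [← unweighted (Ioo_subset_Icc_self ht)]
  have integrand := h.continuous_comp_weighted hT c s W
  exact (intervalIntegral.integral_hasDerivAt_right (integrand.intervalIntegrable _ _)
    integrand.stronglyMeasurable.stronglyMeasurableAtFilter integrand.continuousAt).const_add x₀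

theorem exists_isIntegralCurve (h : IsLipschitzFamily K v) (s : ℝ) (x₀ : X) :
    ∃ α : ℝ → X, α s = x₀ ∧ IsIntegralCurve α v := by
  have hs (T : ℝ) (hT : 0 < T) : s ∈ Ioo (-(|s| + T)) (|s| + T) := abs_lt.1 (by linarith)
  choose a ha_init ha using fun t : ℝ =>
    h.exists_hasDerivAt_Ioo (s := s) (T := |s| + (|t| + 1)) (by linarith [abs_nonneg t]) x₀
  refine ⟨fun t => a t t, ha_init s, fun t => ?_⟩
  obtain ⟨b, hb_init, hb⟩ :=
    h.exists_hasDerivAt_Ioo (s := s) (T := |s| + (|t| + 2)) (by linarith [abs_nonneg t]) x₀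
  have agree {u : ℝ} (hu : |u| < |t| + 1) : a u u = b u :=
    h.eqOn_Ioo (hs (|u| + 1) (by positivity)) (ha u)
      (fun r hr => hb r (Ioo_subset_Ioo (by linarith) (by linarith) hr))
      ((ha_init u).trans hb_init.symm) (abs_lt.1 (by linarith [abs_nonneg s]))
  have eventually_agree : (fun t => a t t) =ᶠ[𝓝 t] b :=
    (continuous_abs.continuousAt.eventually_lt continuousAt_const (lt_add_one |t|)).mono
      fun u hu => agree hu
  have hasDeriv := (hb t (abs_lt.1 (by linarith [abs_nonneg s]))).congr_of_eventuallyEq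
    eventually_agree
  rwa [← agree (lt_add_one |t|)] at hasDeriv

end IsLipschitzFamily
end LipschitzFamily
section Flow

open Filter Topology
open scoped NNReal

variable {X : Type*} [NormedAddCommGroup X] [NormedSpace ℝ X]

open Classical in
/-- The flow of the time-dependent vector field `v`: the value at time `t` of the integral curve
through `x` at time `s`, or the junk value `x` when there is no global integral curve. -/
def odeFlow (v : ℝ → X → X) (s t : ℝ) (x : X) : X :=
  if h : ∃ α : ℝ → X, α s = x ∧ IsIntegralCurve α v then h.choose t else x

namespace IsLipschitzFamily

variable [CompleteSpace X] {K : ℝ → ℝ≥0} {v : ℝ → X → X}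

theorem odeFlow_spec (h : IsLipschitzFamily K v) (s : ℝ) (x : X) :
    odeFlow v s s x = x ∧ IsIntegralCurve (fun t => odeFlow v s t x) v := by
  have exists_curve := h.exists_isIntegralCurve s x
  have flow_eq : (fun t => odeFlow v s t x) = exists_curve.choose := by
    simp only [odeFlow, dif_pos exists_curve]
  have spec := exists_curve.choose_spec
  rw [← flow_eq] at spec
  exact spec

theorem odeFlow_self (h : IsLipschitzFamily K v) (s : ℝ) (x : X) : odeFlow v s s x = x :=
  (h.odeFlow_spec s x).1

theorem hasDerivAt_odeFlow (h : IsLipschitzFamily K v) (s t : ℝ) (x : X) :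
    HasDerivAt (fun t => odeFlow v s t x) (v t (odeFlow v s t x)) t :=
  (h.odeFlow_spec s x).2 t

theorem continuous_odeFlow_time (h : IsLipschitzFamily K v) (s : ℝ) (x : X) :
    Continuous fun t => odeFlow v s t x :=
  continuous_iff_continuousAt.2 fun t => (h.hasDerivAt_odeFlow s t x).continuousAt

theorem odeFlow_eq (h : IsLipschitzFamily K v) {s : ℝ} {x : X} {α : ℝ → X} (hs : α s = x)
    (hα : IsIntegralCurve α v) (t : ℝ) : odeFlow v s t x = α t :=
  h.eqOn_Ioo (T := |s| + |t| + 1) (abs_lt.1 (by linarith [abs_nonneg t]))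
    (fun r _ => h.hasDerivAt_odeFlow s r x) (fun r _ => hα r)
    ((h.odeFlow_self s x).trans hs.symm) (abs_lt.1 (by linarith [abs_nonneg s]))

theorem odeFlow_odeFlow (h : IsLipschitzFamily K v) (s t u : ℝ) (x : X) :
    odeFlow v t u (odeFlow v s t x) = odeFlow v s u x :=
  h.odeFlow_eq rfl (h.odeFlow_spec s x).2 u

theorem odeFlow_odeFlow_self (h : IsLipschitzFamily K v) (s t : ℝ) (x : X) :
    odeFlow v t s (odeFlow v s t x) = x := by
  rw [h.odeFlow_odeFlow, h.odeFlow_self]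

theorem norm_odeFlow_sub_le (h : IsLipschitzFamily K v) {T s t : ℝ} (hs : |s| ≤ T) (ht : |t| ≤ T)
    (x y : X) :
    ‖odeFlow v s t x - odeFlow v s t y‖ ≤ ‖x - y‖ * exp (K T * |t - s|) := by
  simpa only [h.odeFlow_self, zero_mul, add_zero] using
    norm_le_of_norm_deriv_le (w := fun t => odeFlow v s t x - odeFlow v s t y)
      (K T).coe_nonneg le_rfl
      (fun r _ => (h.hasDerivAt_odeFlow s r x).sub (h.hasDerivAt_odeFlow s r y))
      (fun r hr => (h.norm_sub_le (abs_le_of_mem_uIcc hs ht hr) _ _).trans_eq (add_zero _).symm)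

theorem exp_mul_abs_sub_le {K T s t : ℝ} (hK : 0 ≤ K) (hs : |s| ≤ T) (ht : |t| ≤ T) :
    exp (K * |t - s|) ≤ exp (K * (2 * T)) := by
  gcongr
  exact (abs_sub _ _).trans (by linarith)

theorem norm_odeFlow_sub_le_const (h : IsLipschitzFamily K v) {T s t : ℝ} (hs : |s| ≤ T)
    (ht : |t| ≤ T) (x y : X) :
    ‖odeFlow v s t x - odeFlow v s t y‖ ≤ ‖x - y‖ * exp (K T * (2 * T)) :=
  (h.norm_odeFlow_sub_le hs ht x y).trans
    (mul_le_mul_of_nonneg_left (exp_mul_abs_sub_le (K T).coe_nonneg hs ht) (norm_nonneg _))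

theorem lipschitzWith_odeFlow (h : IsLipschitzFamily K v) {T s t : ℝ} (hs : |s| ≤ T)
    (ht : |t| ≤ T) : LipschitzWith (exp (K T * (2 * T))).toNNReal (odeFlow v s t) :=
  LipschitzWith.of_dist_le_mul fun x y => by
    rw [dist_eq_norm, dist_eq_norm, coe_toNNReal _ (exp_pos _).le, mul_comm]
    exact h.norm_odeFlow_sub_le_const hs ht x y

protected theorem odeFlow (h : IsLipschitzFamily K v) (s : ℝ) :
    IsLipschitzFamily (fun T => (exp (K (T + |s|) * (2 * (T + |s|)))).toNNReal)
      (odeFlow v s) where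
  lipschitzWith {T t} ht := h.lipschitzWith_odeFlow (by linarith [abs_nonneg t])
    (by linarith [abs_nonneg s])
  continuous_time := h.continuous_odeFlow_time s

theorem continuous_odeFlow_source (h : IsLipschitzFamily K v) (s : ℝ) (x : X) :
    Continuous fun t => odeFlow v t s x := by
  refine continuous_iff_continuousAt.2 fun t => tendsto_iff_norm_sub_tendsto_zero.2 ?_
  set y := odeFlow v t s x
  have bound : ∀ᶠ r in 𝓝 t, ‖odeFlow v r s x - y‖ ≤
      ‖x - odeFlow v s r y‖ * exp (K (|t| + |s| + 1) * (2 * (|t| + |s| + 1))) := by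
    filter_upwards [continuous_abs.continuousAt.eventually_lt continuousAt_const
      (lt_add_one |t|)] with r hr
    conv_lhs => rw [← h.odeFlow_odeFlow_self s r y]
    exact h.norm_odeFlow_sub_le_const (by linarith [abs_nonneg s]) (by linarith [abs_nonneg t]) _ _
  have limit : Tendsto (fun r => ‖x - odeFlow v s r y‖ *
      exp (K (|t| + |s| + 1) * (2 * (|t| + |s| + 1)))) (𝓝 t) (𝓝 0) := by
    have : Continuous fun r => ‖x - odeFlow v s r y‖ *
        exp (K (|t| + |s| + 1) * (2 * (|t| + |s| + 1))) :=
      (continuous_const.sub (h.continuous_odeFlow_time s y)).norm.mul_const _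
    simpa [y, h.odeFlow_odeFlow_self] using this.tendsto t
  exact squeeze_zero' (.of_forall fun _ => norm_nonneg _) bound limit

theorem odeFlow_source (h : IsLipschitzFamily K v) (s : ℝ) :
    IsLipschitzFamily (fun T => (exp (K (T + |s|) * (2 * (T + |s|)))).toNNReal)
      (fun t => odeFlow v t s) where
  lipschitzWith {T t} ht := h.lipschitzWith_odeFlow (by linarith [abs_nonneg s])
    (by linarith [abs_nonneg t])
  continuous_time := h.continuous_odeFlow_source s

theorem norm_odeFlow_sub_odeFlow_le (h : IsLipschitzFamily K v) {u : ℝ → X → X} {L : ℝ → ℝ≥0}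
    (hu : IsLipschitzFamily L u) {T s t ε : ℝ} (hε : 0 ≤ ε) (hs : |s| ≤ T) (ht : |t| ≤ T) (x : X)
    (hvu : ∀ r, |r| ≤ T → ‖v r (odeFlow u s r x) - u r (odeFlow u s r x)‖ ≤ ε) :
    ‖odeFlow v s t x - odeFlow u s t x‖ ≤ ε * (2 * T) * exp (K T * (2 * T)) := by
  have gronwall := norm_le_of_norm_deriv_le
    (w := fun r => odeFlow v s r x - odeFlow u s r x) (K T).coe_nonneg hε
    (fun r _ => (h.hasDerivAt_odeFlow s r x).sub (hu.hasDerivAt_odeFlow s r x))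
    (fun r hr => by
      have hr := abs_le_of_mem_uIcc hs ht hr
      exact (norm_sub_le_norm_sub_add_norm_sub _ (v r (odeFlow u s r x)) _).trans
        (add_le_add (h.norm_sub_le hr _ _) (hvu r hr)))
  simp only [h.odeFlow_self, hu.odeFlow_self, sub_self, norm_zero, zero_add] at gronwall
  have hst : |t - s| ≤ 2 * T := (abs_sub _ _).trans (by linarith)
  have hT : 0 ≤ 2 * T := (abs_nonneg _).trans hst
  refine gronwall.trans ?_
  gcongr

theorem exists_pos_mul_le {ε C : ℝ} (hε : 0 < ε) (hC : 0 ≤ C) : ∃ δ > 0, δ * C ≤ ε :=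
  ⟨ε / (C + 1), by positivity, by
    rw [div_mul_eq_mul_div, div_le_iff₀ (by positivity)]
    linarith⟩

theorem eventually_forall_abs_le {P : Type*} [TopologicalSpace P] {g : P → ℝ → ℝ}
    (hg : Continuous fun q : P × ℝ => g q.1 q.2) {p : P} (hp : ∀ r, g p r = 0) {ε : ℝ}
    (hε : 0 < ε) (T : ℝ) : ∀ᶠ q in 𝓝 p, ∀ r, |r| ≤ T → g q r < ε := by
  have := isCompact_Icc (a := -T) (b := T).eventually_forall_of_forall_eventually
    (x₀ := p) (P := fun q r => g q r < ε) fun r _ =>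
      (hg.tendsto (p, r)).eventually_lt_const (by simpa [hp] using hε)
  exact this.mono fun q hq r hr => hq r (abs_le.1 hr)

theorem eventually_norm_odeFlow_sub_le {P : Type*} [TopologicalSpace P] {v : P → ℝ → X → X}
    (h : ∀ p, IsLipschitzFamily K (v p))
    (hv : Continuous fun q : P × ℝ × X => v q.1 q.2.1 q.2.2) (p₀ : P) (x : X) {s T : ℝ}
    (hs : |s| ≤ T) {ε : ℝ} (hε : 0 < ε) :
    ∀ᶠ p in 𝓝 p₀, ∀ t, |t| ≤ T → ‖odeFlow (v p) s t x - odeFlow (v p₀) s t x‖ ≤ ε := by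
  have hT : 0 ≤ T := (abs_nonneg s).trans hs
  obtain ⟨δ, hδ, hδε⟩ := exists_pos_mul_le hε (C := 2 * T * exp (K T * (2 * T))) (by positivity)
  have trajectory : Continuous fun q : P × ℝ => odeFlow (v p₀) s q.2 x :=
    ((h p₀).continuous_odeFlow_time s x).comp continuous_snd
  have close := eventually_forall_abs_le (p := p₀)
    (g := fun p r => ‖v p r (odeFlow (v p₀) s r x) - v p₀ r (odeFlow (v p₀) s r x)‖)
    ((hv.comp (continuous_fst.prodMk (continuous_snd.prodMk trajectory))).sub
      (hv.comp (continuous_const.prodMk (continuous_snd.prodMk trajectory)))).norm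
    (fun r => by rw [sub_self, norm_zero]) hδ T
  filter_upwards [close] with p hp t ht
  refine ((h p).norm_odeFlow_sub_odeFlow_le (h p₀) hδ.le hs ht x fun r hr => (hp r hr).le).trans ?_
  rwa [mul_assoc]

theorem continuous_odeFlow_param {P : Type*} [TopologicalSpace P] {v : P → ℝ → X → X}
    (h : ∀ p, IsLipschitzFamily K (v p))
    (hv : Continuous fun q : P × ℝ × X => v q.1 q.2.1 q.2.2) (s : ℝ) (x : X) :
    Continuous fun q : ℝ × P => odeFlow (v q.2) s q.1 x := by
  refine continuous_iff_continuousAt.2 fun ⟨t, p₀⟩ => Metric.tendsto_nhds.2 fun ε hε => ?_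
  have near_param : ∀ᶠ q : ℝ × P in 𝓝 (t, p₀), ∀ r, |r| ≤ |s| + |t| + 1 →
      ‖odeFlow (v q.2) s r x - odeFlow (v p₀) s r x‖ ≤ ε / 2 :=
    continuous_snd.tendsto (t, p₀) |>.eventually
      (eventually_norm_odeFlow_sub_le h hv p₀ x (by linarith [abs_nonneg t]) (half_pos hε))
  have near_time : ∀ᶠ q : ℝ × P in 𝓝 (t, p₀),
      ‖odeFlow (v p₀) s q.1 x - odeFlow (v p₀) s t x‖ < ε / 2 := by
    simpa only [dist_eq_norm, Function.comp_apply] using Metric.tendsto_nhds.1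
      (((h p₀).continuous_odeFlow_time s x).comp continuous_fst |>.tendsto (t, p₀)) _ (half_pos hε)
  filter_upwards [near_param, near_time, eventually_abs_fst_le t p₀] with q hq₁ hq₂ hq
  rw [dist_eq_norm]
  linarith [norm_sub_le_norm_sub_add_norm_sub (odeFlow (v q.2) s q.1 x) (odeFlow (v p₀) s q.1 x)
    (odeFlow (v p₀) s t x), hq₁ q.1 (by linarith [abs_nonneg s])]

end IsLipschitzFamily
end Flow

section FlowDerivative

open Filter Topology
open scoped NNReal

variable {X : Type*} [NormedAddCommGroup X] [NormedSpace ℝ X]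

/-- The derivative of the flow in the initial point: the solution operator of the equation
`A' = dv t (odeFlow v s t x) ∘ A` linearised along the trajectory through `x` at time `s`. -/
def varFlow (v : ℝ → X → X) (dv : ℝ → X → X →L[ℝ] X) (s t : ℝ) (x : X) : X →L[ℝ] X :=
  odeFlow (fun t A => (dv t (odeFlow v s t x)).comp A) s t (ContinuousLinearMap.id ℝ X)

namespace IsLipschitzFamily

variable {K : ℝ → ℝ≥0} {v : ℝ → X → X} {dv : ℝ → X → X →L[ℝ] X}

theorem norm_fderiv_le (h : IsLipschitzFamily K v) (hd : ∀ t x, HasFDerivAt (v t) (dv t x) x)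
    {T t : ℝ} (ht : |t| ≤ T) (x : X) : ‖dv t x‖ ≤ K T :=
  (hd t x).le_of_lipschitz (h.lipschitzWith ht)

variable [CompleteSpace X]

theorem linearised (h : IsLipschitzFamily K v) (hd : ∀ t x, HasFDerivAt (v t) (dv t x) x)
    (hc : Continuous fun p : ℝ × X => dv p.1 p.2) (s : ℝ) (x : X) :
    IsLipschitzFamily K fun t (A : X →L[ℝ] X) => (dv t (odeFlow v s t x)).comp A where
  lipschitzWith ht := LipschitzWith.of_dist_le_mul fun A B => by
    rw [dist_eq_norm, dist_eq_norm, ← ContinuousLinearMap.comp_sub]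
    exact (ContinuousLinearMap.opNorm_comp_le _ _).trans
      (mul_le_mul_of_nonneg_right (h.norm_fderiv_le hd ht _) (norm_nonneg _))
  continuous_time A := (hc.comp (continuous_id.prodMk (h.continuous_odeFlow_time s x))).clm_comp
    continuous_const

theorem varFlow_self (h : IsLipschitzFamily K v) (hd : ∀ t x, HasFDerivAt (v t) (dv t x) x)
    (hc : Continuous fun p : ℝ × X => dv p.1 p.2) (s : ℝ) (x : X) :
    varFlow v dv s s x = ContinuousLinearMap.id ℝ X :=
  (h.linearised hd hc s x).odeFlow_self s _

theorem hasDerivAt_varFlow_apply (h : IsLipschitzFamily K v)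
    (hd : ∀ t x, HasFDerivAt (v t) (dv t x) x) (hc : Continuous fun p : ℝ × X => dv p.1 p.2)
    (s t : ℝ) (x y : X) : HasDerivAt (fun t => varFlow v dv s t x y)
      (dv t (odeFlow v s t x) (varFlow v dv s t x y)) t := by
  simpa [varFlow] using ((h.linearised hd hc s x).hasDerivAt_odeFlow s t
    (ContinuousLinearMap.id ℝ X)).clm_apply (hasDerivAt_const t y)

theorem continuous_varFlow (h : IsLipschitzFamily K v) (hd : ∀ t x, HasFDerivAt (v t) (dv t x) x)
    (hc : Continuous fun p : ℝ × X => dv p.1 p.2) (s : ℝ) :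
    Continuous fun p : ℝ × X => varFlow v dv s p.1 p.2 := by
  refine continuous_odeFlow_param (fun x => h.linearised hd hc s x) ?_ s _
  have flow : Continuous fun q : X × ℝ × (X →L[ℝ] X) => odeFlow v s q.2.1 q.1 :=
    (h.odeFlow s).continuous_uncurry.comp (continuous_snd.fst.prodMk continuous_fst)
  exact (hc.comp (continuous_snd.fst.prodMk flow)).clm_comp continuous_snd.snd

theorem exists_tube (h : IsLipschitzFamily K v) (hc : Continuous fun p : ℝ × X => dv p.1 p.2)
    (s T : ℝ) (x : X) {ε : ℝ} (hε : 0 < ε) :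
    ∃ δ > 0, ∀ t, |t| ≤ T → ∀ y ∈ Metric.ball (odeFlow v s t x) δ,
      ‖dv t y - dv t (odeFlow v s t x)‖ < ε := by
  have trajectory : Continuous fun q : X × ℝ => odeFlow v s q.2 x :=
    (h.continuous_odeFlow_time s x).comp continuous_snd
  have near_zero := eventually_forall_abs_le (p := (0 : X))
    (g := fun z r => ‖dv r (odeFlow v s r x + z) - dv r (odeFlow v s r x)‖)
    ((hc.comp (continuous_snd.prodMk (trajectory.add continuous_fst))).sub
      (hc.comp (continuous_snd.prodMk trajectory))).norm
    (fun r => by rw [add_zero, sub_self, norm_zero]) hε T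
  obtain ⟨δ, hδ, hball⟩ := Metric.eventually_nhds_iff_ball.1 near_zero
  refine ⟨δ, hδ, fun t ht y hy => ?_⟩
  simpa using hball (y - odeFlow v s t x) (by simpa [dist_eq_norm] using hy) t ht

theorem eventually_linearisation (h : IsLipschitzFamily K v)
    (hd : ∀ t x, HasFDerivAt (v t) (dv t x) x) (hc : Continuous fun p : ℝ × X => dv p.1 p.2)
    {s T : ℝ} (hs : |s| ≤ T) (x : X) {ε : ℝ} (hε : 0 < ε) :
    ∀ᶠ y in 𝓝 x, ∀ t, |t| ≤ T → ‖v t (odeFlow v s t y) - v t (odeFlow v s t x) -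
      dv t (odeFlow v s t x) (odeFlow v s t y - odeFlow v s t x)‖ ≤
        ε * ‖odeFlow v s t y - odeFlow v s t x‖ := by
  obtain ⟨δ, hδ, tube⟩ := h.exists_tube hc s T x hε
  have near : ∀ᶠ y in 𝓝 x, ‖y - x‖ * exp (K T * (2 * T)) < δ :=
    (Continuous.tendsto (by fun_prop) x).eventually_lt_const (by simpa using hδ)
  filter_upwards [near] with y hy t ht
  refine (convex_ball (odeFlow v s t x) δ).norm_image_sub_le_of_norm_hasFDerivWithin_le'
    (fun z _ => (hd t z).hasFDerivWithinAt) (fun z hz => (tube t ht z hz).le)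
    (Metric.mem_ball_self hδ) ?_
  rw [Metric.mem_ball, dist_eq_norm]
  exact (h.norm_odeFlow_sub_le_const hs ht y x).trans_lt hy

theorem hasFDerivAt_odeFlow (h : IsLipschitzFamily K v)
    (hd : ∀ t x, HasFDerivAt (v t) (dv t x) x) (hc : Continuous fun p : ℝ × X => dv p.1 p.2)
    (s t : ℝ) (x : X) : HasFDerivAt (odeFlow v s t) (varFlow v dv s t x) x := by
  refine hasFDerivAt_iff_isLittleO.2 (Asymptotics.isLittleO_iff.2 fun ε hε => ?_)
  set T := |s| + |t|
  have hs : |s| ≤ T := le_add_of_nonneg_right (abs_nonneg t)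
  have ht : |t| ≤ T := le_add_of_nonneg_left (abs_nonneg s)
  set M := exp (K T * (2 * T))
  obtain ⟨δ, hδ, hδε⟩ := exists_pos_mul_le hε (C := M * (2 * T) * M) (by positivity)
  filter_upwards [h.eventually_linearisation hd hc hs x hδ] with y hy
  have remainder := norm_le_of_norm_deriv_le (s := s) (t := t) (K := K T)
    (ε := δ * (‖y - x‖ * M)) (w := fun r => odeFlow v s r y - odeFlow v s r x -
      varFlow v dv s r x (y - x)) (K T).coe_nonneg (by positivity)
    (fun r _ => ((h.hasDerivAt_odeFlow s r y).sub (h.hasDerivAt_odeFlow s r x)).sub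
      (h.hasDerivAt_varFlow_apply hd hc s r x (y - x))) fun r hr => by
        have hr := abs_le_of_mem_uIcc hs ht hr
        set L := dv r (odeFlow v s r x)
        set Δ := odeFlow v s r y - odeFlow v s r x
        set A := varFlow v dv s r x (y - x)
        calc ‖v r (odeFlow v s r y) - v r (odeFlow v s r x) - L A‖
            = ‖L (Δ - A) + (v r (odeFlow v s r y) - v r (odeFlow v s r x) - L Δ)‖ := by
              rw [map_sub]; congr 1; abel
          _ ≤ K T * ‖Δ - A‖ + δ * (‖y - x‖ * M) :=
              norm_add_le_of_le (L.le_of_opNorm_le (h.norm_fderiv_le hd hr _) _)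
                ((hy r hr).trans
                  (mul_le_mul_of_nonneg_left (h.norm_odeFlow_sub_le_const hs hr y x) hδ.le))
  rw [h.odeFlow_self, h.odeFlow_self, h.varFlow_self hd hc, ContinuousLinearMap.id_apply, sub_self,
    norm_zero, zero_add] at remainder
  calc ‖odeFlow v s t y - odeFlow v s t x - varFlow v dv s t x (y - x)‖
      ≤ δ * (‖y - x‖ * M) * |t - s| * exp (K T * |t - s|) := remainder
    _ ≤ δ * (‖y - x‖ * M) * (2 * T) * M := by
        gcongr
        · exact (abs_sub _ _).trans (by linarith)
        · exact exp_mul_abs_sub_le (K T).coe_nonneg hs ht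
    _ = δ * (M * (2 * T) * M) * ‖y - x‖ := by ring
    _ ≤ ε * ‖y - x‖ := by gcongr

theorem hasFDerivAt_odeFlow_uncurry (h : IsLipschitzFamily K v)
    (hd : ∀ t x, HasFDerivAt (v t) (dv t x) x) (hc : Continuous fun p : ℝ × X => dv p.1 p.2)
    (s : ℝ) (p : ℝ × X) : HasFDerivAt (fun p : ℝ × X => odeFlow v s p.1 p.2)
      ((ContinuousLinearMap.toSpanSingleton ℝ (v p.1 (odeFlow v s p.1 p.2))).coprod
        (varFlow v dv s p.1 p.2)) p := by
  have time_deriv : Continuous fun p : ℝ × X =>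
      ContinuousLinearMap.toSpanSingleton ℝ (v p.1 (odeFlow v s p.1 p.2)) :=
    (ContinuousLinearMap.toSpanSingletonLIE ℝ X).continuous.comp
      (h.continuous_uncurry.comp (continuous_fst.prodMk (h.odeFlow s).continuous_uncurry))
  exact (hasStrictFDerivAt_uncurry_coprod (f := odeFlow v s)
    (f₁ := fun t x => ContinuousLinearMap.toSpanSingleton ℝ (v t (odeFlow v s t x)))
    (f₂ := varFlow v dv s)
    (Eventually.of_forall fun q => (h.hasDerivAt_odeFlow s q.1 q.2).hasFDerivAt)
    (Eventually.of_forall fun q => h.hasFDerivAt_odeFlow hd hc s q.1 q.2)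
    time_deriv.continuousAt (h.continuous_varFlow hd hc s).continuousAt).hasFDerivAt

theorem contDiff_odeFlow (h : IsLipschitzFamily K v) (hd : ∀ t x, HasFDerivAt (v t) (dv t x) x)
    (hc : Continuous fun p : ℝ × X => dv p.1 p.2) (s : ℝ) :
    ContDiff ℝ 1 fun p : ℝ × X => odeFlow v s p.1 p.2 := by
  refine contDiff_one_iff_hasFDerivAt.2 ⟨_, ?_, h.hasFDerivAt_odeFlow_uncurry hd hc s⟩
  refine (ContinuousLinearMap.coprodEquivL (𝕜 := ℝ) (E := ℝ) (F := X) (G := X) ℝ).continuous.comp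
    (.prodMk ((ContinuousLinearMap.toSpanSingletonLIE ℝ X).continuous.comp ?_)
      (h.continuous_varFlow hd hc s))
  exact h.continuous_uncurry.comp (continuous_fst.prodMk (h.odeFlow s).continuous_uncurry)

theorem varFlow_comp_varFlow (h : IsLipschitzFamily K v)
    (hd : ∀ t x, HasFDerivAt (v t) (dv t x) x) (hc : Continuous fun p : ℝ × X => dv p.1 p.2)
    (s t : ℝ) (x : X) : (varFlow v dv t s (odeFlow v s t x)).comp (varFlow v dv s t x) =
      ContinuousLinearMap.id ℝ X := by
  have chain := (h.hasFDerivAt_odeFlow hd hc t s (odeFlow v s t x)).comp x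
    (h.hasFDerivAt_odeFlow hd hc s t x)
  rw [show odeFlow v t s ∘ odeFlow v s t = id from funext (h.odeFlow_odeFlow_self s t)] at chain
  exact chain.unique (hasFDerivAt_id x)

/-- The flow on extended phase space `ℝ × X`, which keeps the time coordinate. -/
def flowHomeomorph (h : IsLipschitzFamily K v) (s : ℝ) : ℝ × X ≃ₜ ℝ × X where
  toFun p := (p.1, odeFlow v s p.1 p.2)
  invFun p := (p.1, odeFlow v p.1 s p.2)
  left_inv p := by simp only [h.odeFlow_odeFlow_self]
  right_inv p := by simp only [h.odeFlow_odeFlow_self]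
  continuous_toFun := continuous_fst.prodMk (h.odeFlow s).continuous_uncurry
  continuous_invFun := continuous_fst.prodMk (h.odeFlow_source s).continuous_uncurry

/-- The derivative of `flowHomeomorph` at `p`, as an isomorphism. -/
def flowHomeomorphDeriv (h : IsLipschitzFamily K v) (hd : ∀ t x, HasFDerivAt (v t) (dv t x) x)
    (hc : Continuous fun p : ℝ × X => dv p.1 p.2) (s : ℝ) (p : ℝ × X) : (ℝ × X) ≃L[ℝ] (ℝ × X) :=
  ContinuousLinearEquiv.equivOfInverse
    ((ContinuousLinearMap.fst ℝ ℝ X).prod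
      ((ContinuousLinearMap.toSpanSingleton ℝ (v p.1 (odeFlow v s p.1 p.2))).coprod
        (varFlow v dv s p.1 p.2)))
    ((ContinuousLinearMap.fst ℝ ℝ X).prod
      ((varFlow v dv p.1 s (odeFlow v s p.1 p.2)).comp (ContinuousLinearMap.snd ℝ ℝ X -
        (ContinuousLinearMap.toSpanSingleton ℝ (v p.1 (odeFlow v s p.1 p.2))).comp
          (ContinuousLinearMap.fst ℝ ℝ X))))
    (fun q => by
      have := DFunLike.congr_fun (h.varFlow_comp_varFlow hd hc s p.1 p.2) q.2
      simp only [ContinuousLinearMap.comp_apply, ContinuousLinearMap.id_apply] at this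
      ext <;> simp [this])
    (fun q => by
      have := DFunLike.congr_fun (h.varFlow_comp_varFlow hd hc p.1 s (odeFlow v s p.1 p.2))
        (q.2 - q.1 • v p.1 (odeFlow v s p.1 p.2))
      simp only [h.odeFlow_odeFlow_self, ContinuousLinearMap.comp_apply,
        ContinuousLinearMap.id_apply, map_sub, map_smul] at this
      refine Prod.ext (by simp) ?_
      simp [this])

theorem contDiff_odeFlow_source (h : IsLipschitzFamily K v)
    (hd : ∀ t x, HasFDerivAt (v t) (dv t x) x) (hc : Continuous fun p : ℝ × X => dv p.1 p.2)
    (s : ℝ) : ContDiff ℝ 1 fun p : ℝ × X => odeFlow v p.1 s p.2 :=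
  contDiff_snd.comp ((h.flowHomeomorph s).contDiff_symm (f₀' := h.flowHomeomorphDeriv hd hc s)
    (fun p => hasFDerivAt_fst.prodMk (h.hasFDerivAt_odeFlow_uncurry hd hc s p))
    (contDiff_fst.prodMk (h.contDiff_odeFlow hd hc s)))

end IsLipschitzFamily
end FlowDerivative
section OneStepScheme

open Filter Topology
open scoped NNReal

variable {X : Type*}

/-- The `k`-th iterate, started at time `s`, of a one-step scheme `S` with step size `h`; here
`S h r z` advances the state `z` from time `r` to time `r + h`. -/
def schemeIter (S : ℝ → ℝ → X → X) (h s : ℝ) : ℕ → X → X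
  | 0, z => z
  | k + 1, z => S h (s + k * h) (schemeIter S h s k z)

theorem measurePreserving_schemeIter [MeasureSpace X] {S : ℝ → ℝ → X → X}
    (hS : ∀ h s, MeasurePreserving (S h s) volume volume) (h s : ℝ) (k : ℕ) :
    MeasurePreserving (schemeIter S h s k) volume volume := by
  induction k with
  | zero => exact MeasurePreserving.id volume
  | succ k ih => exact (hS h _).comp ih

namespace IsLipschitzFamily

variable [NormedAddCommGroup X] [NormedSpace ℝ X] [CompleteSpace X] {K : ℝ → ℝ≥0}
  {v : ℝ → X → X} {S : ℝ → ℝ → X → X}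

theorem norm_add_smul_sub_odeFlow_le (hv : IsLipschitzFamily K v) {s h C : ℝ} {y z : X}
    (hy : ∀ r ∈ uIcc s (s + h), ‖y - v r (odeFlow v s r z)‖ ≤ C) :
    ‖z + h • y - odeFlow v s (s + h) z‖ ≤ C * |h| := by
  have mean_value := (convex_uIcc s (s + h)).norm_image_sub_le_of_norm_hasDerivWithin_le
    (f := fun r => (r - s) • y - odeFlow v s r z)
    (fun r _ => (((((hasDerivAt_id r).sub_const s).smul_const y)).sub
      (hv.hasDerivAt_odeFlow s r z)).hasDerivWithinAt)
    (fun r hr => by simpa using hy r hr) left_mem_uIcc right_mem_uIcc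
  simp only [add_sub_cancel_left, sub_self, zero_smul, zero_sub, hv.odeFlow_self,
    sub_neg_eq_add, norm_eq_abs] at mean_value
  rwa [show z + h • y - odeFlow v s (s + h) z = h • y - odeFlow v s (s + h) z + z by abel]

/-- Stability of the flow turns a local error `C` into the global error `k * C` after `k` steps. -/
theorem norm_schemeIter_sub_odeFlow_le (hv : IsLipschitzFamily K v) {T h s C : ℝ} {n : ℕ}
    (hC : 0 ≤ C) (hT : |s| + n * |h| ≤ T)
    (hS : ∀ r z, |r| ≤ T → |r + h| ≤ T → ‖S h r z - odeFlow v r (r + h) z‖ ≤ C) (z : X) :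
    ∀ k ≤ n, ‖schemeIter S h s k z - odeFlow v s (s + k * h) z‖ ≤
      k * C * exp (k * (K T * |h|)) := by
  have time_le : ∀ k ≤ n, |s + k * h| ≤ T := fun k hk => by
    refine (abs_add_le _ _).trans (le_trans ?_ hT)
    rw [abs_mul, Nat.abs_cast]
    gcongr
  intro k
  induction k with
  | zero => intro _; simp [schemeIter, hv.odeFlow_self]
  | succ k ih =>
    intro hk
    have hr := time_le k (Nat.le_of_succ_le hk)
    have succ_time : s + ((k + 1 : ℕ) : ℝ) * h = s + k * h + h := by push_cast; ring
    have hr' := time_le (k + 1) hk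
    rw [succ_time] at hr' ⊢
    set r := s + k * h
    set y := schemeIter S h s k z
    set a := K T * |h|
    have stability := hv.norm_odeFlow_sub_le hr hr' y (odeFlow v s r z)
    rw [hv.odeFlow_odeFlow, add_sub_cancel_left] at stability
    have exp_succ : exp ((k + 1 : ℕ) * a) = exp (k * a) * exp a := by
      rw [← exp_add]; push_cast; ring_nf
    calc ‖S h r y - odeFlow v s (r + h) z‖
        ≤ C + ‖y - odeFlow v s r z‖ * exp a :=
          (norm_sub_le_norm_sub_add_norm_sub _ _ _).trans (add_le_add (hS r y hr hr') stability)
      _ ≤ C * exp ((k + 1 : ℕ) * a) + k * C * exp (k * a) * exp a := by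
          gcongr
          · exact le_mul_of_one_le_right hC (one_le_exp (by positivity))
          · exact ih (Nat.le_of_succ_le hk)
      _ = ((k + 1 : ℕ) : ℝ) * C * exp ((k + 1 : ℕ) * a) := by
          rw [exp_succ]; push_cast; ring

theorem tendsto_schemeIter (hv : IsLipschitzFamily K v) {C : ℝ → ℝ} (hC : ∀ T, 0 ≤ T → 0 ≤ C T)
    (hS : ∀ T h r z, |r| ≤ T → |r + h| ≤ T →
      ‖S h r z - odeFlow v r (r + h) z‖ ≤ C T * h ^ 2) (s t : ℝ) (z : X) :
    Tendsto (fun n : ℕ => schemeIter S ((t - s) / (n + 1 : ℕ)) s (n + 1) z) atTop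
      (𝓝 (odeFlow v s t z)) := by
  set T := |s| + |t - s|
  set D := C T * (t - s) ^ 2 * exp (K T * |t - s|)
  refine tendsto_iff_norm_sub_tendsto_zero.2 (squeeze_zero (fun _ => norm_nonneg _) (fun n => ?_)
    (by simpa using tendsto_one_div_add_atTop_nhds_zero_nat.const_mul D))
  have hn : ((n + 1 : ℕ) : ℝ) ≠ 0 := by positivity
  have global_error := hv.norm_schemeIter_sub_odeFlow_le (T := T) (h := (t - s) / (n + 1 : ℕ))
    (s := s) (n := n + 1) (mul_nonneg (hC T (by positivity)) (sq_nonneg _))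
    (by rw [abs_div, Nat.abs_cast, mul_div_cancel₀ _ hn]) (fun r z => hS T _ r z) z (n + 1) le_rfl
  rw [mul_div_cancel₀ _ hn, add_sub_cancel] at global_error
  refine global_error.trans_eq ?_
  have exponent : ((n + 1 : ℕ) : ℝ) * (K T * (|t - s| / (n + 1 : ℕ))) = K T * |t - s| := by
    field_simp
  rw [abs_div, Nat.abs_cast, exponent]
  simp only [D]
  push_cast
  field_simp

end IsLipschitzFamily
end OneStepScheme

section MeasurePreserving

open Filter Topology
open scoped ENNReal

theorem measurePreserving_shear_snd {X Y : Type*} [MeasureSpace X] [MeasureSpace Y] [AddGroup Y]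
    [MeasurableAdd₂ Y] [SFinite (volume : Measure X)] [SFinite (volume : Measure Y)]
    [(volume : Measure Y).IsAddRightInvariant] {a : X → Y} (ha : Measurable a) :
    MeasurePreserving (fun p : X × Y => (p.1, p.2 + a p.1)) volume volume := by
  rw [Measure.volume_eq_prod]
  exact (MeasurePreserving.id volume).skew_product (g := fun x y => y + a x) (by fun_prop)
    (.of_forall fun x => (measurePreserving_add_right volume (a x)).map_eq)

theorem measurePreserving_shear_fst {X Y : Type*} [MeasureSpace X] [MeasureSpace Y] [AddGroup X]
    [MeasurableAdd₂ X] [SFinite (volume : Measure X)] [SFinite (volume : Measure Y)]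
    [(volume : Measure X).IsAddRightInvariant] {a : Y → X} (ha : Measurable a) :
    MeasurePreserving (fun p : X × Y => (p.1 + a p.2, p.2)) volume volume :=
  (Measure.measurePreserving_swap.comp (measurePreserving_shear_snd ha)).comp
    Measure.measurePreserving_swap

variable {X : Type*} [TopologicalSpace X] [MeasurableSpace X] [OpensMeasurableSpace X]
  {μ : Measure X} {S : ℕ → X → X} {Φ : X → X}

theorem measure_preimage_le_of_tendsto_of_isOpen (hS : ∀ n, MeasurePreserving (S n) μ μ)
    (hlim : ∀ z, Tendsto (fun n => S n z) atTop (𝓝 (Φ z))) (hΦ : Continuous Φ) {U : Set X}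
    (hU : IsOpen U) : μ (Φ ⁻¹' U) ≤ μ U := by
  have indicator_le_liminf (z : X) : (Φ ⁻¹' U).indicator (1 : X → ℝ≥0∞) z ≤
      liminf (fun n => (S n ⁻¹' U).indicator (1 : X → ℝ≥0∞) z) atTop := by
    by_cases hz : Φ z ∈ U
    · rw [indicator_of_mem (mem_preimage.2 hz)]
      refine le_liminf_of_le (by isBoundedDefault) ?_
      filter_upwards [(hlim z).eventually (hU.mem_nhds hz)] with n hn
      rw [indicator_of_mem (mem_preimage.2 hn)]
    · rw [indicator_of_notMem (by exact hz)]
      exact zero_le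
  calc μ (Φ ⁻¹' U) = ∫⁻ z, (Φ ⁻¹' U).indicator 1 z ∂μ :=
        (lintegral_indicator_one (hU.preimage hΦ).measurableSet).symm
    _ ≤ ∫⁻ z, liminf (fun n => (S n ⁻¹' U).indicator (1 : X → ℝ≥0∞) z) atTop ∂μ :=
        lintegral_mono indicator_le_liminf
    _ ≤ liminf (fun n => ∫⁻ z, (S n ⁻¹' U).indicator (1 : X → ℝ≥0∞) z ∂μ) atTop :=
        lintegral_liminf_le fun n => measurable_one.indicator ((hS n).measurable hU.measurableSet)
    _ = μ U := by
        simp only [lintegral_indicator_one ((hS _).measurable hU.measurableSet),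
          (hS _).measure_preimage hU.measurableSet.nullMeasurableSet, liminf_const]

theorem measure_preimage_le_of_tendsto [μ.OuterRegular]
    (hS : ∀ n, MeasurePreserving (S n) μ μ) (hlim : ∀ z, Tendsto (fun n => S n z) atTop (𝓝 (Φ z)))
    (hΦ : Continuous Φ) (A : Set X) : μ (Φ ⁻¹' A) ≤ μ A := by
  rw [A.measure_eq_iInf_isOpen μ]
  exact le_iInf₂ fun U hAU => le_iInf fun hU => (measure_mono (preimage_mono hAU)).trans
    (measure_preimage_le_of_tendsto_of_isOpen hS hlim hΦ hU)

end MeasurePreserving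

section RelativisticVelocity

/-- The relativistic energy `γ = √(1 + |v|²)` of a particle with momentum `v`. -/
def lorentz (v : E3) : ℝ := √(1 + ‖v‖ ^ 2)

theorem lorentz_sq (v : E3) : lorentz v ^ 2 = 1 + ‖v‖ ^ 2 := sq_sqrt (by positivity)

theorem one_le_lorentz (v : E3) : 1 ≤ lorentz v :=
  one_le_sqrt.2 (le_add_of_nonneg_right (sq_nonneg _))

theorem lorentz_pos (v : E3) : 0 < lorentz v := one_pos.trans_le (one_le_lorentz v)

theorem norm_le_lorentz (v : E3) : ‖v‖ ≤ lorentz v := le_sqrt_of_sq_le (by linarith)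

theorem lorentz_le (v : E3) : lorentz v ≤ 1 + ‖v‖ :=
  sqrt_le_iff.2 ⟨by positivity, by nlinarith [norm_nonneg v]⟩

theorem abs_lorentz_sub_le (a b : E3) : |lorentz a - lorentz b| ≤ ‖a - b‖ := by
  have hγ : 0 < lorentz a + lorentz b := add_pos (lorentz_pos a) (lorentz_pos b)
  refine le_of_mul_le_mul_right ?_ hγ
  calc |lorentz a - lorentz b| * (lorentz a + lorentz b)
      = |‖a‖ - ‖b‖| * (‖a‖ + ‖b‖) := by
        rw [← abs_of_pos hγ, ← abs_of_nonneg (add_nonneg (norm_nonneg a) (norm_nonneg b)),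
          ← abs_mul, ← abs_mul]
        congr 1
        linarith [lorentz_sq a, lorentz_sq b]
    _ ≤ ‖a - b‖ * (lorentz a + lorentz b) := by
        gcongr
        exacts [abs_norm_sub_norm_le a b, norm_le_lorentz a, norm_le_lorentz b]

theorem vhat_eq (v : E3) : vhat v = (lorentz v)⁻¹ • v := rfl

theorem norm_vhat_le (v : E3) : ‖vhat v‖ ≤ 1 := by
  rw [vhat_eq, norm_smul, norm_inv, norm_of_nonneg (lorentz_pos v).le,
    inv_mul_le_iff₀ (lorentz_pos v), mul_one]
  exact norm_le_lorentz v

theorem norm_vhat_sub_le (a b : E3) : ‖vhat a - vhat b‖ ≤ 2 * ‖a - b‖ := by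
  have ha := lorentz_pos a
  have hb := lorentz_pos b
  have decomposition :
      vhat a - vhat b = (lorentz a)⁻¹ • ((a - b) - (lorentz a - lorentz b) • vhat b) := by
    rw [vhat_eq, vhat_eq, smul_sub, smul_sub, smul_smul, smul_smul, sub_sub, ← add_smul]
    congr 2
    field_simp
    ring
  rw [decomposition, norm_smul, norm_inv, norm_of_nonneg ha.le, inv_mul_le_iff₀ ha]
  calc ‖a - b - (lorentz a - lorentz b) • vhat b‖
      ≤ ‖a - b‖ + |lorentz a - lorentz b| * ‖vhat b‖ := by
        refine (norm_sub_le _ _).trans ?_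
        rw [norm_smul, norm_eq_abs]
    _ ≤ ‖a - b‖ + ‖a - b‖ * 1 := by
        gcongr
        exacts [abs_lorentz_sub_le a b, norm_vhat_le b]
    _ = 1 * (2 * ‖a - b‖) := by ring
    _ ≤ lorentz a * (2 * ‖a - b‖) := by
        gcongr
        exact one_le_lorentz a

theorem continuous_vhat : Continuous vhat :=
  (LipschitzWith.of_dist_le_mul (K := 2) fun a b => by
    rw [dist_eq_norm, dist_eq_norm]; exact norm_vhat_sub_le a b).continuous

theorem contDiff_lorentz : ContDiff ℝ 1 lorentz :=
  (contDiff_const.add (contDiff_norm_sq ℝ)).sqrt fun v => by positivity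

theorem contDiff_vhat : ContDiff ℝ 1 vhat :=
  (contDiff_lorentz.inv fun v => (lorentz_pos v).ne').smul contDiff_id

end RelativisticVelocity
section CharacteristicFlow

open Filter Topology

/-- Force fields on space-time that are bounded by `B` and Lipschitz in space and in time, with
constant `L T` on the time interval `[-T, T]`. -/
structure IsLipschitzField (B : ℝ) (L : ℝ → ℝ) (E : ℝ → E3 → E3) : Prop where
  norm_le : ∀ t x, ‖E t x‖ ≤ B
  norm_sub_le : ∀ T t x y, |t| ≤ T → ‖E t x - E t y‖ ≤ L T * ‖x - y‖
  norm_time_sub_le : ∀ T s t x, |s| ≤ T → |t| ≤ T → ‖E s x - E t x‖ ≤ L T * |s - t|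

/-- The vector field `(v̂, E(t, x))` on phase space, whose integral curves are the characteristics
of the transport equation. -/
def phaseVF (E : ℝ → E3 → E3) (t : ℝ) (z : E3 × E3) : E3 × E3 := (vhat z.2, E t z.1)

/-- The characteristic flow from time `0` to time `t`. -/
def charFlow (E : ℝ → E3 → E3) (t : ℝ) (z : E3 × E3) : E3 × E3 := odeFlow (phaseVF E) 0 t z

/-- One step of the symplectic Euler scheme for the characteristics; unlike the explicit Euler
scheme it preserves volume exactly. -/
def eulerStep (E : ℝ → E3 → E3) (h s : ℝ) (z : E3 × E3) : E3 × E3 :=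
  (z.1 + h • vhat (z.2 + h • E s z.1), z.2 + h • E s z.1)

namespace IsLipschitzField

variable {B : ℝ} {L : ℝ → ℝ} {E : ℝ → E3 → E3}

theorem bound_nonneg (hE : IsLipschitzField B L E) : 0 ≤ B := (norm_nonneg _).trans (hE.norm_le 0 0)

theorem lipschitz_nonneg (hE : IsLipschitzField B L E) {T : ℝ} (hT : 0 ≤ T) : 0 ≤ L T := by
  obtain ⟨x, hx⟩ := exists_ne (0 : E3)
  have := (norm_nonneg _).trans (hE.norm_sub_le T 0 x 0 (by simpa using hT))
  exact nonneg_of_mul_nonneg_left this (norm_pos_iff.2 (sub_ne_zero.2 hx))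

theorem continuous_time (hE : IsLipschitzField B L E) (x : E3) : Continuous fun t => E t x := by
  refine continuous_iff_continuousAt.2 fun t => tendsto_iff_norm_sub_tendsto_zero.2 ?_
  have linear_bound : Tendsto (fun s : ℝ => L (|t| + 1) * |s - t|) (𝓝 t) (𝓝 0) := by
    have : Continuous fun s : ℝ => L (|t| + 1) * |s - t| := by fun_prop
    simpa using this.tendsto t
  have time_near : ∀ᶠ s in 𝓝 t, |s| < |t| + 1 :=
    continuous_abs.continuousAt.eventually_lt continuousAt_const (lt_add_one _)
  refine squeeze_zero' (.of_forall fun _ => norm_nonneg _) ?_ linear_bound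
  filter_upwards [time_near] with s hs
  exact hE.norm_time_sub_le _ _ _ _ hs.le (le_add_of_nonneg_right one_pos.le)

theorem continuous_space (hE : IsLipschitzField B L E) (t : ℝ) : Continuous (E t) :=
  (LipschitzWith.of_dist_le_mul (K := (L |t|).toNNReal) fun a b => by
    rw [dist_eq_norm, dist_eq_norm, coe_toNNReal _ (hE.lipschitz_nonneg (abs_nonneg t))]
    exact hE.norm_sub_le _ t a b le_rfl).continuous

theorem norm_phaseVF_sub_le (hE : IsLipschitzField B L E) {T t : ℝ} (ht : |t| ≤ T)
    (z w : E3 × E3) : ‖phaseVF E t z - phaseVF E t w‖ ≤ (2 + L T) * ‖z - w‖ := by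
  have hL := hE.lipschitz_nonneg ((abs_nonneg t).trans ht)
  refine max_le ((norm_vhat_sub_le _ _).trans ?_) ((hE.norm_sub_le T t _ _ ht).trans ?_)
  · gcongr
    exacts [le_add_of_nonneg_right hL, norm_snd_le (z - w)]
  · gcongr
    exacts [le_add_of_nonneg_left zero_le_two, norm_fst_le (z - w)]

theorem isLipschitzFamily (hE : IsLipschitzField B L E) :
    IsLipschitzFamily (fun T => (2 + L T).toNNReal) (phaseVF E) where
  lipschitzWith {T t} ht := LipschitzWith.of_dist_le_mul fun z w => by
    have hL := hE.lipschitz_nonneg ((abs_nonneg t).trans ht)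
    rw [dist_eq_norm, dist_eq_norm, coe_toNNReal _ (by positivity)]
    exact hE.norm_phaseVF_sub_le ht z w
  continuous_time z := continuous_const.prodMk (hE.continuous_time z.1)

theorem norm_phaseVF_le (hE : IsLipschitzField B L E) (t : ℝ) (z : E3 × E3) :
    ‖phaseVF E t z‖ ≤ 1 + B :=
  max_le ((norm_vhat_le _).trans (le_add_of_nonneg_right hE.bound_nonneg))
    ((hE.norm_le _ _).trans (le_add_of_nonneg_left one_pos.le))

theorem norm_odeFlow_time_sub_le (hE : IsLipschitzField B L E) (s t u : ℝ) (z : E3 × E3) :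
    ‖odeFlow (phaseVF E) s t z - odeFlow (phaseVF E) s u z‖ ≤ (1 + B) * |t - u| :=
  convex_univ.norm_image_sub_le_of_norm_hasDerivWithin_le
    (fun r _ => (hE.isLipschitzFamily.hasDerivAt_odeFlow s r z).hasDerivWithinAt)
    (fun _ _ => hE.norm_phaseVF_le _ _) (mem_univ u) (mem_univ t)

theorem hasDerivAt_pos (hE : IsLipschitzField B L E) (t : ℝ) (z : E3 × E3) :
    HasDerivAt (fun t => (charFlow E t z).1) (vhat (charFlow E t z).2) t :=
  (hE.isLipschitzFamily.hasDerivAt_odeFlow 0 t z).fst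

theorem hasDerivAt_vel (hE : IsLipschitzField B L E) (t : ℝ) (z : E3 × E3) :
    HasDerivAt (fun t => (charFlow E t z).2) (E t (charFlow E t z).1) t :=
  (hE.isLipschitzFamily.hasDerivAt_odeFlow 0 t z).snd

theorem charFlow_zero (hE : IsLipschitzField B L E) (z : E3 × E3) : charFlow E 0 z = z :=
  hE.isLipschitzFamily.odeFlow_self 0 z

theorem norm_pos_sub_le (hE : IsLipschitzField B L E) (s t : ℝ) (z : E3 × E3) :
    ‖(charFlow E s z).1 - (charFlow E t z).1‖ ≤ |s - t| := by
  simpa using convex_univ.norm_image_sub_le_of_norm_hasDerivWithin_le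
    (fun r _ => (hE.hasDerivAt_pos r z).hasDerivWithinAt)
    (fun _ _ => norm_vhat_le _) (mem_univ t) (mem_univ s)

theorem norm_vel_sub_le (hE : IsLipschitzField B L E) (s t : ℝ) (z : E3 × E3) :
    ‖(charFlow E s z).2 - (charFlow E t z).2‖ ≤ B * |s - t| :=
  convex_univ.norm_image_sub_le_of_norm_hasDerivWithin_le
    (fun r _ => (hE.hasDerivAt_vel r z).hasDerivWithinAt)
    (fun _ _ => hE.norm_le _ _) (mem_univ t) (mem_univ s)

theorem continuous_odeFlow (hE : IsLipschitzField B L E) (s t : ℝ) :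
    Continuous (odeFlow (phaseVF E) s t) :=
  (hE.isLipschitzFamily.lipschitzWith_odeFlow (T := |s| + |t|)
    (le_add_of_nonneg_right (abs_nonneg t)) (le_add_of_nonneg_left (abs_nonneg s))).continuous

theorem continuous_charFlow (hE : IsLipschitzField B L E) (t : ℝ) :
    Continuous (charFlow E t) := hE.continuous_odeFlow 0 t

theorem norm_eulerVelocity_sub_phaseVF_le (hE : IsLipschitzField B L E) {T s τ δ : ℝ}
    (hs : |s| ≤ T) (hτ : |τ| ≤ T) {h : ℝ} {z w : E3 × E3} (hh : |h| ≤ δ) (hsτ : |s - τ| ≤ δ)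
    (hzw : ‖z - w‖ ≤ (1 + B) * δ) :
    ‖(vhat (z.2 + h • E s z.1), E s z.1) - phaseVF E τ w‖ ≤ (2 + L T) * (2 + 2 * B) * δ := by
  have hB := hE.bound_nonneg
  have hL := hE.lipschitz_nonneg ((abs_nonneg s).trans hs)
  have hδ := (abs_nonneg h).trans hh
  refine max_le ((norm_vhat_sub_le _ _).trans ?_) ?_
  · have momentum : ‖z.2 + h • E s z.1 - w.2‖ ≤ (1 + B) * δ + δ * B := by
      rw [add_sub_right_comm]
      refine (norm_add_le _ _).trans (add_le_add ((norm_snd_le (z - w)).trans hzw) ?_)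
      rw [norm_smul, norm_eq_abs]
      gcongr
      exact hE.norm_le s z.1
    calc 2 * ‖z.2 + h • E s z.1 - w.2‖ ≤ 2 * ((1 + B) * δ + δ * B) := by gcongr
      _ ≤ 2 * (2 + 2 * B) * δ := by linarith
      _ ≤ (2 + L T) * (2 + 2 * B) * δ := by gcongr; exact le_add_of_nonneg_right hL
  · calc ‖E s z.1 - E τ w.1‖ ≤ ‖E s z.1 - E τ z.1‖ + ‖E τ z.1 - E τ w.1‖ :=
          norm_sub_le_norm_sub_add_norm_sub _ _ _
      _ ≤ L T * δ + L T * ((1 + B) * δ) := by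
          refine add_le_add ((hE.norm_time_sub_le T s τ _ hs hτ).trans ?_)
            ((hE.norm_sub_le T τ _ _ hτ).trans ?_)
          · gcongr
          · gcongr
            exact (norm_fst_le (z - w)).trans hzw
      _ = L T * (2 + B) * δ := by ring
      _ ≤ (2 + L T) * (2 + 2 * B) * δ := by
          gcongr
          exacts [le_add_of_nonneg_left zero_le_two, by linarith]

theorem norm_eulerStep_sub_odeFlow_le (hE : IsLipschitzField B L E) {T h s : ℝ}
    (hs : |s| ≤ T) (hsh : |s + h| ≤ T) (z : E3 × E3) :
    ‖eulerStep E h s z - odeFlow (phaseVF E) s (s + h) z‖ ≤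
      (2 + L T) * (2 + 2 * B) * h ^ 2 := by
  have hB := hE.bound_nonneg
  have local_error := hE.isLipschitzFamily.norm_add_smul_sub_odeFlow_le (s := s) (h := h)
    (y := (vhat (z.2 + h • E s z.1), E s z.1)) (z := z) fun τ hτ => by
      have elapsed_le : |s - τ| ≤ |h| := by
        simpa [abs_sub_comm] using abs_sub_left_of_mem_uIcc hτ
      refine hE.norm_eulerVelocity_sub_phaseVF_le hs (abs_le_of_mem_uIcc hs hsh hτ) le_rfl
        elapsed_le ?_
      have displacement_le := hE.norm_odeFlow_time_sub_le s s τ z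
      rw [hE.isLipschitzFamily.odeFlow_self] at displacement_le
      exact displacement_le.trans (by gcongr)
  rwa [mul_assoc _ |h| |h|, abs_mul_abs_self, ← sq] at local_error

theorem measurePreserving_eulerStep (hE : IsLipschitzField B L E) (h s : ℝ) :
    MeasurePreserving (eulerStep E h s) volume volume :=
  (measurePreserving_shear_fst (continuous_vhat.const_smul h).measurable).comp
    (measurePreserving_shear_snd ((hE.continuous_space s).const_smul h).measurable)

theorem measure_preimage_odeFlow_le (hE : IsLipschitzField B L E) (s t : ℝ) (A : Set (E3 × E3)) :
    volume (odeFlow (phaseVF E) s t ⁻¹' A) ≤ volume A := by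
  have local_error_nonneg : ∀ T, 0 ≤ T → 0 ≤ (2 + L T) * (2 + 2 * B) := fun T hT => by
    have hB := hE.bound_nonneg
    have hL := hE.lipschitz_nonneg hT
    positivity
  exact measure_preimage_le_of_tendsto
    (fun n => measurePreserving_schemeIter hE.measurePreserving_eulerStep _ s (n + 1))
    (hE.isLipschitzFamily.tendsto_schemeIter local_error_nonneg
      (fun _ _ _ z hr hrh => hE.norm_eulerStep_sub_odeFlow_le hr hrh z) s t)
    (hE.continuous_odeFlow s t) A

theorem measurePreserving_odeFlow (hE : IsLipschitzField B L E) (s t : ℝ) :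
    MeasurePreserving (odeFlow (phaseVF E) s t) volume volume := by
  refine ⟨(hE.continuous_odeFlow s t).measurable, Measure.ext fun A hA => ?_⟩
  rw [Measure.map_apply (hE.continuous_odeFlow s t).measurable hA]
  refine (hE.measure_preimage_odeFlow_le s t A).antisymm ?_
  have inverse_flow := hE.measure_preimage_odeFlow_le t s (odeFlow (phaseVF E) s t ⁻¹' A)
  rw [preimage_preimage] at inverse_flow
  simpa [hE.isLipschitzFamily.odeFlow_odeFlow_self] using inverse_flow

theorem measurePreserving_charFlow (hE : IsLipschitzField B L E) (t : ℝ) :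
    MeasurePreserving (charFlow E t) volume volume := hE.measurePreserving_odeFlow 0 t

end IsLipschitzField

end CharacteristicFlow
section PolynomialDecay

open scoped ENNReal

theorem withDensity_preimage_prod_univ_le {Ω X Y : Type*} [MeasurableSpace Ω] [MeasurableSpace X]
    [MeasurableSpace Y] {μ : Measure X} {ν : Measure Y} [SFinite μ] [SFinite ν] {τ : Measure Ω}
    {Φ : Ω → X × Y} (hΦ : MeasurePreserving Φ τ (μ.prod ν)) {g : Ω → ℝ≥0∞} {H : Y → ℝ≥0∞}
    (hH : Measurable H) (hg : ∀ z, g z ≤ H (Φ z).2) {A : Set X} (hA : MeasurableSet A) :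
    τ.withDensity g (Φ ⁻¹' (A ×ˢ univ)) ≤ (∫⁻ y, H y ∂ν) * μ A := by
  have hAY : MeasurableSet (A ×ˢ (univ : Set Y)) := hA.prod .univ
  calc τ.withDensity g (Φ ⁻¹' (A ×ˢ univ))
      = ∫⁻ z in Φ ⁻¹' (A ×ˢ univ), g z ∂τ := withDensity_apply _ (hΦ.measurable hAY)
    _ ≤ ∫⁻ z in Φ ⁻¹' (A ×ˢ univ), H (Φ z).2 ∂τ := lintegral_mono hg
    _ = ∫⁻ p in A ×ˢ univ, H p.2 ∂μ.prod ν :=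
        hΦ.setLIntegral_comp_preimage hAY (hH.comp measurable_snd)
    _ = (∫⁻ y, H y ∂ν) * μ A := by
        rw [← Measure.prod_restrict, Measure.restrict_univ,
          lintegral_prod (fun p => H p.2) (hH.comp measurable_snd).aemeasurable]
        simp only [lintegral_const, Measure.restrict_apply_univ]

theorem integrable_inv_one_add_norm_pow_four :
    Integrable fun x : E3 => ((1 + ‖x‖) ^ 4)⁻¹ := by
  refine (integrable_one_add_norm (E := E3) (r := 4) (by norm_num)).congr (.of_forall fun x => ?_)
  dsimp only
  rw [rpow_neg (by positivity)]
  norm_cast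

theorem integrable_prod_inv_one_add_norm_pow_four :
    Integrable fun z : E3 × E3 => ((1 + ‖z.1‖) ^ 4)⁻¹ * ((1 + ‖z.2‖) ^ 4)⁻¹ :=
  integrable_inv_one_add_norm_pow_four.mul_prod integrable_inv_one_add_norm_pow_four

/-- Continuous nonnegative phase-space densities with polynomial decay: order `4` in position and
order `5` in momentum, which makes mass and kinetic energy finite. -/
structure HasPolynomialDecay (D : ℝ) (g : E3 × E3 → ℝ) : Prop where
  continuous : Continuous g
  nonneg : ∀ z, 0 ≤ g z
  le : ∀ z, g z ≤ D * ((1 + ‖z.1‖) ^ 4)⁻¹ * ((1 + ‖z.2‖) ^ 5)⁻¹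

/-- The measure with density `g` on phase space. -/
def massMeasure (g : E3 × E3 → ℝ) : Measure (E3 × E3) :=
  volume.withDensity fun z => ENNReal.ofReal (g z)

/-- The mass per unit volume in position space of a density of decay constant `D`, up to the factor
`(1 + Q) ^ 4` for momenta displaced by at most `Q`; the volume of the unit ball converts the volume
of a spherical shell into a difference of cubes. -/
def densConst (D : ℝ) : ℝ :=
  D * (∫ v : E3, ((1 + ‖v‖) ^ 4)⁻¹) * volume.real (Metric.ball (0 : E3) 1)

/-- The mass of the particles whose position `X z` lies within distance `r` of the origin. -/
def massIn {Z F : Type*} [MeasurableSpace Z] [Norm F] (μ : Measure Z) (X : Z → F) (r : ℝ) : ℝ :=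
  μ.real {z | ‖X z‖ ≤ r}

/-- A nondecreasing mass function, normalised to vanish at `0`, for which the mass of a spherical
shell is at most `b` times the difference of the cubes of its radii. -/
structure IsShellBounded (b : ℝ) (N : ℝ → ℝ) : Prop where
  nonneg : ∀ r, 0 ≤ N r
  mono : Monotone N
  zero : N 0 = 0
  sub_le : ∀ r s, 0 ≤ r → r ≤ s → N s - N r ≤ b * (s ^ 3 - r ^ 3)

theorem massIn_le_of_norm_sub_le {Z F : Type*} [MeasurableSpace Z] [SeminormedAddCommGroup F]
    {μ : Measure Z} [IsFiniteMeasure μ] {X Y : Z → F} {δ : ℝ}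
    (h : ∀ z, ‖X z - Y z‖ ≤ δ) (r : ℝ) : massIn μ X r ≤ massIn μ Y (r + δ) :=
  measureReal_mono fun z (hz : ‖X z‖ ≤ r) =>
    show ‖Y z‖ ≤ r + δ by linarith [h z, norm_sub_norm_le (Y z) (X z), norm_sub_rev (X z) (Y z)]

namespace HasPolynomialDecay

variable {D : ℝ} {g : E3 × E3 → ℝ}

theorem const_nonneg (hg : HasPolynomialDecay D g) : 0 ≤ D := by
  simpa using (hg.nonneg 0).trans (hg.le 0)

theorem lorentz_mul_le (hg : HasPolynomialDecay D g) (z : E3 × E3) :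
    lorentz z.2 * g z ≤ D * (((1 + ‖z.1‖) ^ 4)⁻¹ * ((1 + ‖z.2‖) ^ 4)⁻¹) := by
  calc lorentz z.2 * g z ≤ (1 + ‖z.2‖) * (D * ((1 + ‖z.1‖) ^ 4)⁻¹ * ((1 + ‖z.2‖) ^ 5)⁻¹) :=
        mul_le_mul (lorentz_le _) (hg.le z) (hg.nonneg z) (by positivity)
    _ = D * (((1 + ‖z.1‖) ^ 4)⁻¹ * ((1 + ‖z.2‖) ^ 4)⁻¹) := by field_simp

theorem le_prod (hg : HasPolynomialDecay D g) (z : E3 × E3) :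
    g z ≤ D * (((1 + ‖z.1‖) ^ 4)⁻¹ * ((1 + ‖z.2‖) ^ 4)⁻¹) :=
  (le_mul_of_one_le_left (hg.nonneg z) (one_le_lorentz _)).trans (hg.lorentz_mul_le z)

theorem le_vel (hg : HasPolynomialDecay D g) (z : E3 × E3) :
    g z ≤ D * ((1 + ‖z.2‖) ^ 4)⁻¹ := by
  refine (hg.le_prod z).trans (mul_le_mul_of_nonneg_left ?_ hg.const_nonneg)
  refine mul_le_of_le_one_left (by positivity) (inv_le_one_of_one_le₀ (one_le_pow₀ ?_))
  exact le_add_of_nonneg_right (norm_nonneg z.1)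

theorem integrable (hg : HasPolynomialDecay D g) : Integrable g := by
  refine (integrable_prod_inv_one_add_norm_pow_four.const_mul D).mono'
    hg.continuous.aestronglyMeasurable (.of_forall fun z => ?_)
  rw [norm_of_nonneg (hg.nonneg z)]
  exact hg.le_prod z

theorem isFiniteMeasure (hg : HasPolynomialDecay D g) : IsFiniteMeasure (massMeasure g) :=
  isFiniteMeasure_withDensity_ofReal hg.integrable.2

theorem integrable_massMeasure_iff (hg : HasPolynomialDecay D g) (F : E3 × E3 → ℝ) :
    Integrable F (massMeasure g) ↔ Integrable fun z => g z * F z := by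
  rw [massMeasure, integrable_withDensity_iff_integrable_smul₀'
    hg.continuous.measurable.ennreal_ofReal.aemeasurable
    (.of_forall fun z => ENNReal.ofReal_lt_top)]
  simp only [ENNReal.toReal_ofReal (hg.nonneg _), smul_eq_mul]

theorem integrable_lorentz (hg : HasPolynomialDecay D g) :
    Integrable (fun z : E3 × E3 => lorentz z.2) (massMeasure g) := by
  rw [hg.integrable_massMeasure_iff]
  refine (integrable_prod_inv_one_add_norm_pow_four.const_mul D).mono' ?_ (.of_forall fun z => ?_)
  · exact (hg.continuous.mul (contDiff_lorentz.continuous.comp continuous_snd)).aestronglyMeasurable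
  · rw [norm_of_nonneg (mul_nonneg (hg.nonneg z) (lorentz_pos _).le), mul_comm]
    exact hg.lorentz_mul_le z

theorem densConst_nonneg (hg : HasPolynomialDecay D g) : 0 ≤ densConst D :=
  mul_nonneg (mul_nonneg hg.const_nonneg (integral_nonneg fun v => by positivity))
    measureReal_nonneg

theorem le_of_norm_le_add (hg : HasPolynomialDecay D g) {Q : ℝ} (hQ : 0 ≤ Q) {z : E3 × E3} {v : E3}
    (hv : ‖v‖ ≤ ‖z.2‖ + Q) : g z ≤ D * (1 + Q) ^ 4 * ((1 + ‖v‖) ^ 4)⁻¹ := by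
  refine (hg.le_vel z).trans ?_
  rw [mul_assoc]
  refine mul_le_mul_of_nonneg_left ?_ hg.const_nonneg
  rw [← div_eq_mul_inv, le_div_iff₀ (by positivity), inv_mul_le_iff₀ (by positivity), ← mul_pow]
  gcongr
  linarith [mul_nonneg (norm_nonneg z.2) hQ]

theorem massMeasure_real_preimage_le (hg : HasPolynomialDecay D g) {Φ : E3 × E3 → E3 × E3}
    (hΦ : MeasurePreserving Φ volume volume) {Q : ℝ} (hQ : 0 ≤ Q)
    (hV : ∀ z, ‖(Φ z).2‖ ≤ ‖z.2‖ + Q) {A : Set E3} (hA : MeasurableSet A) (hfin : volume A ≠ ∞) :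
    (massMeasure g).real (Φ ⁻¹' (A ×ˢ univ)) ≤
      D * (1 + Q) ^ 4 * (∫ v : E3, ((1 + ‖v‖) ^ 4)⁻¹) * volume.real A := by
  have hD := hg.const_nonneg
  have envelope_integrable := integrable_inv_one_add_norm_pow_four.const_mul (D * (1 + Q) ^ 4)
  have mass_le := withDensity_preimage_prod_univ_le hΦ
    (H := fun v => ENNReal.ofReal (D * (1 + Q) ^ 4 * ((1 + ‖v‖) ^ 4)⁻¹)) (by fun_prop)
    (fun z => ENNReal.ofReal_le_ofReal (hg.le_of_norm_le_add hQ (hV z))) hA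
  rw [← ofReal_integral_eq_lintegral_ofReal envelope_integrable
    (.of_forall fun v => by positivity), integral_const_mul] at mass_le
  have toReal_le :=
    ENNReal.toReal_mono (ENNReal.mul_ne_top ENNReal.ofReal_ne_top hfin) mass_le
  rwa [ENNReal.toReal_mul, ENNReal.toReal_ofReal] at toReal_le
  exact mul_nonneg (by positivity) (integral_nonneg fun v => by positivity)

theorem isShellBounded (hg : HasPolynomialDecay D g) {Φ : E3 × E3 → E3 × E3}
    (hΦ : MeasurePreserving Φ volume volume) {Q : ℝ} (hQ : 0 ≤ Q)
    (hV : ∀ z, ‖(Φ z).2‖ ≤ ‖z.2‖ + Q) :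
    IsShellBounded (densConst D * (1 + Q) ^ 4) (massIn (massMeasure g) fun z => (Φ z).1) := by
  have := hg.isFiniteMeasure
  have mass_le := fun A => hg.massMeasure_real_preimage_le hΦ hQ hV (A := A)
  have volume_closedBall : ∀ r : ℝ, 0 ≤ r → volume.real (Metric.closedBall (0 : E3) r) =
      r ^ 3 * volume.real (Metric.ball (0 : E3) 1) := fun r hr => by
    rw [Measure.addHaar_real_closedBall _ _ hr, finrank_euclideanSpace_fin]
  refine ⟨fun r => measureReal_nonneg,
    fun r s hrs => measureReal_mono fun z (hz : _ ≤ _) => hz.trans hrs, ?_, fun r s hr hrs => ?_⟩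
  · refine le_antisymm ?_ measureReal_nonneg
    have := mass_le {0} (measurableSet_singleton 0) (by simp)
    simpa [massIn, measureReal_def, preimage, mem_prod] using this
  · have hsub := Metric.closedBall_subset_closedBall (x := (0 : E3)) hrs
    have shell_le := mass_le (Metric.closedBall 0 s \ Metric.closedBall 0 r)
      (measurableSet_closedBall.diff measurableSet_closedBall)
      ((measure_mono sdiff_subset).trans_lt measure_closedBall_lt_top).ne
    rw [measureReal_sdiff hsub measurableSet_closedBall measure_closedBall_lt_top.ne,
      volume_closedBall s (hr.trans hrs), volume_closedBall r hr] at shell_le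
    rw [massIn, massIn, ← measureReal_sdiff (Set.ofPred_subset_ofPred.2 fun z hz => hz.trans hrs)
      (measurableSet_le hΦ.measurable.fst.norm measurable_const)]
    convert shell_le using 1
    · congr 1
      ext z
      simp
    · rw [densConst]
      ring

end HasPolynomialDecay

end PolynomialDecay

section CappedField

/-- The capped radial profile `min (N(r) / r³) K`; capping makes the field bounded and Lipschitz
before any bound on the spatial density is available. -/
def capProfile (K : ℝ) (N : ℝ → ℝ) (r : ℝ) : ℝ := min (N r / r ^ 3) K

/-- The capped radial field generated by the mass function `N`. -/
def capField (K : ℝ) (N : ℝ → ℝ) (x : E3) : E3 := ((4 * π)⁻¹ * capProfile K N ‖x‖) • x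

theorem inv_four_pi_mul_le {a c : ℝ} (hc : 0 ≤ c) (hac : a ≤ 7 * c) : (4 * π)⁻¹ * a ≤ c := by
  rw [inv_mul_le_iff₀ (by positivity)]
  exact hac.trans (by gcongr; linarith [pi_gt_three])

theorem abs_capProfile_sub_le (K : ℝ) (N₁ N₂ : ℝ → ℝ) (r s : ℝ) :
    |capProfile K N₁ r - capProfile K N₂ s| ≤ |N₁ r / r ^ 3 - N₂ s / s ^ 3| := by
  simpa [capProfile] using abs_min_sub_min_le_max (N₁ r / r ^ 3) K (N₂ s / s ^ 3) K

section
variable {K : ℝ} {N : ℝ → ℝ} (hK : 0 ≤ K) (hN : ∀ r, 0 ≤ N r)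
include hK hN

theorem capProfile_nonneg {r : ℝ} (hr : 0 ≤ r) : 0 ≤ capProfile K N r :=
  le_min (div_nonneg (hN r) (by positivity)) hK

theorem norm_capField (x : E3) :
    ‖capField K N x‖ = (4 * π)⁻¹ * (capProfile K N ‖x‖ * ‖x‖) := by
  rw [capField, norm_smul, norm_mul, norm_of_nonneg (by positivity : 0 ≤ (4 * π)⁻¹),
    norm_of_nonneg (capProfile_nonneg hK hN (norm_nonneg x)), mul_assoc]

theorem capProfile_mul_le {M : ℝ} (hM : ∀ r, N r ≤ M) {r : ℝ} (hr : 0 ≤ r) :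
    capProfile K N r * r ≤ M + K := by
  have hM0 : 0 ≤ M := (hN 0).trans (hM 0)
  rcases le_total r 1 with hr1 | hr1
  · calc capProfile K N r * r ≤ K * 1 :=
          mul_le_mul (min_le_right _ _) hr1 hr hK
      _ ≤ M + K := by linarith
  · calc capProfile K N r * r ≤ M / r ^ 3 * r := by
          gcongr
          exact (min_le_left _ _).trans (by gcongr; exact hM r)
      _ = M / r ^ 2 := by field_simp
      _ ≤ M := div_le_self hM0 (one_le_pow₀ hr1)
      _ ≤ M + K := le_add_of_nonneg_right hK

theorem norm_capField_le {M : ℝ} (hM : ∀ r, N r ≤ M) (x : E3) : ‖capField K N x‖ ≤ M + K := by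
  have bound_nonneg : 0 ≤ M + K := add_nonneg ((hN 0).trans (hM 0)) hK
  rw [norm_capField hK hN]
  exact inv_four_pi_mul_le bound_nonneg
    ((capProfile_mul_le hK hN hM (norm_nonneg x)).trans (by linarith))

end

namespace IsShellBounded

variable {b K : ℝ} {N : ℝ → ℝ}

theorem le_cube (hN : IsShellBounded b N) {r : ℝ} (hr : 0 ≤ r) : N r ≤ b * r ^ 3 := by
  simpa [hN.zero] using hN.sub_le 0 r le_rfl hr

theorem const_nonneg (hN : IsShellBounded b N) : 0 ≤ b := by
  simpa using (hN.nonneg 1).trans (hN.le_cube zero_le_one)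

theorem div_cube_le (hN : IsShellBounded b N) {r : ℝ} (hr : 0 ≤ r) : N r / r ^ 3 ≤ b := by
  rcases hr.eq_or_lt with rfl | hr
  · simpa using hN.const_nonneg
  · rw [div_le_iff₀ (by positivity)]
    exact hN.le_cube hr.le

theorem capProfile_le (hN : IsShellBounded b N) {r : ℝ} (hr : 0 ≤ r) : capProfile K N r ≤ b :=
  (min_le_left _ _).trans (hN.div_cube_le hr)

theorem abs_div_cube_sub_le (hN : IsShellBounded b N) {r s : ℝ} (hr : 0 < r) (hrs : r ≤ s) :
    |N r / r ^ 3 - N s / s ^ 3| ≤ b * (s ^ 3 - r ^ 3) / s ^ 3 := by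
  have hs : 0 < s := hr.trans_le hrs
  have cube_sub_nonneg : 0 ≤ s ^ 3 - r ^ 3 := sub_nonneg.2 (by gcongr)
  have decomposition : N r / r ^ 3 - N s / s ^ 3 =
      N r / r ^ 3 * (s ^ 3 - r ^ 3) / s ^ 3 - (N s - N r) / s ^ 3 := by
    field_simp
    ring
  have density_nonneg : 0 ≤ N r / r ^ 3 := div_nonneg (hN.nonneg r) (by positivity)
  rw [decomposition]
  refine abs_sub_le_of_nonneg_of_le (by positivity) ?_
    (div_nonneg (sub_nonneg.2 (hN.mono hrs)) (by positivity)) ?_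
  · gcongr
    exact hN.div_cube_le hr.le
  · gcongr
    exact hN.sub_le r s hr.le hrs

theorem abs_capProfile_sub_mul_le (hN : IsShellBounded b N) {r s : ℝ} (hr : 0 ≤ r)
    (hrs : r ≤ s) : |capProfile K N r - capProfile K N s| * r ≤ 3 * b * (s - r) := by
  have hb := hN.const_nonneg
  have hsr : 0 ≤ s - r := sub_nonneg.2 hrs
  rcases hr.eq_or_lt with rfl | hr
  · rw [mul_zero]
    positivity
  have hs : 0 < s := hr.trans_le hrs
  have profile_sub_le := (abs_capProfile_sub_le K N N r s).trans (hN.abs_div_cube_sub_le hr hrs)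
  calc |capProfile K N r - capProfile K N s| * r ≤ b * (s ^ 3 - r ^ 3) / s ^ 3 * s :=
        mul_le_mul profile_sub_le hrs hr.le ((abs_nonneg _).trans profile_sub_le)
    _ = (s ^ 2 + s * r + r ^ 2) / s ^ 2 * (b * (s - r)) := by field_simp; ring
    _ ≤ 3 * (b * (s - r)) := by
        gcongr
        rw [div_le_iff₀ (by positivity)]
        nlinarith
    _ = 3 * b * (s - r) := by ring

theorem norm_capField_sub_le (hK : 0 ≤ K) (hN : IsShellBounded b N) (x y : E3) :
    ‖capField K N x - capField K N y‖ ≤ b * ‖x - y‖ := by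
  wlog hxy : ‖x‖ ≤ ‖y‖ generalizing x y
  · rw [norm_sub_rev, norm_sub_rev x y]
    exact this y x (le_of_not_ge hxy)
  have hb := hN.const_nonneg
  have decomposition : capField K N x - capField K N y = (4 * π)⁻¹ • (capProfile K N ‖y‖ • (x - y) +
      (capProfile K N ‖x‖ - capProfile K N ‖y‖) • x) := by
    simp only [capField]
    module
  rw [decomposition, norm_smul, norm_of_nonneg (by positivity : 0 ≤ (4 * π)⁻¹)]
  refine inv_four_pi_mul_le (by positivity) ?_
  calc ‖capProfile K N ‖y‖ • (x - y) + (capProfile K N ‖x‖ - capProfile K N ‖y‖) • x‖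
      ≤ capProfile K N ‖y‖ * ‖x - y‖ + |capProfile K N ‖x‖ - capProfile K N ‖y‖| * ‖x‖ := by
        refine (norm_add_le _ _).trans_eq ?_
        rw [norm_smul, norm_smul, norm_of_nonneg (capProfile_nonneg hK hN.nonneg (norm_nonneg y)),
          norm_eq_abs]
    _ ≤ b * ‖x - y‖ + 3 * b * ‖x - y‖ := by
        refine add_le_add (mul_le_mul_of_nonneg_right (hN.capProfile_le (norm_nonneg y))
          (norm_nonneg _)) ((hN.abs_capProfile_sub_mul_le (norm_nonneg x) hxy).trans ?_)
        gcongr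
        exact norm_sub_rev x y ▸ norm_sub_norm_le y x
    _ ≤ 7 * (b * ‖x - y‖) := by nlinarith [mul_nonneg hb (norm_nonneg (x - y))]

section
variable {δ : ℝ} {N₁ N₂ : ℝ → ℝ} (h₁ : IsShellBounded b N₁) (h₂ : IsShellBounded b N₂)
  (h₁₂ : ∀ r, N₁ r ≤ N₂ (r + δ)) (h₂₁ : ∀ r, N₂ r ≤ N₁ (r + δ)) (hδ : 0 ≤ δ)
include h₁ h₂ h₁₂ h₂₁ hδ

theorem abs_sub_le_of_shift {r : ℝ} (hr : δ ≤ r) : |N₁ r - N₂ r| ≤ 7 * (b * δ) * r ^ 2 := by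
  have hb := h₁.const_nonneg
  have hr0 : 0 ≤ r := hδ.trans hr
  have hrδ : r ≤ r + δ := le_add_of_nonneg_right hδ
  have cube_sub_le : (r + δ) ^ 3 - r ^ 3 ≤ 7 * δ * r ^ 2 := by
    nlinarith [mul_nonneg hδ (mul_nonneg hr0 (sub_nonneg.2 hr)),
      mul_nonneg hδ (mul_nonneg hδ (sub_nonneg.2 hr))]
  have shell_le : b * ((r + δ) ^ 3 - r ^ 3) ≤ 7 * (b * δ) * r ^ 2 := by
    linarith [mul_le_mul_of_nonneg_left cube_sub_le hb]
  rw [abs_le]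
  constructor <;> linarith [h₁₂ r, h₂₁ r, h₁.sub_le r (r + δ) hr0 hrδ, h₂.sub_le r (r + δ) hr0 hrδ]

theorem abs_capProfile_sub_mul_le_of_shift (hK : 0 ≤ K) {r : ℝ} (hr : 0 ≤ r) :
    |capProfile K N₁ r - capProfile K N₂ r| * r ≤ 7 * (b * δ) := by
  have hb := h₁.const_nonneg
  rcases hr.eq_or_lt with rfl | hr0
  · rw [mul_zero]
    positivity
  rcases le_or_gt δ r with hδr | hδr
  · have profile_sub_le := abs_capProfile_sub_le K N₁ N₂ r r
    rw [← sub_div, abs_div, abs_of_pos (by positivity : 0 < r ^ 3)] at profile_sub_le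
    calc |capProfile K N₁ r - capProfile K N₂ r| * r ≤ |N₁ r - N₂ r| / r ^ 3 * r := by gcongr
      _ = |N₁ r - N₂ r| / r ^ 2 := by field_simp
      _ ≤ 7 * (b * δ) := by
        rw [div_le_iff₀ (by positivity)]
        exact abs_sub_le_of_shift h₁ h₂ h₁₂ h₂₁ hδ hδr
  · have profile_sub_le : |capProfile K N₁ r - capProfile K N₂ r| ≤ b :=
      abs_sub_le_of_nonneg_of_le (capProfile_nonneg hK h₁.nonneg hr) (h₁.capProfile_le hr)
        (capProfile_nonneg hK h₂.nonneg hr) (h₂.capProfile_le hr)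
    calc |capProfile K N₁ r - capProfile K N₂ r| * r ≤ b * δ := by gcongr
      _ ≤ 7 * (b * δ) := by linarith [mul_nonneg hb hδ]

theorem norm_capField_sub_capField_le (hK : 0 ≤ K) (x : E3) :
    ‖capField K N₁ x - capField K N₂ x‖ ≤ b * δ := by
  have hb := h₁.const_nonneg
  have factored : capField K N₁ x - capField K N₂ x =
      (4 * π)⁻¹ • ((capProfile K N₁ ‖x‖ - capProfile K N₂ ‖x‖) • x) := by
    simp only [capField]
    module
  rw [factored, norm_smul, norm_smul, norm_of_nonneg (by positivity : 0 ≤ (4 * π)⁻¹), norm_eq_abs]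
  exact inv_four_pi_mul_le (by positivity)
    (abs_capProfile_sub_mul_le_of_shift h₁ h₂ h₁₂ h₂₁ hδ hK (norm_nonneg x))

end

end IsShellBounded

end CappedField
section SelfConsistentField

open Filter Topology
open scoped NNReal

namespace IsLipschitzFamily

variable {X : Type*} [NormedAddCommGroup X] [NormedSpace ℝ X] [CompleteSpace X]
  {K K' : ℝ → ℝ≥0} {v u : ℝ → X → X}

theorem norm_odeFlow_sub_odeFlow_le_exp (hv : IsLipschitzFamily K v) (hu : IsLipschitzFamily K' u)
    {T A β : ℝ} (hA : 0 < A) (hβ : 0 < β) {z : X}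
    (h : ∀ t ∈ Icc 0 T, ‖v t (odeFlow u 0 t z) - u t (odeFlow u 0 t z)‖ ≤
      A * exp ((K T + 2 * β) * t)) {t : ℝ} (ht : t ∈ Icc 0 T) :
    ‖odeFlow v 0 t z - odeFlow u 0 t z‖ ≤ A / β * exp ((K T + 2 * β) * t) := by
  set l : ℝ := K T + 2 * β
  have hasDerivAt_sub : ∀ t, HasDerivAt (fun t => odeFlow v 0 t z - odeFlow u 0 t z)
      (v t (odeFlow v 0 t z) - u t (odeFlow u 0 t z)) t := fun t =>
    (hv.hasDerivAt_odeFlow 0 t z).sub (hu.hasDerivAt_odeFlow 0 t z)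
  have hasDerivAt_barrier : ∀ t, HasDerivAt (fun t => A / β * exp (l * t))
      (A / β * (exp (l * t) * (l * 1))) t := fun t =>
    (((hasDerivAt_id t).const_mul l).exp).const_mul _
  refine image_norm_le_of_norm_deriv_right_lt_deriv_boundary
    (fun t _ => (hasDerivAt_sub t).continuousAt.continuousWithinAt)
    (fun t _ => (hasDerivAt_sub t).hasDerivWithinAt) ?_ hasDerivAt_barrier
    (fun t ht touching => ?_) ht
  · rw [hv.odeFlow_self, hu.odeFlow_self, sub_self, norm_zero]
    positivity
  · have ht_le : |t| ≤ T := (abs_of_nonneg ht.1).trans_le ht.2.le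
    calc ‖v t (odeFlow v 0 t z) - u t (odeFlow u 0 t z)‖
        ≤ ‖v t (odeFlow v 0 t z) - v t (odeFlow u 0 t z)‖ +
          ‖v t (odeFlow u 0 t z) - u t (odeFlow u 0 t z)‖ := norm_sub_le_norm_sub_add_norm_sub _ _ _
      _ ≤ K T * (A / β * exp (l * t)) + A * exp (l * t) :=
          add_le_add ((hv.norm_sub_le ht_le _ _).trans_eq (by rw [touching]))
            (h t ⟨ht.1, ht.2.le⟩)
      _ = (K T + β) * (A / β * exp (l * t)) := by field_simp
      _ < l * (A / β * exp (l * t)) := by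
          gcongr
          linarith
      _ = A / β * (exp (l * t) * (l * 1)) := by ring

end IsLipschitzFamily

namespace IsLipschitzField

variable {B : ℝ} {L : ℝ → ℝ} {E : ℝ → E3 → E3}

theorem norm_vel_le (hE : IsLipschitzField B L E) {t T : ℝ} (ht : |t| ≤ T) (z : E3 × E3) :
    ‖(charFlow E t z).2‖ ≤ ‖z.2‖ + B * T := by
  have displacement := hE.norm_vel_sub_le t 0 z
  rw [hE.charFlow_zero, sub_zero] at displacement
  have := mul_le_mul_of_nonneg_left ht hE.bound_nonneg
  linarith [norm_sub_norm_le (charFlow E t z).2 z.2]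

theorem norm_charFlow_sub_le {E' : ℝ → E3 → E3} (hE : IsLipschitzField B L E)
    (hE' : IsLipschitzField B L E') {T A β : ℝ} (hA : 0 < A) (hβ : 0 < β)
    (h : ∀ t ∈ Icc 0 T, ∀ x, ‖E t x - E' t x‖ ≤ A * exp ((2 + L T + 2 * β) * t))
    (z : E3 × E3) {t : ℝ} (ht : t ∈ Icc 0 T) :
    ‖charFlow E t z - charFlow E' t z‖ ≤ A / β * exp ((2 + L T + 2 * β) * t) := by
  have hL := hE.lipschitz_nonneg (ht.1.trans ht.2)
  have stability := hE.isLipschitzFamily.norm_odeFlow_sub_odeFlow_le_exp hE'.isLipschitzFamily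
    hA hβ (T := T) (z := z)
  simp only [coe_toNNReal _ (by positivity : 0 ≤ 2 + L T)] at stability
  refine stability (fun t ht => ?_) ht
  simp only [phaseVF, Prod.mk_sub_mk, sub_self]
  exact max_le (norm_zero.trans_le (by positivity)) (h t ht _)

theorem of_tendsto {F : ℕ → ℝ → E3 → E3} (hF : ∀ n, IsLipschitzField B L (F n))
    (hlim : ∀ t x, Tendsto (fun n => F n t x) atTop (𝓝 (E t x))) : IsLipschitzField B L E where
  norm_le t x := le_of_tendsto' (hlim t x).norm fun n => (hF n).norm_le t x
  norm_sub_le T t x y ht := le_of_tendsto' ((hlim t x).sub (hlim t y)).norm fun n =>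
    (hF n).norm_sub_le T t x y ht
  norm_time_sub_le T s t x hs ht := le_of_tendsto' ((hlim s x).sub (hlim t x)).norm fun n =>
    (hF n).norm_time_sub_le T s t x hs ht

end IsLipschitzField

/-- The total mass plus the cap: a bound for every capped field. -/
def fieldBound (g : E3 × E3 → ℝ) (K : ℝ) : ℝ := (massMeasure g).real univ + K

/-- The Lipschitz constant on `[-T, T]` of the capped fields generated by characteristics. -/
def fieldLip (D : ℝ) (g : E3 × E3 → ℝ) (K T : ℝ) : ℝ :=
  densConst D * (1 + fieldBound g K * T) ^ 4

/-- The mass within distance `r` of the origin at time `t`, transported by the field `E` (and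
frozen for negative times). -/
def flowMass (g : E3 × E3 → ℝ) (E : ℝ → E3 → E3) (t : ℝ) : ℝ → ℝ :=
  massIn (massMeasure g) fun z => (charFlow E (max t 0) z).1

/-- The capped field generated by the density transported by the field `E`. -/
def nextField (g : E3 × E3 → ℝ) (K : ℝ) (E : ℝ → E3 → E3) (t : ℝ) (x : E3) : E3 :=
  capField K (flowMass g E t) x

/-- The Picard iterates of the capped field equation. -/
def picardField (g : E3 × E3 → ℝ) (K : ℝ) : ℕ → ℝ → E3 → E3
  | 0 => fun _ _ => 0
  | n + 1 => nextField g K (picardField g K n)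

/-- The exponential rate in time of a weight for which `nextField` halves distances on `[0, T]`:
`2 + L + 2 * β` with `L` the Lipschitz constant of the fields and `β = 2 * L + 1`. -/
def contractionRate (D : ℝ) (g : E3 × E3 → ℝ) (K T : ℝ) : ℝ :=
  2 + fieldLip D g K T + 2 * (2 * fieldLip D g K T + 1)

theorem abs_max_zero_le {t T : ℝ} (ht : |t| ≤ T) : |max t 0| ≤ T := by
  rw [abs_of_nonneg (le_max_right t 0)]
  exact max_le ((le_abs_self t).trans ht) ((abs_nonneg t).trans ht)

section
variable {g : E3 × E3 → ℝ} {K : ℝ}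

theorem fieldBound_nonneg (hK : 0 ≤ K) : 0 ≤ fieldBound g K := add_nonneg measureReal_nonneg hK

theorem flowMass_nonneg (E : ℝ → E3 → E3) (t r : ℝ) : 0 ≤ flowMass g E t r := measureReal_nonneg

theorem nextField_max (E : ℝ → E3 → E3) (t : ℝ) :
    nextField g K E (max t 0) = nextField g K E t := by
  funext x
  simp [nextField, flowMass]

theorem picardField_max (n : ℕ) (t : ℝ) : picardField g K n (max t 0) = picardField g K n t := by
  cases n with
  | zero => rfl
  | succ n => exact nextField_max _ t

end

namespace HasPolynomialDecay

variable {D K T : ℝ} {g : E3 × E3 → ℝ} (hg : HasPolynomialDecay D g)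
include hg

theorem flowMass_le (E : ℝ → E3 → E3) (t r : ℝ) :
    flowMass g E t r ≤ (massMeasure g).real univ :=
  have := hg.isFiniteMeasure
  measureReal_mono (subset_univ _)

theorem fieldLip_nonneg : 0 ≤ fieldLip D g K T :=
  mul_nonneg hg.densConst_nonneg (Even.pow_nonneg ⟨2, rfl⟩ _)

theorem contractionRate_nonneg : 0 ≤ contractionRate D g K T := by
  have := hg.fieldLip_nonneg (K := K) (T := T)
  unfold contractionRate
  positivity

variable (hK : 0 ≤ K)
include hK

theorem isShellBounded_flowMass {L : ℝ → ℝ} {E : ℝ → E3 → E3}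
    (hE : IsLipschitzField (fieldBound g K) L E) {t : ℝ} (ht : |t| ≤ T) :
    IsShellBounded (fieldLip D g K T) (flowMass g E t) :=
  hg.isShellBounded (hE.measurePreserving_charFlow _)
    (mul_nonneg (fieldBound_nonneg hK) ((abs_nonneg t).trans ht))
    (hE.norm_vel_le (abs_max_zero_le ht))

theorem isLipschitzField_nextField {L : ℝ → ℝ} {E : ℝ → E3 → E3}
    (hE : IsLipschitzField (fieldBound g K) L E) :
    IsLipschitzField (fieldBound g K) (fieldLip D g K) (nextField g K E) where
  norm_le t x := norm_capField_le hK (flowMass_nonneg E t) (hg.flowMass_le E t) x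
  norm_sub_le T t x y ht := (hg.isShellBounded_flowMass hK hE ht).norm_capField_sub_le hK x y
  norm_time_sub_le T s t x hs ht := by
    have := hg.isFiniteMeasure
    have pos_sub_le : ∀ z,
        ‖(charFlow E (max s 0) z).1 - (charFlow E (max t 0) z).1‖ ≤ |s - t| := fun z =>
      (hE.norm_pos_sub_le _ _ z).trans (abs_max_sub_max_le_abs s t 0)
    exact (hg.isShellBounded_flowMass hK hE hs).norm_capField_sub_capField_le
      (hg.isShellBounded_flowMass hK hE ht) (massIn_le_of_norm_sub_le pos_sub_le)
      (massIn_le_of_norm_sub_le fun z => (norm_sub_rev _ _).trans_le (pos_sub_le z))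
      (abs_nonneg _) hK x

theorem norm_nextField_sub_le {E₁ E₂ : ℝ → E3 → E3}
    (h₁ : IsLipschitzField (fieldBound g K) (fieldLip D g K) E₁)
    (h₂ : IsLipschitzField (fieldBound g K) (fieldLip D g K) E₂) {A : ℝ} (hA : 0 < A)
    (h : ∀ t ∈ Icc 0 T, ∀ x, ‖E₁ t x - E₂ t x‖ ≤ A * exp (contractionRate D g K T * t))
    {t : ℝ} (ht : t ∈ Icc 0 T) (x : E3) :
    ‖nextField g K E₁ t x - nextField g K E₂ t x‖ ≤
      A / 2 * exp (contractionRate D g K T * t) := by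
  have := hg.isFiniteMeasure
  have hL := hg.fieldLip_nonneg (K := K) (T := T)
  have ht_le : |t| ≤ T := (abs_of_nonneg ht.1).trans_le ht.2
  set l := contractionRate D g K T
  set β := 2 * fieldLip D g K T + 1
  have hβ : 0 < β := by positivity
  have pos_sub_le : ∀ z, ‖(charFlow E₁ (max t 0) z).1 - (charFlow E₂ (max t 0) z).1‖ ≤
      A / β * exp (l * t) := fun z => by
    rw [max_eq_left ht.1]
    exact (norm_fst_le (charFlow E₁ t z - charFlow E₂ t z)).trans
      (h₁.norm_charFlow_sub_le h₂ hA hβ h z ht)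
  calc ‖nextField g K E₁ t x - nextField g K E₂ t x‖
      ≤ fieldLip D g K T * (A / β * exp (l * t)) :=
        (hg.isShellBounded_flowMass hK h₁ ht_le).norm_capField_sub_capField_le
          (hg.isShellBounded_flowMass hK h₂ ht_le) (massIn_le_of_norm_sub_le pos_sub_le)
          (massIn_le_of_norm_sub_le fun z => (norm_sub_rev _ _).trans_le (pos_sub_le z))
          (by positivity) hK x
    _ = fieldLip D g K T * A / β * exp (l * t) := by ring
    _ ≤ A / 2 * exp (l * t) := by
        gcongr ?_ * _
        rw [div_le_div_iff₀ hβ two_pos]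
        linarith [mul_add A (2 * fieldLip D g K T) 1]

theorem isLipschitzField_picardField (n : ℕ) :
    IsLipschitzField (fieldBound g K) (fieldLip D g K) (picardField g K n) := by
  induction n with
  | zero =>
    have hL := fun T => hg.fieldLip_nonneg (K := K) (T := T)
    exact ⟨fun t x => by simpa [picardField] using fieldBound_nonneg hK,
      fun T t x y _ => by simpa [picardField] using mul_nonneg (hL T) (norm_nonneg _),
      fun T s t x _ _ => by simpa [picardField] using mul_nonneg (hL T) (abs_nonneg _)⟩
  | succ n ih => exact hg.isLipschitzField_nextField hK ih

theorem norm_picardField_sub_le (n : ℕ) {t : ℝ} (ht : t ∈ Icc 0 T) (x : E3) :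
    ‖picardField g K n t x - picardField g K (n + 1) t x‖ ≤
      (2 * fieldBound g K + 1) / 2 ^ n * exp (contractionRate D g K T * t) := by
  have hB := fieldBound_nonneg (g := g) hK
  induction n generalizing t x with
  | zero =>
    have weight_ge_one : 1 ≤ exp (contractionRate D g K T * t) :=
      one_le_exp (mul_nonneg hg.contractionRate_nonneg ht.1)
    calc ‖picardField g K 0 t x - picardField g K (0 + 1) t x‖
        ≤ fieldBound g K + fieldBound g K :=
          (norm_sub_le _ _).trans (add_le_add ((hg.isLipschitzField_picardField hK _).norm_le t x)
            ((hg.isLipschitzField_picardField hK _).norm_le t x))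
      _ ≤ (2 * fieldBound g K + 1) / 2 ^ 0 * 1 := by linarith
      _ ≤ (2 * fieldBound g K + 1) / 2 ^ 0 * exp (contractionRate D g K T * t) := by gcongr
  | succ n ih =>
    refine (hg.norm_nextField_sub_le hK (hg.isLipschitzField_picardField hK n)
      (hg.isLipschitzField_picardField hK (n + 1)) (by positivity)
      (fun t ht x => ih ht x) ht x).trans_eq ?_
    rw [pow_succ]
    field_simp

theorem dist_picardField_succ_le {t : ℝ} (ht : t ∈ Icc 0 T) (x : E3) (n : ℕ) :
    dist (picardField g K n t x) (picardField g K (n + 1) t x) ≤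
      2 * (2 * fieldBound g K + 1) * exp (contractionRate D g K T * t) / 2 / 2 ^ n := by
  rw [dist_eq_norm]
  exact (hg.norm_picardField_sub_le hK n ht x).trans_eq (by ring)

theorem exists_tendsto_picardField (t : ℝ) (x : E3) :
    ∃ y, Tendsto (fun n => picardField g K n t x) atTop (𝓝 y) := by
  simp only [← picardField_max _ t]
  exact cauchySeq_tendsto_of_complete (cauchySeq_of_le_geometric_two
    (hg.dist_picardField_succ_le hK ⟨le_max_right t 0, le_rfl⟩ x))

variable {E : ℝ → E3 → E3} (hE : ∀ t x, Tendsto (fun n => picardField g K n t x) atTop (𝓝 (E t x)))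
include hE

theorem norm_picardField_sub_limit_le (n : ℕ) {t : ℝ} (ht : t ∈ Icc 0 T) (x : E3) :
    ‖picardField g K n t x - E t x‖ ≤
      2 * (2 * fieldBound g K + 1) / 2 ^ n * exp (contractionRate D g K T * t) := by
  rw [← dist_eq_norm]
  exact (dist_le_of_le_geometric_two_of_tendsto (hg.dist_picardField_succ_le hK ht x)
    (hE t x) n).trans_eq (by ring)

theorem nextField_limit_picardField {t : ℝ} (ht : 0 ≤ t) (x : E3) :
    nextField g K E t x = E t x := by
  have hB := fieldBound_nonneg (g := g) hK
  set C := (2 * fieldBound g K + 1) * exp (contractionRate D g K t * t)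
  have geometric : Tendsto (fun n : ℕ => C * (1 / 2) ^ n) atTop (𝓝 0) := by
    simpa using (tendsto_pow_atTop_nhds_zero_of_lt_one (r := (1 / 2 : ℝ)) (by norm_num)
      (by norm_num)).const_mul C
  refine tendsto_nhds_unique (tendsto_iff_norm_sub_tendsto_zero.2 ?_)
    ((tendsto_add_atTop_iff_nat 1).2 (hE t x))
  refine squeeze_zero (fun n => norm_nonneg _) (fun n => ?_) geometric
  refine (hg.norm_nextField_sub_le hK (hg.isLipschitzField_picardField hK n)
    (.of_tendsto (hg.isLipschitzField_picardField hK) hE) (by positivity)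
    (fun s hs x => hg.norm_picardField_sub_limit_le hK hE n hs x) ⟨ht, le_rfl⟩ x).trans_eq ?_
  rw [one_div, inv_pow]
  ring

end HasPolynomialDecay

theorem HasPolynomialDecay.exists_nextField_eq_self {D K : ℝ} {g : E3 × E3 → ℝ}
    (hg : HasPolynomialDecay D g) (hK : 0 ≤ K) :
    ∃ E, IsLipschitzField (fieldBound g K) (fieldLip D g K) E ∧ nextField g K E = E := by
  choose E hE using hg.exists_tendsto_picardField hK
  refine ⟨E, .of_tendsto (hg.isLipschitzField_picardField hK) hE, funext₂ fun t x => ?_⟩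
  have field_frozen : E (max t 0) x = E t x :=
    tendsto_nhds_unique (hE _ x) ((hE t x).congr fun n => by rw [picardField_max])
  rw [← nextField_max, ← field_frozen]
  exact hg.nextField_limit_picardField hK hE (le_max_right t 0) x

end SelfConsistentField

section FieldEnergy

open Filter Topology

/-- The signed component of the capped field along a ray, at signed distance `r` from the origin;
the capped field is the gradient of its antiderivative `radialPotential` composed with the norm. -/
def radialForce (K : ℝ) (N : ℝ → ℝ) (r : ℝ) : ℝ := (4 * π)⁻¹ * capProfile K N |r| * r

/-- The potential of the capped field as a function of the distance to the origin, where it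
vanishes. -/
def radialPotential (K : ℝ) (N : ℝ → ℝ) (r : ℝ) : ℝ := ∫ s in (0 : ℝ)..r, radialForce K N s

variable {b K M : ℝ} {N : ℝ → ℝ}

theorem inner_capField_smul {e : E3} (he : ‖e‖ = 1) (r : ℝ) :
    inner ℝ (capField K N (r • e)) e = radialForce K N r := by
  rw [capField, norm_smul, he, mul_one, Real.norm_eq_abs, real_inner_smul_left,
    real_inner_smul_left, real_inner_self_eq_norm_sq, he, radialForce]
  ring

theorem abs_radialForce_le (hK : 0 ≤ K) (hN : ∀ r, 0 ≤ N r) (hM : ∀ r, N r ≤ M) (r : ℝ) :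
    |radialForce K N r| ≤ M + K := by
  obtain ⟨e, he⟩ := exists_norm_eq E3 zero_le_one
  rw [← inner_capField_smul he]
  refine (abs_real_inner_le_norm _ _).trans ?_
  rw [he, mul_one]
  exact norm_capField_le hK hN hM _

theorem radialForce_eq {r : ℝ} (hr : 0 < r) :
    radialForce K N r = (4 * π * r ^ 2)⁻¹ * min (N r) (K * r ^ 3) := by
  have hr3 : 0 < r ^ 3 := by positivity
  have profile_eq : capProfile K N r = min (N r) (K * r ^ 3) / r ^ 3 := by
    rw [capProfile, ← min_div_div_right hr3.le, mul_div_cancel_right₀ _ hr3.ne']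
  rw [radialForce, abs_of_pos hr, profile_eq]
  field_simp

theorem hasFDerivAt_lorentz (v : E3) : HasFDerivAt lorentz (innerSL ℝ (vhat v)) v := by
  refine (((hasStrictFDerivAt_norm_sq v).hasFDerivAt.const_add 1).sqrt
    (by positivity : 1 + ‖v‖ ^ 2 ≠ 0)).congr_fderiv ?_
  ext y
  simp only [vhat, one_div, mul_inv_rev, map_smul, smul_apply, smul_eq_mul,
    nsmul_eq_mul, Nat.cast_ofNat]
  ring

/-- The density in the radial variable `r` of the field energy, for the mass `m` inside radius `r`.
Its derivative in `m` is at least the radial force, which makes the energy an upper bound for the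
work of the capped field; without the cap it is `m ^ 2 / (8 * π * r ^ 2)`. -/
def energyDensity (K m r : ℝ) : ℝ :=
  (4 * π * r ^ 2)⁻¹ * (m * min m (K * r ^ 3) - min m (K * r ^ 3) ^ 2 / 2)

/-- The energy of the capped field generated by the mass function `N`. -/
def fieldEnergy (K : ℝ) (N : ℝ → ℝ) : ℝ := ∫ r in Ioi 0, energyDensity K (N r) r

theorem energyDensity_sub_le {N₁ N₂ : ℝ → ℝ} {r : ℝ} (hr : 0 < r) :
    energyDensity K (N₁ r) r - energyDensity K (N₂ r) r ≤
      radialForce K N₁ r * (N₁ r - N₂ r) := by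
  rw [radialForce_eq hr, energyDensity, energyDensity, mul_assoc (4 * π * r ^ 2)⁻¹,
    ← mul_sub (4 * π * r ^ 2)⁻¹]
  refine mul_le_mul_of_nonneg_left ?_ (by positivity)
  rcases le_total (N₁ r) (K * r ^ 3) with h₁ | h₁ <;>
  rcases le_total (N₂ r) (K * r ^ 3) with h₂ | h₂ <;> simp only [h₁, h₂, min_eq_left, min_eq_right]
    <;> nlinarith [sq_nonneg (N₁ r - N₂ r), sq_nonneg (N₂ r - K * r ^ 3)]

theorem energyDensity_le (K m r : ℝ) : energyDensity K m r ≤ m ^ 2 / (8 * π * r ^ 2) := by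
  have uncapped_eq : m ^ 2 / (8 * π * r ^ 2) = (4 * π * r ^ 2)⁻¹ * (m ^ 2 / 2) := by
    rw [div_eq_mul_inv, show 8 * π * r ^ 2 = (4 * π * r ^ 2) * 2 by ring, mul_inv]
    ring
  rw [uncapped_eq, energyDensity]
  refine mul_le_mul_of_nonneg_left ?_ (by positivity)
  nlinarith [sq_nonneg (m - min m (K * r ^ 3))]

theorem le_energyDensity {m r : ℝ} (hK : 0 ≤ K) (hm : 0 ≤ m) (hr : 0 ≤ r) :
    (4 * π * r ^ 2)⁻¹ * (min m (K * r ^ 3) ^ 2 / 2) ≤ energyDensity K m r := by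
  refine mul_le_mul_of_nonneg_left ?_ (by positivity)
  have min_le : min m (K * r ^ 3) ≤ m := min_le_left _ _
  have min_nonneg : 0 ≤ min m (K * r ^ 3) := le_min hm (by positivity)
  nlinarith

theorem energyDensity_nonneg {m r : ℝ} (hK : 0 ≤ K) (hm : 0 ≤ m) (hr : 0 ≤ r) :
    0 ≤ energyDensity K m r := le_trans (by positivity) (le_energyDensity hK hm hr)

namespace IsShellBounded

theorem continuous_capField (hK : 0 ≤ K) (hN : IsShellBounded b N) : Continuous (capField K N) :=
  (LipschitzWith.of_dist_le_mul (K := b.toNNReal) fun x y => by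
    rw [dist_eq_norm, dist_eq_norm, coe_toNNReal _ hN.const_nonneg]
    exact hN.norm_capField_sub_le hK x y).continuous

theorem continuous_radialForce (hK : 0 ≤ K) (hN : IsShellBounded b N) :
    Continuous (radialForce K N) := by
  obtain ⟨e, he⟩ := exists_norm_eq E3 zero_le_one
  have continuous_component : Continuous fun r : ℝ => inner ℝ (capField K N (r • e)) e :=
    ((hN.continuous_capField hK).comp (by fun_prop)).inner continuous_const
  simpa only [inner_capField_smul he] using continuous_component

theorem hasDerivAt_radialPotential (hK : 0 ≤ K) (hN : IsShellBounded b N) (r : ℝ) :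
    HasDerivAt (radialPotential K N) (radialForce K N r) r :=
  ((hN.continuous_radialForce hK).integral_hasStrictDerivAt 0 r).hasDerivAt

theorem integral_radialForce (hK : 0 ≤ K) (hN : IsShellBounded b N) (r s : ℝ) :
    ∫ t in r..s, radialForce K N t = radialPotential K N s - radialPotential K N r :=
  intervalIntegral.integral_eq_sub_of_hasDerivAt
    (fun t _ => hN.hasDerivAt_radialPotential hK t)
    ((hN.continuous_radialForce hK).intervalIntegrable _ _)

theorem hasFDerivAt_radialPotential_zero (hK : 0 ≤ K) (hN : IsShellBounded b N) :
    HasFDerivAt (fun x : E3 => radialPotential K N ‖x‖) (0 : E3 →L[ℝ] ℝ) 0 := by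
  have force_zero : radialForce K N 0 = 0 := mul_zero _
  have potential_isLittleO := hN.hasDerivAt_radialPotential hK 0
  rw [force_zero, hasDerivAt_iff_isLittleO_nhds_zero] at potential_isLittleO
  rw [hasFDerivAt_iff_isLittleO_nhds_zero]
  exact ((potential_isLittleO.comp_tendsto tendsto_norm_zero).trans_isBigO
    (Asymptotics.isBigO_refl (fun x : E3 => x) _).norm_left).congr_left fun x => by simp

theorem hasFDerivAt_radialPotential (hK : 0 ≤ K) (hN : IsShellBounded b N) (x : E3) :
    HasFDerivAt (fun x : E3 => radialPotential K N ‖x‖) (innerSL ℝ (capField K N x)) x := by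
  rcases eq_or_ne x 0 with rfl | hx
  · simpa [capField] using hN.hasFDerivAt_radialPotential_zero hK
  · have norm_ne_zero : ‖x‖ ≠ 0 := norm_ne_zero_iff.2 hx
    have hasFDerivAt_norm : HasFDerivAt (fun x : E3 => ‖x‖) (‖x‖⁻¹ • innerSL ℝ x) x := by
      refine (((hasStrictFDerivAt_norm_sq x).hasFDerivAt.sqrt (by positivity)).congr_of_eventuallyEq
        (Eventually.of_forall fun y => (sqrt_sq (norm_nonneg y)).symm)).congr_fderiv ?_
      rw [sqrt_sq (norm_nonneg x), two_nsmul, ← two_smul ℝ, smul_smul]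
      congr 1
      field_simp
    refine ((hN.hasDerivAt_radialPotential hK ‖x‖).comp_hasFDerivAt x
      hasFDerivAt_norm).congr_fderiv ?_
    ext y
    have : radialForce K N ‖x‖ * (‖x‖⁻¹ * inner ℝ x y) =
        (4 * π)⁻¹ * capProfile K N ‖x‖ * inner ℝ x y := by
      rw [radialForce, abs_norm]
      field_simp
    simpa only [capField, map_smul, smul_apply, innerSL_apply_apply,
      smul_eq_mul] using this

theorem integrableOn_sq_div_Ioc (hN : IsShellBounded b N) :
    IntegrableOn (fun r => N r ^ 2 / (8 * π * r ^ 2)) (Ioc 0 1) := by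
  refine Measure.integrableOn_of_bounded (M := b ^ 2) measure_Ioc_lt_top.ne
    ((hN.mono.measurable.pow_const 2).div (by fun_prop)).aestronglyMeasurable
    (ae_restrict_of_forall_mem measurableSet_Ioc fun r hr => ?_)
  have hr0 : 0 < r := hr.1
  rw [norm_of_nonneg (by positivity), div_le_iff₀ (by positivity)]
  have r_pow_le : r ^ 4 ≤ 8 * π := (pow_le_one₀ hr0.le hr.2).trans (by linarith [pi_gt_three])
  calc N r ^ 2 ≤ (b * r ^ 3) ^ 2 := pow_le_pow_left₀ (hN.nonneg r) (hN.le_cube hr0.le) 2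
    _ = b ^ 2 * (r ^ 4 * r ^ 2) := by ring
    _ ≤ b ^ 2 * (8 * π * r ^ 2) := by gcongr

theorem integrableOn_sq_div_Ioi (hN : IsShellBounded b N) (hM : ∀ r, N r ≤ M) :
    IntegrableOn (fun r => N r ^ 2 / (8 * π * r ^ 2)) (Ioi 1) := by
  refine ((integrableOn_Ioi_rpow_of_lt (by norm_num : (-2 : ℝ) < -1) one_pos).const_mul
    (M ^ 2)).mono' ((hN.mono.measurable.pow_const 2).div (by fun_prop)).aestronglyMeasurable
    (ae_restrict_of_forall_mem measurableSet_Ioi fun r hr => ?_)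
  have hr0 : 0 < r := one_pos.trans hr
  rw [norm_of_nonneg (by positivity), rpow_neg hr0.le, rpow_two]
  calc N r ^ 2 / (8 * π * r ^ 2) ≤ M ^ 2 / (1 * r ^ 2) := by
        gcongr
        exacts [hN.nonneg r, hM r, by linarith [pi_gt_three]]
    _ = M ^ 2 * (r ^ 2)⁻¹ := by rw [one_mul, div_eq_mul_inv]

theorem integrableOn_sq_div (hN : IsShellBounded b N) (hM : ∀ r, N r ≤ M) :
    IntegrableOn (fun r => N r ^ 2 / (8 * π * r ^ 2)) (Ioi 0) := by
  rw [← Ioc_union_Ioi_eq_Ioi (zero_le_one' ℝ)]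
  exact hN.integrableOn_sq_div_Ioc.union (hN.integrableOn_sq_div_Ioi hM)

theorem integrableOn_energyDensity (hK : 0 ≤ K) (hN : IsShellBounded b N) (hM : ∀ r, N r ≤ M) :
    IntegrableOn (fun r => energyDensity K (N r) r) (Ioi 0) := by
  have measurable_mass := hN.mono.measurable
  refine (hN.integrableOn_sq_div hM).mono'
    (Measurable.aestronglyMeasurable (by unfold energyDensity; fun_prop))
    (ae_restrict_of_forall_mem measurableSet_Ioi fun r hr => ?_)
  rw [norm_of_nonneg (energyDensity_nonneg hK (hN.nonneg r) (le_of_lt hr))]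
  exact energyDensity_le K (N r) r

theorem min_sq_le (hK : 0 ≤ K) (hN : IsShellBounded b N) (hM : ∀ r, N r ≤ M) {r : ℝ} (hr : 0 < r) :
    min (N r) (K * r ^ 3) ^ 2 ≤ 32 * π * fieldEnergy K N * r := by
  set y := min (N r) (K * r ^ 3)
  have y_nonneg : 0 ≤ y := le_min (hN.nonneg r) (by positivity)
  have integrable_density := hN.integrableOn_energyDensity hK hM
  have Ioc_subset : Ioc r (2 * r) ⊆ Ioi 0 := fun x hx => hr.trans hx.1
  have density_ge : ∀ s ∈ Ioc r (2 * r), (32 * π * r ^ 2)⁻¹ * y ^ 2 ≤ energyDensity K (N s) s := by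
    intro s hs
    have hs0 : 0 < s := Ioc_subset hs
    have min_mono : y ≤ min (N s) (K * s ^ 3) :=
      min_le_min (hN.mono hs.1.le) (by gcongr; exact hs.1.le)
    calc (32 * π * r ^ 2)⁻¹ * y ^ 2 = (4 * π * (2 * r) ^ 2)⁻¹ * (y ^ 2 / 2) := by
          field_simp
          ring
      _ ≤ (4 * π * s ^ 2)⁻¹ * (min (N s) (K * s ^ 3) ^ 2 / 2) := by
          gcongr
          exact hs.2
      _ ≤ energyDensity K (N s) s := le_energyDensity hK (hN.nonneg s) hs0.le
  have energy_ge : y ^ 2 / (32 * π * r) ≤ fieldEnergy K N :=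
    calc y ^ 2 / (32 * π * r) = ∫ _ in Ioc r (2 * r), (32 * π * r ^ 2)⁻¹ * y ^ 2 := by
          rw [setIntegral_const, smul_eq_mul, Real.volume_real_Ioc_of_le (by linarith)]
          field_simp
          ring
      _ ≤ ∫ s in Ioc r (2 * r), energyDensity K (N s) s :=
          setIntegral_mono_on (integrableOn_const (by simp))
            (integrable_density.mono_set Ioc_subset) measurableSet_Ioc density_ge
      _ ≤ fieldEnergy K N :=
          setIntegral_mono_set integrable_density (ae_restrict_of_forall_mem measurableSet_Ioi
            fun s hs => energyDensity_nonneg hK (hN.nonneg s) (le_of_lt hs))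
            (LE.le.eventuallyLE Ioc_subset)
  rw [div_le_iff₀ (by positivity)] at energy_ge
  linarith

end IsShellBounded

end FieldEnergy

section EnergyInequality

open Filter Topology

/-- The indicator of the interval between `a` and `c`, with sign: `1` on `[a, c)` if `a ≤ c` and
`-1` on `[c, a)` if `c ≤ a`. -/
def signedIndicator (a c r : ℝ) : ℝ := (Ici a).indicator 1 r - (Ici c).indicator 1 r

section SignedIndicator

variable {a c : ℝ} {P : ℝ → ℝ}

theorem signedIndicator_symm (a c : ℝ) : signedIndicator a c = -signedIndicator c a :=
  funext fun _ => (neg_sub _ _).symm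

theorem signedIndicator_of_le (hac : a ≤ c) : signedIndicator a c = (Ico a c).indicator 1 := by
  rw [← Ici_sdiff_Ici, indicator_sdiff (Ici_subset_Ici.2 hac)]
  rfl

theorem integrable_mul_signedIndicator (hP : Continuous P) (a c : ℝ) :
    Integrable fun r => P r * signedIndicator a c r := by
  wlog hac : a ≤ c generalizing a c
  · simpa [signedIndicator_symm a c] using (this c a (le_of_not_ge hac)).neg
  · simp only [signedIndicator_of_le hac, ← indicator_mul_right, Pi.one_apply, mul_one]
    rw [integrable_indicator_iff measurableSet_Ico]
    exact hP.integrableOn_Icc.mono_set Ico_subset_Icc_self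

theorem integral_mul_signedIndicator (P : ℝ → ℝ) (a c : ℝ) :
    ∫ r, P r * signedIndicator a c r = ∫ r in a..c, P r := by
  wlog hac : a ≤ c generalizing a c
  · rw [intervalIntegral.integral_symm, ← this c a (le_of_not_ge hac), signedIndicator_symm a c,
      ← integral_neg]
    exact integral_congr_ae (Eventually.of_forall fun r => mul_neg _ _)
  · simp only [signedIndicator_of_le hac, ← indicator_mul_right, Pi.one_apply, mul_one]
    rw [integral_indicator measurableSet_Ico, intervalIntegral.integral_of_le hac,
      integral_Ico_eq_integral_Ioo, integral_Ioc_eq_integral_Ioo]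

theorem integral_norm_mul_signedIndicator_le {B : ℝ} (hB : ∀ r, |P r| ≤ B) (a c : ℝ) :
    ∫ r, ‖P r * signedIndicator a c r‖ ≤ B * |a - c| := by
  wlog hac : a ≤ c generalizing a c
  · simpa [signedIndicator_symm a c, abs_sub_comm a c] using this c a (le_of_not_ge hac)
  · simp only [signedIndicator_of_le hac, ← indicator_mul_right, Pi.one_apply, mul_one,
      norm_indicator_eq_indicator_norm]
    rw [integral_indicator measurableSet_Ico]
    have integral_le := norm_setIntegral_le_of_norm_le_const (μ := volume) (s := Ico a c)
      (f := fun r => ‖P r‖) measure_Ico_lt_top fun r _ => (norm_norm (P r)).trans_le (hB r)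
    rw [Real.volume_real_Ico_of_le hac] at integral_le
    rw [abs_sub_comm, abs_of_nonneg (sub_nonneg.2 hac)]
    exact (le_abs_self _).trans integral_le

end SignedIndicator

section MassDifference

variable {Z F : Type*} [MeasurableSpace Z] [NormedAddCommGroup F] {μ : Measure Z} {X Y : Z → F}

theorem massIn_of_neg (μ : Measure Z) (X : Z → F) {r : ℝ} (hr : r < 0) : massIn μ X r = 0 := by
  have : {z | ‖X z‖ ≤ r} = ∅ := eq_empty_of_forall_notMem fun z hz =>
    (hr.trans_le (norm_nonneg (X z))).not_ge hz
  rw [massIn, this, measureReal_empty]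

variable [MeasurableSpace F] [OpensMeasurableSpace F]

theorem massIn_eq_integral (hX : Measurable X) (r : ℝ) :
    massIn μ X r = ∫ z, (Ici ‖X z‖).indicator (1 : ℝ → ℝ) r ∂μ :=
  (integral_indicator_one (measurableSet_le hX.norm measurable_const)).symm

theorem measurable_indicator_Ici_norm (hX : Measurable X) :
    Measurable fun p : Z × ℝ => (Ici ‖X p.1‖).indicator (1 : ℝ → ℝ) p.2 :=
  Measurable.ite (measurableSet_le (hX.comp measurable_fst).norm measurable_snd)
    measurable_const measurable_const

variable [IsFiniteMeasure μ]

theorem integrable_indicator_Ici_norm (hX : Measurable X) (r : ℝ) :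
    Integrable (fun z => (Ici ‖X z‖).indicator (1 : ℝ → ℝ) r) μ :=
  (integrable_const (1 : ℝ)).indicator (measurableSet_le hX.norm measurable_const)

theorem massIn_sub_massIn (hX : Measurable X) (hY : Measurable Y) (r : ℝ) :
    massIn μ X r - massIn μ Y r = ∫ z, signedIndicator ‖X z‖ ‖Y z‖ r ∂μ := by
  rw [massIn_eq_integral hX, massIn_eq_integral hY, ← integral_sub
    (integrable_indicator_Ici_norm hX r) (integrable_indicator_Ici_norm hY r)]
  rfl

variable {P : ℝ → ℝ} {B δ : ℝ} (hX : Measurable X) (hY : Measurable Y)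
  (hXY : ∀ z, ‖X z - Y z‖ ≤ δ) (hP : Continuous P) (hB : ∀ r, |P r| ≤ B)
include hX hY hXY hP hB

theorem integrable_prod_mul_signedIndicator :
    Integrable (fun p : Z × ℝ => P p.2 * signedIndicator ‖X p.1‖ ‖Y p.1‖ p.2)
      (μ.prod volume) := by
  have measurable_kernel :
      Measurable fun p : Z × ℝ => P p.2 * signedIndicator ‖X p.1‖ ‖Y p.1‖ p.2 :=
    (hP.measurable.comp measurable_snd).mul ((measurable_indicator_Ici_norm hX).sub
      (measurable_indicator_Ici_norm hY))
  refine (integrable_prod_iff measurable_kernel.aestronglyMeasurable).2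
    ⟨Eventually.of_forall fun z => integrable_mul_signedIndicator hP ‖X z‖ ‖Y z‖, ?_⟩
  refine Integrable.of_bound (C := B * δ) ?_ (Eventually.of_forall fun z => ?_)
  · exact measurable_kernel.norm.stronglyMeasurable.integral_prod_right'.aestronglyMeasurable
  · rw [norm_of_nonneg (integral_nonneg fun r => norm_nonneg _)]
    exact (integral_norm_mul_signedIndicator_le hB ‖X z‖ ‖Y z‖).trans (mul_le_mul_of_nonneg_left
      ((abs_norm_sub_norm_le _ _).trans (hXY z)) ((abs_nonneg _).trans (hB 0)))

theorem integrable_mul_massIn_sub :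
    Integrable fun r => P r * (massIn μ X r - massIn μ Y r) := by
  simpa only [integral_const_mul, ← massIn_sub_massIn hX hY] using
    (integrable_prod_mul_signedIndicator (μ := μ) hX hY hXY hP hB).integral_prod_right

theorem integrable_integral_norm : Integrable (fun z => ∫ r in ‖X z‖..‖Y z‖, P r) μ := by
  simpa only [integral_mul_signedIndicator] using
    (integrable_prod_mul_signedIndicator (μ := μ) hX hY hXY hP hB).integral_prod_left

theorem integral_mul_massIn_sub :
    ∫ r, P r * (massIn μ X r - massIn μ Y r) = ∫ z, (∫ r in ‖X z‖..‖Y z‖, P r) ∂μ := by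
  simpa only [integral_const_mul, ← massIn_sub_massIn hX hY, integral_mul_signedIndicator] using
    (integral_integral_swap (f := fun z r => P r * signedIndicator ‖X z‖ ‖Y z‖ r)
      (integrable_prod_mul_signedIndicator (μ := μ) hX hY hXY hP hB)).symm

end MassDifference

theorem le_of_sub_le_sq {H : ℝ → ℝ} {C T : ℝ} (hT : 0 ≤ T)
    (h : ∀ s t, 0 ≤ s → s ≤ t → t ≤ T → H t - H s ≤ C * (t - s) ^ 2) : H T ≤ H 0 := by
  have sub_le : ∀ n : ℕ, H T - H 0 ≤ C * T ^ 2 * (1 / ((n : ℝ) + 1)) := fun n => by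
    have d_nonneg : 0 ≤ T / (n + 1) := by positivity
    have mul_d : ((n + 1 : ℕ) : ℝ) * (T / (n + 1)) = T := by
      push_cast
      field_simp
    calc H T - H 0
        = ∑ k ∈ Finset.range (n + 1),
          (H ((k + 1 : ℕ) * (T / (n + 1))) - H (k * (T / (n + 1)))) := by
          rw [Finset.sum_range_sub fun k : ℕ => H (k * (T / (n + 1))), mul_d, Nat.cast_zero,
            zero_mul]
      _ ≤ ∑ k ∈ Finset.range (n + 1), C * (T / (n + 1)) ^ 2 := by
          refine Finset.sum_le_sum fun k hk => (h (k * (T / (n + 1))) ((k + 1 : ℕ) * (T / (n + 1)))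
            (by positivity) (by gcongr; simp) ?_).trans_eq (by push_cast; ring)
          exact (mul_le_mul_of_nonneg_right (Nat.cast_le.2 (Finset.mem_range.1 hk))
            d_nonneg).trans_eq mul_d
      _ = C * T ^ 2 * (1 / ((n : ℝ) + 1)) := by
          rw [Finset.sum_const, Finset.card_range, nsmul_eq_mul]
          push_cast
          field_simp
  have bound_tendsto := (tendsto_one_div_add_atTop_nhds_zero_nat (𝕜 := ℝ)).const_mul (C * T ^ 2)
  rw [mul_zero] at bound_tendsto
  exact sub_nonpos.1 (ge_of_tendsto' bound_tendsto sub_le)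

/-- The kinetic energy plus the field energy at time `t` of the mass transported by `E`. -/
def totalEnergy (g : E3 × E3 → ℝ) (K : ℝ) (E : ℝ → E3 → E3) (t : ℝ) : ℝ :=
  (∫ z, lorentz (charFlow E t z).2 ∂(massMeasure g)) + fieldEnergy K (flowMass g E t)

/-- The energy at time `0` computed without the cap. -/
def initialEnergy (g : E3 × E3 → ℝ) : ℝ :=
  (∫ z : E3 × E3, lorentz z.2 ∂(massMeasure g)) +
    ∫ r in Ioi 0, massIn (massMeasure g) Prod.fst r ^ 2 / (8 * π * r ^ 2)

theorem initialEnergy_nonneg (g : E3 × E3 → ℝ) : 0 ≤ initialEnergy g :=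
  add_nonneg (integral_nonneg fun z => (lorentz_pos _).le)
    (integral_nonneg fun r => by positivity)

namespace HasPolynomialDecay

variable {D K : ℝ} {g : E3 × E3 → ℝ} {E : ℝ → E3 → E3} (hg : HasPolynomialDecay D g)
include hg

theorem integrable_lorentz_charFlow {B : ℝ} {L : ℝ → ℝ} (hE : IsLipschitzField B L E) (t : ℝ) :
    Integrable (fun z => lorentz (charFlow E t z).2) (massMeasure g) := by
  have := hg.isFiniteMeasure
  refine (hg.integrable_lorentz.add (integrable_const (B * |t|))).mono'
    (contDiff_lorentz.continuous.comp (hE.continuous_charFlow t).snd).aestronglyMeasurable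
    (Eventually.of_forall fun z => ?_)
  have displacement := hE.norm_vel_sub_le t 0 z
  rw [hE.charFlow_zero, sub_zero] at displacement
  rw [norm_of_nonneg (lorentz_pos _).le, Pi.add_apply]
  linarith [(le_abs_self _).trans (abs_lorentz_sub_le (charFlow E t z).2 z.2)]

variable (hK : 0 ≤ K) (hE : IsLipschitzField (fieldBound g K) (fieldLip D g K) E)
include hK hE

theorem fieldEnergy_sub_le {s t : ℝ} (hs : 0 ≤ s) (ht : 0 ≤ t) :
    fieldEnergy K (flowMass g E t) - fieldEnergy K (flowMass g E s) ≤
      ∫ z, (∫ r in ‖(charFlow E t z).1‖..‖(charFlow E s z).1‖,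
        radialForce K (flowMass g E t) r) ∂(massMeasure g) := by
  have := hg.isFiniteMeasure
  have shell := fun r => hg.isShellBounded_flowMass hK hE (le_refl |r|)
  have integrable_density := fun r =>
    (shell r).integrableOn_energyDensity hK (hg.flowMass_le E r)
  have measurable_pos : ∀ r, Measurable fun z => (charFlow E r z).1 := fun r =>
    (hE.continuous_charFlow r).measurable.fst
  have continuous_force := (shell t).continuous_radialForce hK
  have force_le := abs_radialForce_le hK (shell t).nonneg (hg.flowMass_le E t)
  have flowMass_eq : ∀ r, 0 ≤ r → flowMass g E r = massIn (massMeasure g)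
      fun z => (charFlow E r z).1 := fun r hr => by rw [flowMass, max_eq_left hr]
  have integrable_work := integrable_mul_massIn_sub (μ := massMeasure g) (measurable_pos t)
    (measurable_pos s) (hE.norm_pos_sub_le t s) continuous_force force_le
  rw [← integral_mul_massIn_sub (measurable_pos t) (measurable_pos s) (hE.norm_pos_sub_le t s)
    continuous_force force_le, ← flowMass_eq t ht, ← flowMass_eq s hs]
  rw [← flowMass_eq t ht, ← flowMass_eq s hs] at integrable_work
  calc fieldEnergy K (flowMass g E t) - fieldEnergy K (flowMass g E s)
      = ∫ r in Ioi 0, (energyDensity K (flowMass g E t r) r -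
          energyDensity K (flowMass g E s r) r) :=
        (integral_sub (integrable_density t) (integrable_density s)).symm
    _ ≤ ∫ r in Ioi 0, radialForce K (flowMass g E t) r *
          (flowMass g E t r - flowMass g E s r) :=
        setIntegral_mono_on ((integrable_density t).sub (integrable_density s))
          integrable_work.integrableOn measurableSet_Ioi fun r hr => energyDensity_sub_le hr
    _ = ∫ r, radialForce K (flowMass g E t) r * (flowMass g E t r - flowMass g E s r) := by
        refine setIntegral_eq_integral_of_forall_compl_eq_zero fun r hr => ?_
        rcases (not_lt.1 (mem_Ioi.not.1 hr)).eq_or_lt with rfl | hr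
        · simp [radialForce]
        · rw [flowMass, flowMass, massIn_of_neg _ _ hr, massIn_of_neg _ _ hr, sub_self, mul_zero]

variable (hfix : nextField g K E = E)
include hfix

theorem hasDerivAt_particleEnergy (t τ : ℝ) (z : E3 × E3) :
    HasDerivAt (fun τ => lorentz (charFlow E τ z).2 -
        radialPotential K (flowMass g E t) ‖(charFlow E τ z).1‖)
      (inner ℝ (E τ (charFlow E τ z).1 - E t (charFlow E τ z).1) (vhat (charFlow E τ z).2)) τ := by
  have kinetic := (hasFDerivAt_lorentz (charFlow E τ z).2).comp_hasDerivAt τ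
    (hE.hasDerivAt_vel τ z)
  have potential := ((hg.isShellBounded_flowMass hK hE (le_refl |t|)).hasFDerivAt_radialPotential
    hK (charFlow E τ z).1).comp_hasDerivAt τ (hE.hasDerivAt_pos τ z)
  rw [show capField K (flowMass g E t) = E t from congrFun hfix t] at potential
  refine (kinetic.sub potential).congr_deriv ?_
  rw [innerSL_apply_apply, innerSL_apply_apply, real_inner_comm, inner_sub_left]

theorem particleEnergy_sub_le {s t T : ℝ} (hs : 0 ≤ s) (hst : s ≤ t) (htT : t ≤ T)
    (z : E3 × E3) :
    lorentz (charFlow E t z).2 - lorentz (charFlow E s z).2 +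
      (∫ r in ‖(charFlow E t z).1‖..‖(charFlow E s z).1‖,
        radialForce K (flowMass g E t) r) ≤ fieldLip D g K T * (t - s) ^ 2 := by
  have hL := hg.fieldLip_nonneg (K := K) (T := T)
  have deriv_le : ∀ τ ∈ Icc s t,
      ‖inner ℝ (E τ (charFlow E τ z).1 - E t (charFlow E τ z).1) (vhat (charFlow E τ z).2)‖ ≤
        fieldLip D g K T * (t - s) := fun τ hτ => by
    have hτT : |τ| ≤ T := by
      rw [abs_of_nonneg (hs.trans hτ.1)]
      exact hτ.2.trans htT
    have htT' : |t| ≤ T := by rwa [abs_of_nonneg (hs.trans hst)]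
    have time_le : |τ - t| ≤ t - s := by
      rw [abs_sub_comm, abs_of_nonneg (by linarith [hτ.2])]
      linarith [hτ.1]
    calc ‖inner ℝ (E τ (charFlow E τ z).1 - E t (charFlow E τ z).1) (vhat (charFlow E τ z).2)‖
        ≤ ‖E τ (charFlow E τ z).1 - E t (charFlow E τ z).1‖ * ‖vhat (charFlow E τ z).2‖ :=
          norm_inner_le_norm _ _
      _ ≤ fieldLip D g K T * |τ - t| * 1 := by
          gcongr
          exacts [hE.norm_time_sub_le T τ t _ hτT htT', norm_vhat_le _]
      _ ≤ fieldLip D g K T * (t - s) := by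
          rw [mul_one]
          gcongr
  have energy_change := (le_abs_self _).trans
    ((convex_Icc s t).norm_image_sub_le_of_norm_hasDerivWithin_le
      (fun τ _ => (hg.hasDerivAt_particleEnergy hK hE hfix t τ z).hasDerivWithinAt) deriv_le
      (left_mem_Icc.2 hst) (right_mem_Icc.2 hst))
  rw [Real.norm_eq_abs, abs_of_nonneg (by linarith : 0 ≤ t - s)] at energy_change
  rw [(hg.isShellBounded_flowMass hK hE (le_refl |t|)).integral_radialForce hK]
  linarith

theorem totalEnergy_sub_le {s t T : ℝ} (hs : 0 ≤ s) (hst : s ≤ t) (htT : t ≤ T) :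
    totalEnergy g K E t - totalEnergy g K E s ≤
      (massMeasure g).real univ * fieldLip D g K T * (t - s) ^ 2 := by
  have := hg.isFiniteMeasure
  have shell := hg.isShellBounded_flowMass hK hE (le_refl |t|)
  have kinetic_integrable := hg.integrable_lorentz_charFlow hE
  have kinetic_sub_integrable := (kinetic_integrable t).sub (kinetic_integrable s)
  have work_integrable := integrable_integral_norm (μ := massMeasure g)
    (hE.continuous_charFlow t).measurable.fst (hE.continuous_charFlow s).measurable.fst
    (hE.norm_pos_sub_le t s) (shell.continuous_radialForce hK)
    (abs_radialForce_le hK shell.nonneg (hg.flowMass_le E t))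
  have field_le := hg.fieldEnergy_sub_le hK hE hs (hs.trans hst)
  calc totalEnergy g K E t - totalEnergy g K E s
      ≤ (∫ z, (lorentz (charFlow E t z).2 - lorentz (charFlow E s z).2) ∂(massMeasure g)) +
        ∫ z, (∫ r in ‖(charFlow E t z).1‖..‖(charFlow E s z).1‖,
          radialForce K (flowMass g E t) r) ∂(massMeasure g) := by
        rw [integral_sub (kinetic_integrable t) (kinetic_integrable s), totalEnergy, totalEnergy]
        linarith
    _ = ∫ z, (lorentz (charFlow E t z).2 - lorentz (charFlow E s z).2 +
        (∫ r in ‖(charFlow E t z).1‖..‖(charFlow E s z).1‖,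
          radialForce K (flowMass g E t) r)) ∂(massMeasure g) :=
        (integral_add kinetic_sub_integrable work_integrable).symm
    _ ≤ ∫ _, fieldLip D g K T * (t - s) ^ 2 ∂(massMeasure g) :=
        integral_mono (kinetic_sub_integrable.add work_integrable) (integrable_const _)
          (hg.particleEnergy_sub_le hK hE hfix hs hst htT)
    _ = (massMeasure g).real univ * fieldLip D g K T * (t - s) ^ 2 := by
        rw [integral_const, smul_eq_mul, mul_assoc]

theorem fieldEnergy_le {t : ℝ} (ht : 0 ≤ t) :
    fieldEnergy K (flowMass g E t) ≤ initialEnergy g := by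
  have energy_le : totalEnergy g K E t ≤ totalEnergy g K E 0 :=
    le_of_sub_le_sq ht fun s r hs hsr hr => hg.totalEnergy_sub_le hK hE hfix hs hsr hr
  have flowMass_zero : flowMass g E 0 = massIn (massMeasure g) Prod.fst := by
    simp [flowMass, hE.charFlow_zero]
  have shell := hg.isShellBounded_flowMass hK hE (le_refl |0|)
  have fieldEnergy_zero_le : fieldEnergy K (flowMass g E 0) ≤
      ∫ r in Ioi 0, massIn (massMeasure g) Prod.fst r ^ 2 / (8 * π * r ^ 2) := by
    rw [← flowMass_zero]
    exact setIntegral_mono_on (shell.integrableOn_energyDensity hK (hg.flowMass_le E 0))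
      (shell.integrableOn_sq_div (hg.flowMass_le E 0)) measurableSet_Ioi
      fun r _ => energyDensity_le _ _ _
  have kinetic_nonneg : 0 ≤ ∫ z, lorentz (charFlow E t z).2 ∂(massMeasure g) :=
    integral_nonneg fun z => (lorentz_pos _).le
  simp only [totalEnergy, hE.charFlow_zero] at energy_le
  rw [initialEnergy]
  linarith

theorem min_flowMass_sq_le {t r : ℝ} (ht : 0 ≤ t) (hr : 0 < r) :
    min (flowMass g E t r) (K * r ^ 3) ^ 2 ≤ 32 * π * initialEnergy g * r := by
  refine ((hg.isShellBounded_flowMass hK hE (le_refl |t|)).min_sq_le hK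
    (hg.flowMass_le E t) hr).trans ?_
  have := hg.fieldEnergy_le hK hE hfix ht
  gcongr

end HasPolynomialDecay

end EnergyInequality

section MomentumGrowth

section RadialTrajectory

variable {X V : ℝ → E3} {κ : ℝ → ℝ} (hV : ∀ τ, HasDerivAt V (κ τ • X τ) τ)
include hV

theorem hasDerivAt_lorentz_vel (τ : ℝ) :
    HasDerivAt (fun τ => lorentz (V τ))
      ((lorentz (V τ))⁻¹ * κ τ * inner ℝ (X τ) (V τ)) τ := by
  refine ((hasFDerivAt_lorentz (V τ)).comp_hasDerivAt τ (hV τ)).congr_deriv ?_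
  rw [innerSL_apply_apply, vhat_eq, real_inner_smul_left, real_inner_smul_right, real_inner_comm]
  ring

theorem lorentz_le_of_inner_nonpos {s t : ℝ} (hst : s ≤ t) (hκ : ∀ τ ∈ Ioo s t, 0 ≤ κ τ)
    (inward : ∀ τ ∈ Ioo s t, inner ℝ (X τ) (V τ) ≤ 0) : lorentz (V t) ≤ lorentz (V s) := by
  refine antitoneOn_of_hasDerivWithinAt_nonpos (convex_Icc s t)
    (fun τ _ => (hasDerivAt_lorentz_vel hV τ).continuousAt.continuousWithinAt)
    (fun τ _ => (hasDerivAt_lorentz_vel hV τ).hasDerivWithinAt) (fun τ hτ => ?_)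
    (left_mem_Icc.2 hst) (right_mem_Icc.2 hst) hst
  rw [interior_Icc] at hτ
  have := lorentz_pos (V τ)
  have := hκ τ hτ
  exact mul_nonpos_of_nonneg_of_nonpos (by positivity) (inward τ hτ)

variable (hX : ∀ τ, HasDerivAt X (vhat (V τ)) τ)
include hX

theorem hasDerivAt_inner_pos_vel (τ : ℝ) :
    HasDerivAt (fun τ => inner ℝ (X τ) (V τ))
      ((lorentz (V τ))⁻¹ * ‖V τ‖ ^ 2 + κ τ * ‖X τ‖ ^ 2) τ := by
  refine ((hX τ).inner ℝ (hV τ)).congr_deriv ?_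
  rw [vhat_eq, real_inner_smul_left, real_inner_smul_right, real_inner_self_eq_norm_sq,
    real_inner_self_eq_norm_sq]
  ring

theorem continuous_inner_pos_vel : Continuous fun τ => inner ℝ (X τ) (V τ) :=
  continuous_iff_continuousAt.2 fun τ => (hasDerivAt_inner_pos_vel hV hX τ).continuousAt

theorem monotoneOn_inner_pos_vel (hκ : ∀ τ, 0 ≤ τ → 0 ≤ κ τ) :
    MonotoneOn (fun τ => inner ℝ (X τ) (V τ)) (Ici 0) := by
  refine monotoneOn_of_hasDerivWithinAt_nonneg (convex_Ici 0)
    (continuous_inner_pos_vel hV hX).continuousOn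
    (fun τ _ => (hasDerivAt_inner_pos_vel hV hX τ).hasDerivWithinAt) fun τ hτ => ?_
  have := lorentz_pos (V τ)
  have := hκ τ (interior_subset hτ)
  positivity

theorem lorentz_le_of_inner_nonneg {s t c a : ℝ} (hst : s ≤ t) (ha : 0 < a) (hc : 0 ≤ c)
    (hκ : ∀ τ ∈ Ioo s t, κ τ ≤ c * (‖X τ‖ ^ 2 + a) ^ (-(5 / 4) : ℝ))
    (outward : ∀ τ ∈ Ioo s t, 0 ≤ inner ℝ (X τ) (V τ)) :
    lorentz (V t) ≤ lorentz (V s) + 2 * c * a ^ (-(1 / 4) : ℝ) := by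
  have base_pos : ∀ τ, 0 < ‖X τ‖ ^ 2 + a := fun τ => by positivity
  have hasDerivAt_majorant : ∀ τ, HasDerivAt (fun τ => -2 * c * (‖X τ‖ ^ 2 + a) ^ (-(1 / 4) : ℝ))
      (c * (‖X τ‖ ^ 2 + a) ^ (-(5 / 4) : ℝ) * ((lorentz (V τ))⁻¹ * inner ℝ (X τ) (V τ))) τ :=
    fun τ => by
      have hasDerivAt_base : HasDerivAt (fun τ => ‖X τ‖ ^ 2 + a)
          (2 * ((lorentz (V τ))⁻¹ * inner ℝ (X τ) (V τ))) τ := by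
        refine ((hX τ).norm_sq.add_const a).congr_deriv ?_
        rw [vhat_eq, real_inner_smul_right]
      refine ((hasDerivAt_base.rpow_const (p := -(1 / 4)) (Or.inl (base_pos τ).ne')).const_mul
        (-2 * c)).congr_deriv ?_
      rw [show (-(1 / 4) : ℝ) - 1 = -(5 / 4) by norm_num]
      ring
  have hasDerivAt_sub := fun τ => (hasDerivAt_lorentz_vel hV τ).sub (hasDerivAt_majorant τ)
  have sub_antitone := antitoneOn_of_hasDerivWithinAt_nonpos (convex_Icc s t)
    (fun τ _ => (hasDerivAt_sub τ).continuousAt.continuousWithinAt)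
    (fun τ _ => (hasDerivAt_sub τ).hasDerivWithinAt) (fun τ hτ => by
      rw [interior_Icc] at hτ
      have speed_nonneg : 0 ≤ (lorentz (V τ))⁻¹ * inner ℝ (X τ) (V τ) :=
        mul_nonneg (inv_nonneg.2 (lorentz_pos _).le) (outward τ hτ)
      linarith [mul_le_mul_of_nonneg_right (hκ τ hτ) speed_nonneg])
    (left_mem_Icc.2 hst) (right_mem_Icc.2 hst) hst
  have final_nonneg : 0 ≤ c * (‖X t‖ ^ 2 + a) ^ (-(1 / 4) : ℝ) :=
    mul_nonneg hc (rpow_nonneg (base_pos t).le _)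
  have initial_le : c * (‖X s‖ ^ 2 + a) ^ (-(1 / 4) : ℝ) ≤ c * a ^ (-(1 / 4) : ℝ) :=
    mul_le_mul_of_nonneg_left (rpow_le_rpow_of_nonpos ha (le_add_of_nonneg_left (sq_nonneg _))
      (by norm_num)) hc
  simp only [Pi.sub_apply] at sub_antitone
  linarith

theorem lorentz_le_of_radial_force {t c a : ℝ} (ht : 0 ≤ t) (ha : 0 < a) (hc : 0 ≤ c)
    (hκ : ∀ τ, 0 ≤ τ → 0 ≤ κ τ)
    (hκ' : ∀ τ ∈ Icc 0 t, κ τ ≤ c * (‖X τ‖ ^ 2 + a) ^ (-(5 / 4) : ℝ)) :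
    lorentz (V t) ≤ lorentz (V 0) + 2 * c * a ^ (-(1 / 4) : ℝ) := by
  have q_mono := monotoneOn_inner_pos_vel hV hX hκ
  obtain ⟨t₀, ht₀, inward, outward⟩ : ∃ t₀ ∈ Icc 0 t,
      (∀ τ ∈ Ioo 0 t₀, inner ℝ (X τ) (V τ) ≤ 0) ∧ ∀ τ ∈ Ioo t₀ t, 0 ≤ inner ℝ (X τ) (V τ) := by
    rcases le_total (inner ℝ (X t) (V t)) 0 with final_nonpos | final_nonneg
    · exact ⟨t, ⟨ht, le_rfl⟩, fun τ hτ => (q_mono hτ.1.le ht hτ.2.le).trans final_nonpos,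
        fun τ hτ => absurd hτ.1 hτ.2.not_gt⟩
    rcases le_total 0 (inner ℝ (X 0) (V 0)) with initial_nonneg | initial_nonpos
    · exact ⟨0, ⟨le_rfl, ht⟩, fun τ hτ => absurd hτ.1 hτ.2.not_gt,
        fun τ hτ => initial_nonneg.trans (q_mono self_mem_Ici hτ.1.le hτ.1.le)⟩
    obtain ⟨t₀, ht₀, turning⟩ := intermediate_value_Icc ht
      (continuous_inner_pos_vel hV hX).continuousOn ⟨initial_nonpos, final_nonneg⟩
    exact ⟨t₀, ht₀, fun τ hτ => (q_mono hτ.1.le ht₀.1 hτ.2.le).trans_eq turning,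
      fun τ hτ => turning.symm.trans_le (q_mono ht₀.1 (ht₀.1.trans hτ.1.le) hτ.1.le)⟩
  calc lorentz (V t) ≤ lorentz (V t₀) + 2 * c * a ^ (-(1 / 4) : ℝ) :=
        lorentz_le_of_inner_nonneg hV hX ht₀.2 ha hc
          (fun τ hτ => hκ' τ ⟨ht₀.1.trans hτ.1.le, hτ.2.le⟩) outward
    _ ≤ lorentz (V 0) + 2 * c * a ^ (-(1 / 4) : ℝ) := by
        gcongr
        exact lorentz_le_of_inner_nonpos hV ht₀.1 (fun τ hτ => hκ τ hτ.1.le) inward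

end RadialTrajectory

theorem le_mul_add_rpow_of_mul_rpow_le {p κ x y c₀ c₁ : ℝ} (hp : 1 ≤ p) (hκ : 0 ≤ κ) (hx : 0 ≤ x)
    (hy : 0 < y) (h₀ : κ * x ^ p ≤ c₀) (h₁ : κ * y ^ p ≤ c₁) :
    κ ≤ 2 ^ (p - 1) * (c₀ + c₁) * (x + y) ^ (-p) := by
  rw [rpow_neg (by positivity), ← div_eq_mul_inv, le_div_iff₀ (by positivity)]
  calc κ * (x + y) ^ p ≤ κ * (2 ^ (p - 1) * (x ^ p + y ^ p)) := by
        gcongr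
        lift x to NNReal using hx
        lift y to NNReal using hy.le
        exact_mod_cast NNReal.rpow_add_le_mul_rpow_add_rpow x y hp
    _ = 2 ^ (p - 1) * (κ * x ^ p + κ * y ^ p) := by ring
    _ ≤ 2 ^ (p - 1) * (c₀ + c₁) := by gcongr

theorem le_pow_five_of_le_mul_rpow {u A : ℝ} (hu : 0 < u) (h : u ≤ A * u ^ (4 / 5 : ℝ)) :
    u ≤ A ^ 5 := by
  have root_le : u ^ (1 / 5 : ℝ) ≤ A := by
    refine le_of_mul_le_mul_right ?_ (rpow_pos_of_pos hu (4 / 5))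
    rwa [← rpow_add hu, show (1 / 5 + 4 / 5 : ℝ) = 1 by norm_num, rpow_one]
  calc u = (u ^ (1 / 5 : ℝ)) ^ 5 := by
        rw [← rpow_natCast, ← rpow_mul hu.le]
        norm_num
    _ ≤ A ^ 5 := pow_le_pow_left₀ (rpow_pos_of_pos hu _).le root_le 5

theorem capProfile_mul_cube (K : ℝ) (N : ℝ → ℝ) {r : ℝ} (hr : 0 < r) :
    capProfile K N r * r ^ 3 = min (N r) (K * r ^ 3) := by
  have hr3 : 0 < r ^ 3 := by positivity
  rw [capProfile, min_mul_of_nonneg _ _ hr3.le, div_mul_cancel₀ _ hr3.ne']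

/- The force is interpolated between `r ^ (-5 / 2)`, from the energy bound on the mass, and its
maximum `d * u ^ 4`, from the bound on the density; both agree at `r ^ 2 = u ^ (-16 / 5)`. -/
theorem IsShellBounded.capProfile_le_rpow {K c d u r : ℝ} {N : ℝ → ℝ} (hK : 0 ≤ K) (hc : 0 ≤ c)
    (hu : 0 < u) (hr : 0 ≤ r) (hN : IsShellBounded (d * u ^ 4) N)
    (h : 0 < r → min (N r) (K * r ^ 3) ^ 2 ≤ c ^ 2 * r) :
    capProfile K N r ≤ 2 * (c + d) * (r ^ 2 + u ^ (-(16 / 5) : ℝ)) ^ (-(5 / 4) : ℝ) := by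
  have profile_nonneg := capProfile_nonneg hK hN.nonneg hr
  have bound_far : capProfile K N r * (r ^ 2) ^ (5 / 4 : ℝ) ≤ c := by
    rcases hr.eq_or_lt with rfl | hr
    · simpa using hc
    refine (abs_le_of_sq_le_sq' ?_ hc).2
    rw [mul_pow, ← rpow_natCast r 2, ← rpow_mul hr.le, ← rpow_natCast (r ^ _) 2, ← rpow_mul hr.le]
    refine le_of_mul_le_mul_right ?_ hr
    calc capProfile K N r ^ 2 * r ^ ((2 : ℕ) * (5 / 4) * (2 : ℕ) : ℝ) * r
        = (capProfile K N r * r ^ 3) ^ 2 := by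
          rw [show ((2 : ℕ) * (5 / 4) * (2 : ℕ) : ℝ) = (5 : ℕ) by norm_num, rpow_natCast]
          ring
      _ ≤ c ^ 2 * r := by
          rw [capProfile_mul_cube K N hr]
          exact h hr
  have bound_near : capProfile K N r * (u ^ (-(16 / 5) : ℝ)) ^ (5 / 4 : ℝ) ≤ d := by
    rw [← rpow_mul hu.le, show (-(16 / 5) * (5 / 4) : ℝ) = -(4 : ℕ) by norm_num, rpow_neg hu.le,
      rpow_natCast, ← div_eq_mul_inv, div_le_iff₀ (by positivity)]
    exact hN.capProfile_le hr
  have const_nonneg : 0 ≤ c + d :=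
    add_nonneg hc ((mul_nonneg profile_nonneg (by positivity)).trans bound_near)
  calc capProfile K N r
      ≤ 2 ^ (5 / 4 - 1 : ℝ) * (c + d) * (r ^ 2 + u ^ (-(16 / 5) : ℝ)) ^ (-(5 / 4) : ℝ) :=
        le_mul_add_rpow_of_mul_rpow_le (by norm_num) profile_nonneg (sq_nonneg r)
          (rpow_pos_of_pos hu _) bound_far bound_near
    _ ≤ 2 * (c + d) * (r ^ 2 + u ^ (-(16 / 5) : ℝ)) ^ (-(5 / 4) : ℝ) := by
        gcongr
        exact rpow_le_self_of_one_le (by norm_num) (by norm_num)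

/-- The constant, independent of the cap, in the majorant of the capped field which controls the
growth of momenta. -/
def growthConst (D : ℝ) (g : E3 × E3 → ℝ) : ℝ :=
  2 * (√(32 * π * initialEnergy g) + densConst D)

/-- A bound for the growth of momenta, independent of the cap and of time. -/
def velGrowth (D : ℝ) (g : E3 × E3 → ℝ) : ℝ := (2 + 2 * growthConst D g) ^ 5

namespace HasPolynomialDecay

variable {D K T Q t : ℝ} {g : E3 × E3 → ℝ} {E : ℝ → E3 → E3} (hg : HasPolynomialDecay D g)
include hg

theorem growthConst_nonneg : 0 ≤ growthConst D g := by
  have := hg.densConst_nonneg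
  unfold growthConst
  positivity

theorem velGrowth_nonneg : 0 ≤ velGrowth D g := by
  have := hg.growthConst_nonneg
  unfold velGrowth
  positivity

variable (hK : 0 ≤ K) (hE : IsLipschitzField (fieldBound g K) (fieldLip D g K) E)
  (hfix : nextField g K E = E)
include hK hE hfix

theorem norm_vel_le_of_norm_vel_le (hQ : 0 ≤ Q)
    (hV : ∀ t ∈ Icc 0 T, ∀ z, ‖(charFlow E t z).2‖ ≤ ‖z.2‖ + Q) (ht : t ∈ Icc 0 T)
    (z : E3 × E3) :
    ‖(charFlow E t z).2‖ ≤ ‖z.2‖ + (1 + 2 * growthConst D g * (1 + Q) ^ (4 / 5 : ℝ)) := by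
  have hu : 0 < 1 + Q := by linarith
  have profile_nonneg : ∀ τ (x : E3), 0 ≤ capProfile K (flowMass g E τ) ‖x‖ := fun τ x =>
    capProfile_nonneg hK (flowMass_nonneg E τ) (norm_nonneg x)
  have hasDerivAt_vel : ∀ τ, HasDerivAt (fun τ => (charFlow E τ z).2)
      (((4 * π)⁻¹ * capProfile K (flowMass g E τ) ‖(charFlow E τ z).1‖) • (charFlow E τ z).1) τ :=
    fun τ => (hE.hasDerivAt_vel τ z).congr_deriv (congrFun₂ hfix τ (charFlow E τ z).1).symm
  have force_le : ∀ τ ∈ Icc 0 t,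
      (4 * π)⁻¹ * capProfile K (flowMass g E τ) ‖(charFlow E τ z).1‖ ≤
        growthConst D g * (‖(charFlow E τ z).1‖ ^ 2 + (1 + Q) ^ (-(16 / 5) : ℝ)) ^
          (-(5 / 4) : ℝ) := fun τ hτ => by
    have shell : IsShellBounded (densConst D * (1 + Q) ^ 4) (flowMass g E τ) :=
      hg.isShellBounded (hE.measurePreserving_charFlow _) hQ
        (by rw [max_eq_left hτ.1]; exact hV τ ⟨hτ.1, hτ.2.trans ht.2⟩)
    have profile_le : capProfile K (flowMass g E τ) ‖(charFlow E τ z).1‖ ≤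
        growthConst D g * (‖(charFlow E τ z).1‖ ^ 2 + (1 + Q) ^ (-(16 / 5) : ℝ)) ^
          (-(5 / 4) : ℝ) :=
      shell.capProfile_le_rpow hK (sqrt_nonneg _) hu (norm_nonneg _) fun hr => by
        rw [sq_sqrt (mul_nonneg (by positivity) (initialEnergy_nonneg g))]
        exact hg.min_flowMass_sq_le hK hE hfix hτ.1 hr
    have majorant_nonneg := (profile_nonneg τ (charFlow E τ z).1).trans profile_le
    exact inv_four_pi_mul_le majorant_nonneg (profile_le.trans (by linarith))
  have lorentz_le_add := lorentz_le_of_radial_force hasDerivAt_vel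
    (fun τ => hE.hasDerivAt_pos τ z) ht.1 (rpow_pos_of_pos hu _) hg.growthConst_nonneg
    (fun τ _ => mul_nonneg (by positivity) (profile_nonneg τ _)) force_le
  rw [hE.charFlow_zero, ← rpow_mul hu.le,
    show (-(16 / 5) * -(1 / 4) : ℝ) = 4 / 5 by norm_num] at lorentz_le_add
  linarith [norm_le_lorentz (charFlow E t z).2, lorentz_le z.2]

theorem norm_vel_le (ht : 0 ≤ t) (z : E3 × E3) :
    ‖(charFlow E t z).2‖ ≤ ‖z.2‖ + velGrowth D g := by
  set S : Set ℝ := {Q | 0 ≤ Q ∧ ∀ s ∈ Icc 0 t, ∀ z, ‖(charFlow E s z).2‖ ≤ ‖z.2‖ + Q}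
  have S_nonempty : S.Nonempty := ⟨fieldBound g K * t, mul_nonneg (fieldBound_nonneg hK) ht,
    fun s hs z => hE.norm_vel_le (by rw [abs_of_nonneg hs.1]; exact hs.2) z⟩
  have S_bddBelow : BddBelow S := ⟨0, fun Q hQ => hQ.1⟩
  have inf_nonneg : 0 ≤ sInf S := le_csInf S_nonempty fun Q hQ => hQ.1
  have inf_bound : ∀ s ∈ Icc 0 t, ∀ z, ‖(charFlow E s z).2‖ ≤ ‖z.2‖ + sInf S := fun s hs z =>
    sub_le_iff_le_add'.1 (le_csInf S_nonempty fun Q hQ => sub_le_iff_le_add'.2 (hQ.2 s hs z))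
  have hc := hg.growthConst_nonneg
  have inf_le : sInf S ≤ 1 + 2 * growthConst D g * (1 + sInf S) ^ (4 / 5 : ℝ) :=
    csInf_le S_bddBelow ⟨by positivity, fun s hs z =>
      hg.norm_vel_le_of_norm_vel_le hK hE hfix inf_nonneg inf_bound hs z⟩
  have one_le_power : 1 ≤ (1 + sInf S) ^ (4 / 5 : ℝ) :=
    one_le_rpow (by linarith) (by norm_num)
  have inf_le_growth : 1 + sInf S ≤ velGrowth D g :=
    le_pow_five_of_le_mul_rpow (by linarith) (by linarith)
  linarith [inf_bound t ⟨ht, le_rfl⟩ z]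

end HasPolynomialDecay

theorem HasPolynomialDecay.exists_field {D : ℝ} {g : E3 × E3 → ℝ} (hg : HasPolynomialDecay D g) :
    ∃ (B : ℝ) (L : ℝ → ℝ) (E : ℝ → E3 → E3), IsLipschitzField B L E ∧
      ∀ t x, E t x = ((4 * π)⁻¹ * (flowMass g E t ‖x‖ / ‖x‖ ^ 3)) • x := by
  have hd := hg.densConst_nonneg
  have hQ := hg.velGrowth_nonneg
  set K := densConst D * (1 + velGrowth D g) ^ 4
  have hK : 0 ≤ K := by positivity
  obtain ⟨E, hE, hfix⟩ := hg.exists_nextField_eq_self hK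
  refine ⟨_, _, E, hE, fun t x => ?_⟩
  -- The cap `K` equals the density bound given by the growth of momenta, so it is never active.
  have shell : IsShellBounded K (flowMass g E t) :=
    hg.isShellBounded (hE.measurePreserving_charFlow _) hQ
      (hg.norm_vel_le hK hE hfix (le_max_right _ _))
  conv_lhs => rw [← hfix]
  rw [nextField, capField, capProfile, min_eq_left (shell.div_cube_le (norm_nonneg x))]

end MomentumGrowth

section SobolevDecay

open ENNReal

theorem enorm_le_lintegral_add {F : Type*} [NormedAddCommGroup F] [NormedSpace ℝ F]
    [CompleteSpace F] {u u' : ℝ → F} (hu : ∀ t, HasDerivAt u (u' t) t) (hu' : Continuous u')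
    (c : ℝ) :
    ‖u c‖ₑ ≤ (∫⁻ t in Icc c (c + 1), ‖u t‖ₑ) + ∫⁻ t in Icc c (c + 1), ‖u' t‖ₑ := by
  have pointwise : ∀ t ∈ Icc c (c + 1), ‖u c‖ₑ ≤ ‖u t‖ₑ + ∫⁻ t in Icc c (c + 1), ‖u' t‖ₑ := by
    intro t ht
    have increment_le : ‖u t - u c‖ₑ ≤ ∫⁻ t in Icc c (c + 1), ‖u' t‖ₑ := by
      rw [← intervalIntegral.integral_eq_sub_of_hasDerivAt (fun r _ => hu r)
        (hu'.intervalIntegrable _ _), intervalIntegral.integral_of_le ht.1]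
      exact (enorm_integral_le_lintegral_enorm _).trans
        (lintegral_mono_set fun r hr => ⟨hr.1.le, hr.2.trans ht.2⟩)
    calc ‖u c‖ₑ = ‖u t - (u t - u c)‖ₑ := by rw [_root_.sub_sub_cancel]
      _ ≤ ‖u t‖ₑ + ‖u t - u c‖ₑ := enorm_sub_le
      _ ≤ ‖u t‖ₑ + ∫⁻ t in Icc c (c + 1), ‖u' t‖ₑ := by gcongr
  calc ‖u c‖ₑ = ∫⁻ _ in Icc c (c + 1), ‖u c‖ₑ := by simp
    _ ≤ ∫⁻ t in Icc c (c + 1), (‖u t‖ₑ + ∫⁻ t in Icc c (c + 1), ‖u' t‖ₑ) :=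
      setLIntegral_mono' measurableSet_Icc pointwise
    _ = (∫⁻ t in Icc c (c + 1), ‖u t‖ₑ) + ∫⁻ t in Icc c (c + 1), ‖u' t‖ₑ := by
      rw [lintegral_add_right _ measurable_const]
      simp

section Jet

variable {Z F : Type*} [NormedAddCommGroup Z] [NormedSpace ℝ Z] [NormedAddCommGroup F]
  [NormedSpace ℝ F]

/-- The sum of the norms of the derivatives of `g` of order at most `k`, the pointwise size of its
`k`-jet. -/
def jetNorm (g : Z → F) (k : ℕ) (z : Z) : ℝ≥0∞ :=
  ∑ n ∈ Finset.range (k + 1), ‖iteratedFDeriv ℝ n g z‖ₑ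

theorem jetNorm_zero (g : Z → F) (z : Z) : jetNorm g 0 z = ‖g z‖ₑ := by
  simp only [jetNorm, zero_add, Finset.sum_range_one]
  rw [← ofReal_norm, ← ofReal_norm, norm_iteratedFDeriv_zero]

variable {g : Z → F} {k m n : ℕ}

theorem continuous_jetNorm (hg : ContDiff ℝ k g) : Continuous (jetNorm g k) :=
  continuous_finsetSum _ fun _ hn => (hg.continuous_iteratedFDeriv
    (by exact_mod_cast Nat.lt_succ_iff.1 (Finset.mem_range.1 hn))).enorm

theorem enorm_iteratedFDeriv_le_lintegral_add [CompleteSpace F] (hg : ContDiff ℝ m g) (hn : n < m)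
    (z : Z) {e : Z} (he : ‖e‖ ≤ 1) (c : ℝ) :
    ‖iteratedFDeriv ℝ n g (z + c • e)‖ₑ ≤
      (∫⁻ t in Icc c (c + 1), ‖iteratedFDeriv ℝ n g (z + t • e)‖ₑ) +
        ∫⁻ t in Icc c (c + 1), ‖iteratedFDeriv ℝ (n + 1) g (z + t • e)‖ₑ := by
  have hasDerivAt_line : ∀ t : ℝ, HasDerivAt (fun t : ℝ => z + t • e) e t := fun t => by
    simpa using ((hasDerivAt_id t).smul_const e).const_add z
  have hasDerivAt_deriv : ∀ t : ℝ, HasDerivAt (fun t : ℝ => iteratedFDeriv ℝ n g (z + t • e))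
      (fderiv ℝ (iteratedFDeriv ℝ n g) (z + t • e) e) t := fun t =>
    (hg.differentiable_iteratedFDeriv (by exact_mod_cast hn) _).hasFDerivAt.comp_hasDerivAt t
      (hasDerivAt_line t)
  have deriv_contDiff : ContDiff ℝ 1 (iteratedFDeriv ℝ n g) :=
    hg.iteratedFDeriv_right (by exact_mod_cast (by omega : 1 + n ≤ m))
  refine (enorm_le_lintegral_add hasDerivAt_deriv
    (((deriv_contDiff.continuous_fderiv one_ne_zero).comp (by fun_prop)).clm_apply
      continuous_const) c).trans ?_
  gcongr with t
  refine enorm_le_iff_norm_le.2 ?_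
  rw [← norm_fderiv_iteratedFDeriv]
  exact (ContinuousLinearMap.le_opNorm _ _).trans (mul_le_of_le_one_right (norm_nonneg _) he)

theorem jetNorm_le_lintegral [CompleteSpace F] (hg : ContDiff ℝ m g) (hk : k < m) (z : Z) {e : Z}
    (he : ‖e‖ ≤ 1) (c : ℝ) :
    jetNorm g k (z + c • e) ≤ 2 * ∫⁻ t in Icc c (c + 1), jetNorm g (k + 1) (z + t • e) := by
  have measurable_deriv : ∀ n ≤ m,
      Measurable fun t : ℝ => ‖iteratedFDeriv ℝ n g (z + t • e)‖ₑ := fun n hn =>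
    ((hg.continuous_iteratedFDeriv (by exact_mod_cast hn)).comp (by fun_prop)).enorm.measurable
  calc jetNorm g k (z + c • e)
      ≤ ∑ n ∈ Finset.range (k + 1),
          ((∫⁻ t in Icc c (c + 1), ‖iteratedFDeriv ℝ n g (z + t • e)‖ₑ) +
            ∫⁻ t in Icc c (c + 1), ‖iteratedFDeriv ℝ (n + 1) g (z + t • e)‖ₑ) :=
        Finset.sum_le_sum fun n hn => enorm_iteratedFDeriv_le_lintegral_add hg
          ((Finset.mem_range.1 hn).trans_le hk) z he c
    _ = (∫⁻ t in Icc c (c + 1), jetNorm g k (z + t • e)) +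
          ∫⁻ t in Icc c (c + 1), ∑ n ∈ Finset.range (k + 1),
            ‖iteratedFDeriv ℝ (n + 1) g (z + t • e)‖ₑ := by
        simp only [jetNorm]
        rw [Finset.sum_add_distrib,
          lintegral_finsetSum _ fun n hn => measurable_deriv n
            ((Finset.mem_range.1 hn).le.trans hk),
          lintegral_finsetSum _ fun n hn => measurable_deriv (n + 1)
            ((Finset.mem_range.1 hn).trans_le hk)]
    _ ≤ (∫⁻ t in Icc c (c + 1), jetNorm g (k + 1) (z + t • e)) +
          ∫⁻ t in Icc c (c + 1), jetNorm g (k + 1) (z + t • e) := by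
        gcongr with t t
        · exact Finset.sum_le_sum_of_subset (Finset.range_mono (by omega))
        · rw [jetNorm, Finset.sum_range_succ' _ (k + 1)]
          exact le_self_add
    _ = 2 * ∫⁻ t in Icc c (c + 1), jetNorm g (k + 1) (z + t • e) := (two_mul _).symm

end Jet

/-- The point of phase space with given position and momentum coordinates. -/
def phaseCoord (p : Fin 3 ⊕ Fin 3 → ℝ) : E3 × E3 :=
  (WithLp.toLp 2 fun i => p (.inl i), WithLp.toLp 2 fun i => p (.inr i))

theorem measurePreserving_phaseCoord : MeasurePreserving phaseCoord :=
  ((PiLp.volume_preserving_toLp (Fin 3)).prod (PiLp.volume_preserving_toLp (Fin 3))).comp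
    (volume_measurePreserving_sumPiEquivProdPi fun _ : Fin 3 ⊕ Fin 3 => ℝ)

theorem continuous_phaseCoord : Continuous phaseCoord :=
  ((PiLp.continuous_toLp 2 _).comp (by fun_prop)).prodMk
    ((PiLp.continuous_toLp 2 _).comp (by fun_prop))

theorem surjective_phaseCoord : Function.Surjective phaseCoord := fun z =>
  ⟨Sum.elim (fun i => z.1 i) fun i => z.2 i, rfl⟩

theorem phaseCoord_update (p : Fin 3 ⊕ Fin 3 → ℝ) (i : Fin 3 ⊕ Fin 3) (t : ℝ) :
    phaseCoord (Function.update p i t) =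
      phaseCoord (Function.update p i 0) + t • phaseCoord (Pi.single i 1) := by
  rcases i with i | i <;> refine Prod.ext ?_ ?_ <;> ext j <;>
    by_cases h : j = i <;> simp [phaseCoord, Function.update_apply, Pi.single_apply, h]

theorem norm_phaseCoord_single (i : Fin 3 ⊕ Fin 3) : ‖phaseCoord (Pi.single i 1)‖ ≤ 1 := by
  rcases i with i | i <;>
    simp [phaseCoord, Prod.norm_def, EuclideanSpace.norm_eq, Pi.single_apply]

section JetOnCube

variable {F : Type*} [NormedAddCommGroup F] [NormedSpace ℝ F] [CompleteSpace F] {g : E3 × E3 → F}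

-- Each coordinate over which one integrates costs one derivative.
theorem jetNorm_le_lmarginal {m : ℕ} (hg : ContDiff ℝ m g) (p : Fin 3 ⊕ Fin 3 → ℝ)
    (s : Finset (Fin 3 ⊕ Fin 3)) (hs : s.card ≤ m) :
    jetNorm g 0 (phaseCoord p) ≤ 2 ^ s.card *
      (∫⋯∫⁻_s, fun q => jetNorm g s.card (phaseCoord q)
        ∂fun i => volume.restrict (Icc (p i) (p i + 1))) p := by
  classical
  induction s using Finset.induction_on with
  | empty => simp
  | insert i s hi ih =>
    rw [Finset.card_insert_of_notMem hi] at hs ⊢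
    refine (ih (by omega)).trans ?_
    rw [lmarginal_insert' (fun q => jetNorm g (s.card + 1) (phaseCoord q))
      (((continuous_jetNorm (hg.of_le (by exact_mod_cast hs))).comp
        continuous_phaseCoord).measurable) hi, pow_succ, mul_assoc]
    gcongr
    unfold lmarginal
    rw [← lintegral_const_mul' _ _ (by simp)]
    refine lintegral_mono fun y => ?_
    set q := Function.updateFinset p s y with hq
    have coord_eq : q i = p i := by simp [hq, Function.updateFinset, hi]
    have line_bound := jetNorm_le_lintegral hg hs (phaseCoord (Function.update q i 0))
      (norm_phaseCoord_single i) (p i)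
    simp only [← phaseCoord_update] at line_bound
    rwa [← coord_eq, Function.update_eq_self, coord_eq] at line_bound

theorem enorm_le_setLIntegral_jetNorm (hg : ContDiff ℝ 6 g) (p : Fin 3 ⊕ Fin 3 → ℝ) :
    ‖g (phaseCoord p)‖ₑ ≤ 2 ^ 6 *
      ∫⁻ q in univ.pi fun i => Icc (p i) (p i + 1), jetNorm g 6 (phaseCoord q) := by
  have marginal_bound := jetNorm_le_lmarginal (m := 6) (by exact_mod_cast hg) p Finset.univ
    (by simp)
  rw [lmarginal_univ, jetNorm_zero] at marginal_bound
  rw [volume_pi, Measure.restrict_pi_pi]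
  simpa using marginal_bound

end JetOnCube

/-- The weight `1 + |x| + |v|` on phase space. It is extended-valued so that the weighted Sobolev
inequality can be stated with lower Lebesgue integrals. -/
def phaseWeight (z : E3 × E3) : ℝ≥0∞ := 1 + ‖z.1‖ₑ + ‖z.2‖ₑ

theorem phaseWeight_eq_ofReal (z : E3 × E3) :
    phaseWeight z = ENNReal.ofReal (1 + ‖z.1‖ + ‖z.2‖) := by
  rw [ENNReal.ofReal_add (by positivity) (by positivity),
    ENNReal.ofReal_add zero_le_one (by positivity), ofReal_norm, ofReal_norm, ENNReal.ofReal_one,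
    phaseWeight]

theorem continuous_phaseWeight : Continuous phaseWeight := by
  unfold phaseWeight
  fun_prop

theorem norm_toLp_sub_toLp_le_two {a b : Fin 3 → ℝ} (h : ∀ i, b i ∈ Icc (a i) (a i + 1)) :
    ‖(WithLp.toLp 2 a : E3) - WithLp.toLp 2 b‖ ≤ 2 := by
  have coord_le : ∀ i, (a i - b i) ^ 2 ≤ 1 := fun i => by
    rw [sq_le_one_iff_abs_le_one, abs_le]
    constructor <;> linarith [(h i).1, (h i).2]
  rw [EuclideanSpace.norm_eq, Real.sqrt_le_iff]
  refine ⟨by norm_num, ?_⟩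
  simp only [PiLp.sub_apply, Real.norm_eq_abs, sq_abs, Fin.sum_univ_three]
  linarith [coord_le 0, coord_le 1, coord_le 2]

theorem phaseWeight_le_five_mul {p q : Fin 3 ⊕ Fin 3 → ℝ} (h : ∀ i, q i ∈ Icc (p i) (p i + 1)) :
    phaseWeight (phaseCoord p) ≤ 5 * phaseWeight (phaseCoord q) := by
  have pos_le : ‖(phaseCoord p).1‖ ≤ ‖(phaseCoord q).1‖ + 2 := sub_le_iff_le_add'.1
    ((norm_sub_norm_le _ _).trans (norm_toLp_sub_toLp_le_two fun i => h (.inl i)))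
  have vel_le : ‖(phaseCoord p).2‖ ≤ ‖(phaseCoord q).2‖ + 2 := sub_le_iff_le_add'.1
    ((norm_sub_norm_le _ _).trans (norm_toLp_sub_toLp_le_two fun i => h (.inr i)))
  rw [phaseWeight_eq_ofReal, phaseWeight_eq_ofReal, ← ENNReal.ofReal_ofNat 5,
    ← ENNReal.ofReal_mul (by norm_num)]
  refine ENNReal.ofReal_le_ofReal ?_
  linarith [norm_nonneg (phaseCoord q).1, norm_nonneg (phaseCoord q).2]

section WeightedJet

variable {F : Type*} [NormedAddCommGroup F] [NormedSpace ℝ F] {g : E3 × E3 → F} {N : ℕ}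

theorem phaseWeight_pow_mul_jetNorm_le {p q : Fin 3 ⊕ Fin 3 → ℝ}
    (hq : ∀ i, q i ∈ Icc (p i) (p i + 1)) (k : ℕ) :
    phaseWeight (phaseCoord p) ^ N * jetNorm g k (phaseCoord q) ≤
      5 ^ N * (1 + (phaseWeight (phaseCoord q) ^ N * jetNorm g k (phaseCoord q)) ^ 2) := by
  have le_one_add_sq : ∀ a : ℝ≥0∞, a ≤ 1 + a ^ 2 := fun a => by
    rcases le_total a 1 with h | h
    · exact h.trans le_self_add
    · exact (le_self_pow₀ h two_ne_zero).trans le_add_self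
  calc phaseWeight (phaseCoord p) ^ N * jetNorm g k (phaseCoord q)
      ≤ (5 * phaseWeight (phaseCoord q)) ^ N * jetNorm g k (phaseCoord q) := by
        gcongr
        exact phaseWeight_le_five_mul hq
    _ = 5 ^ N * (phaseWeight (phaseCoord q) ^ N * jetNorm g k (phaseCoord q)) := by
        rw [mul_pow, mul_assoc]
    _ ≤ _ := by gcongr; exact le_one_add_sq _

theorem phaseWeight_pow_mul_enorm_le [CompleteSpace F] (hg : ContDiff ℝ 6 g) (z : E3 × E3) :
    phaseWeight z ^ N * ‖g z‖ₑ ≤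
      2 ^ 6 * 5 ^ N * (1 + ∫⁻ z, (phaseWeight z ^ N * jetNorm g 6 z) ^ 2) := by
  obtain ⟨p, rfl⟩ := surjective_phaseCoord z
  have continuous_jet : Continuous (jetNorm g 6) := continuous_jetNorm (by exact_mod_cast hg)
  set Q := univ.pi fun i => Icc (p i) (p i + 1)
  have cube_measurable : MeasurableSet Q := MeasurableSet.univ_pi fun _ => measurableSet_Icc
  have cube_volume : volume Q = 1 := by
    rw [volume_pi_pi]
    simp
  have weight_ne_top : phaseWeight (phaseCoord p) ^ N ≠ ⊤ := by
    rw [phaseWeight_eq_ofReal]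
    exact ENNReal.pow_ne_top ENNReal.ofReal_ne_top
  calc phaseWeight (phaseCoord p) ^ N * ‖g (phaseCoord p)‖ₑ
      ≤ phaseWeight (phaseCoord p) ^ N * (2 ^ 6 * ∫⁻ q in Q, jetNorm g 6 (phaseCoord q)) := by
        gcongr
        exact enorm_le_setLIntegral_jetNorm hg p
    _ = 2 ^ 6 * ∫⁻ q in Q, phaseWeight (phaseCoord p) ^ N * jetNorm g 6 (phaseCoord q) := by
        rw [lintegral_const_mul' _ _ weight_ne_top]
        ring
    _ ≤ 2 ^ 6 * ∫⁻ q in Q, 5 ^ N *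
          (1 + (phaseWeight (phaseCoord q) ^ N * jetNorm g 6 (phaseCoord q)) ^ 2) := by
        gcongr 2 ^ 6 * ?_
        exact setLIntegral_mono' cube_measurable fun q hq =>
          phaseWeight_pow_mul_jetNorm_le (fun i => hq i trivial) 6
    _ = 2 ^ 6 * 5 ^ N *
          (1 + ∫⁻ q in Q, (phaseWeight (phaseCoord q) ^ N * jetNorm g 6 (phaseCoord q)) ^ 2) := by
        rw [lintegral_const_mul' _ _ (by simp), lintegral_add_left measurable_const]
        simp [cube_volume, mul_assoc]
    _ ≤ 2 ^ 6 * 5 ^ N * (1 + ∫⁻ z, (phaseWeight z ^ N * jetNorm g 6 z) ^ 2) := by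
        gcongr
        exact (setLIntegral_le_lintegral _ _).trans (measurePreserving_phaseCoord.lintegral_comp
          (((continuous_phaseWeight.measurable.pow_const N).mul
            continuous_jet.measurable).pow_const 2)).le

theorem lintegral_phaseWeight_pow_mul_jetNorm_sq_lt_top {k : ℕ}
    (hdec : ∀ n ≤ k, MemLp (fun z : E3 × E3 =>
      (1 + ‖z.1‖ + ‖z.2‖) ^ N * ‖iteratedFDeriv ℝ n g z‖) 2 volume) :
    ∫⁻ z, (phaseWeight z ^ N * jetNorm g k z) ^ 2 < ⊤ := by
  have sum_memLp := memLp_finsetSum (Finset.range (k + 1)) fun n hn =>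
    hdec n (Nat.lt_succ_iff.1 (Finset.mem_range.1 hn))
  have enorm_sum : ∀ z : E3 × E3, ‖∑ n ∈ Finset.range (k + 1),
      (1 + ‖z.1‖ + ‖z.2‖) ^ N * ‖iteratedFDeriv ℝ n g z‖‖ₑ = phaseWeight z ^ N * jetNorm g k z :=
    fun z => by
      rw [← Finset.mul_sum, enorm_mul, enorm_pow, Real.enorm_eq_ofReal (by positivity),
        Real.enorm_eq_ofReal (by positivity), ← phaseWeight_eq_ofReal,
        ENNReal.ofReal_sum_of_nonneg fun n _ => norm_nonneg _]
      simp only [ofReal_norm, jetNorm]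
  simpa [enorm_sum] using
    (eLpNorm_lt_top_iff_lintegral_rpow_enorm_lt_top two_ne_zero ofNat_ne_top).1 sum_memLp.2

end WeightedJet

theorem exists_hasPolynomialDecay {g : E3 × E3 → ℝ} {N : ℕ} (hN : 9 ≤ N)
    (hg : ContDiff ℝ 6 g) (hg0 : ∀ z, 0 ≤ g z)
    (hdec : ∀ n ≤ 6, MemLp (fun z : E3 × E3 =>
      (1 + ‖z.1‖ + ‖z.2‖) ^ N * ‖iteratedFDeriv ℝ n g z‖) 2 volume) :
    ∃ D, HasPolynomialDecay D g := by
  set C := 2 ^ 6 * 5 ^ N * (1 + ∫⁻ z, (phaseWeight z ^ N * jetNorm g 6 z) ^ 2)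
  have C_ne_top : C ≠ ⊤ := ENNReal.mul_ne_top (by finiteness) (ENNReal.add_ne_top.2
    ⟨one_ne_top, (lintegral_phaseWeight_pow_mul_jetNorm_sq_lt_top hdec).ne⟩)
  refine ⟨C.toReal, hg.continuous, hg0, fun z => ?_⟩
  have weighted_le : (1 + ‖z.1‖ + ‖z.2‖) ^ N * g z ≤ C.toReal := by
    rw [← ENNReal.ofReal_le_iff_le_toReal C_ne_top, ENNReal.ofReal_mul (by positivity),
      ENNReal.ofReal_pow (by positivity), ← phaseWeight_eq_ofReal, ← Real.enorm_eq_ofReal (hg0 z)]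
    exact phaseWeight_pow_mul_enorm_le hg z
  have weight_le : (1 + ‖z.1‖) ^ 4 * (1 + ‖z.2‖) ^ 5 ≤ (1 + ‖z.1‖ + ‖z.2‖) ^ N :=
    calc (1 + ‖z.1‖) ^ 4 * (1 + ‖z.2‖) ^ 5
        ≤ (1 + ‖z.1‖ + ‖z.2‖) ^ 4 * (1 + ‖z.1‖ + ‖z.2‖) ^ 5 := by
          gcongr ?_ ^ 4 * ?_ ^ 5 <;> linarith [norm_nonneg z.1, norm_nonneg z.2]
      _ = (1 + ‖z.1‖ + ‖z.2‖) ^ 9 := by ring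
      _ ≤ (1 + ‖z.1‖ + ‖z.2‖) ^ N :=
          pow_le_pow_right₀ (by linarith [norm_nonneg z.1, norm_nonneg z.2]) hN
  rw [mul_assoc, ← mul_inv, ← div_eq_mul_inv, le_div_iff₀ (by positivity), mul_comm]
  exact (mul_le_mul_of_nonneg_right weight_le (hg0 z)).trans weighted_le

end SobolevDecay

section ShellTheorem

open ENNReal

theorem lintegral_comp_sq_add_sq (F : ℝ → ℝ≥0∞) (hF : Measurable F) :
    ∫⁻ w : ℝ × ℝ, F (w.1 ^ 2 + w.2 ^ 2) =
      ENNReal.ofReal (2 * π) * ∫⁻ r in Ioi 0, ENNReal.ofReal r * F (r ^ 2) := by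
  have sq_add_sq : ∀ p : ℝ × ℝ,
      (polarCoord.symm p).1 ^ 2 + (polarCoord.symm p).2 ^ 2 = p.1 ^ 2 := fun p => by
    simp only [polarCoord_symm_apply]
    linear_combination p.1 ^ 2 * Real.sin_sq_add_cos_sq p.2
  rw [← lintegral_comp_polarCoord_symm]
  simp only [sq_add_sq, polarCoord_target, smul_eq_mul]
  rw [Measure.volume_eq_prod, ← Measure.prod_restrict,
    lintegral_prod _ (Measurable.aemeasurable (by fun_prop))]
  simp only [lintegral_const, Measure.restrict_apply MeasurableSet.univ, univ_inter,
    Real.volume_Ioo]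
  rw [lintegral_mul_const _ (by fun_prop), mul_comm]
  congr 2
  ring

theorem image_sqrt_sq_add_sq_Ioi (z : ℝ) : (fun r => √(z ^ 2 + r ^ 2)) '' Ioi 0 = Ioi |z| := by
  ext σ
  simp only [mem_image, mem_Ioi]
  constructor
  · rintro ⟨r, hr, rfl⟩
    rw [Real.lt_sqrt (abs_nonneg z), sq_abs]
    linarith [pow_pos hr 2]
  · intro hσ
    have sq_sub_pos : 0 < σ ^ 2 - z ^ 2 := sub_pos.2 (sq_lt_sq' (neg_lt_of_abs_lt hσ)
      (lt_of_abs_lt hσ))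
    refine ⟨√(σ ^ 2 - z ^ 2), Real.sqrt_pos.2 sq_sub_pos, ?_⟩
    rw [Real.sq_sqrt sq_sub_pos.le, add_sub_cancel, Real.sqrt_sq ((abs_nonneg z).trans hσ.le)]

theorem lintegral_Ioi_comp_sqrt_sq_add_sq (z : ℝ) (F : ℝ → ℝ≥0∞) :
    ∫⁻ r in Ioi 0, ENNReal.ofReal r * F √(z ^ 2 + r ^ 2) =
      ∫⁻ σ in Ioi |z|, ENNReal.ofReal σ * F σ := by
  have sum_pos : ∀ r ∈ Ioi (0 : ℝ), 0 < z ^ 2 + r ^ 2 := fun r hr => by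
    have hr : 0 < r := hr
    positivity
  have hasDerivAt_sqrt : ∀ r ∈ Ioi (0 : ℝ),
      HasDerivWithinAt (fun r => √(z ^ 2 + r ^ 2)) (r / √(z ^ 2 + r ^ 2)) (Ioi 0) r := by
    intro r hr
    refine ((((hasDerivAt_pow 2 r).const_add (z ^ 2)).sqrt
      (sum_pos r hr).ne').hasDerivWithinAt).congr_deriv ?_
    field_simp
    norm_num
  have injOn_sqrt : InjOn (fun r => √(z ^ 2 + r ^ 2)) (Ioi 0) := fun a ha b hb hab =>
    (pow_left_inj₀ (mem_Ioi.1 ha).le (mem_Ioi.1 hb).le two_ne_zero).1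
      (add_left_cancel ((Real.sqrt_inj (sum_pos a ha).le (sum_pos b hb).le).1 hab))
  rw [← image_sqrt_sq_add_sq_Ioi,
    lintegral_image_eq_lintegral_abs_deriv_mul measurableSet_Ioi hasDerivAt_sqrt injOn_sqrt]
  refine setLIntegral_congr_fun measurableSet_Ioi fun r hr => ?_
  have sqrt_pos := Real.sqrt_pos.2 (sum_pos r hr)
  have hr : 0 < r := hr
  rw [← mul_assoc, ← ENNReal.ofReal_mul (abs_nonneg _), abs_of_pos (by positivity),
    div_mul_cancel₀ _ sqrt_pos.ne']

/-- The pairs `(|y|, y₀)` of norm and first coordinate taken by points `y` of space off the axis of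
that coordinate. -/
def zone : Set (ℝ × ℝ) := {q | |q.2| < q.1}

theorem measurableSet_zone : MeasurableSet zone := measurableSet_lt (by fun_prop) (by fun_prop)

/-- The joint law of the norm and the first coordinate under Lebesgue measure on space, see
`map_norm_coord`. -/
def zonalMeasure : Measure (ℝ × ℝ) :=
  (volume.restrict zone).withDensity fun q => ENNReal.ofReal (2 * π * q.1)

theorem measurable_norm_coord : Measurable fun y : E3 => (‖y‖, y 0) := by fun_prop

theorem lintegral_plane_section (F : ℝ × ℝ → ℝ≥0∞) (hF : Measurable F) (z : ℝ) :
    ∫⁻ w : ℝ × ℝ, F (√(z ^ 2 + (w.1 ^ 2 + w.2 ^ 2)), z) =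
      ∫⁻ σ, zone.indicator (fun q => ENNReal.ofReal (2 * π * q.1) * F q) (σ, z) := by
  rw [lintegral_comp_sq_add_sq (fun a => F (√(z ^ 2 + a), z)) (by fun_prop),
    lintegral_Ioi_comp_sqrt_sq_add_sq z fun σ => F (σ, z), ← lintegral_const_mul _ (by fun_prop),
    ← lintegral_indicator measurableSet_Ioi]
  refine lintegral_congr fun σ => ?_
  by_cases h : |z| < σ
  · rw [indicator_of_mem (mem_Ioi.2 h), indicator_of_mem (show (σ, z) ∈ zone from h), ← mul_assoc,
      ← ENNReal.ofReal_mul (by positivity)]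
  · rw [indicator_of_notMem (notMem_Ioi.2 (not_lt.1 h)),
      indicator_of_notMem (show (σ, z) ∉ zone from h)]

theorem lintegral_norm_coord (F : ℝ × ℝ → ℝ≥0∞) (hF : Measurable F) :
    ∫⁻ y : E3, F (‖y‖, y 0) = ∫⁻ q, F q ∂zonalMeasure := by
  have measurePreserving_split : MeasurePreserving (fun y : E3 => (y 0, (y 1, y 2))) :=
    ((MeasurePreserving.id volume).prod (volume_preserving_finTwoArrow ℝ)).comp
      ((volume_preserving_piFinSuccAbove (fun _ : Fin 3 => ℝ) 0).comp
        (PiLp.volume_preserving_ofLp (Fin 3)))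
  have norm_eq : ∀ y : E3, F (‖y‖, y 0) = F (√(y 0 ^ 2 + (y 1 ^ 2 + y 2 ^ 2)), y 0) := fun y => by
    simp [EuclideanSpace.norm_eq, Fin.sum_univ_three, add_assoc]
  have measurable_split :
      Measurable fun w : ℝ × ℝ × ℝ => F (√(w.1 ^ 2 + (w.2.1 ^ 2 + w.2.2 ^ 2)), w.1) := by
    fun_prop
  have measurable_zonal :
      Measurable (zone.indicator fun q => ENNReal.ofReal (2 * π * q.1) * F q) :=
    Measurable.indicator (by fun_prop) measurableSet_zone
  calc ∫⁻ y : E3, F (‖y‖, y 0)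
      = ∫⁻ w : ℝ × ℝ × ℝ, F (√(w.1 ^ 2 + (w.2.1 ^ 2 + w.2.2 ^ 2)), w.1) := by
        simp only [norm_eq]
        exact measurePreserving_split.lintegral_comp measurable_split
    _ = ∫⁻ z, ∫⁻ σ, zone.indicator (fun q => ENNReal.ofReal (2 * π * q.1) * F q) (σ, z) := by
        rw [Measure.volume_eq_prod, lintegral_prod _ measurable_split.aemeasurable]
        exact lintegral_congr (lintegral_plane_section F hF)
    _ = ∫⁻ q in zone, ENNReal.ofReal (2 * π * q.1) * F q := by
        rw [← lintegral_prod_symm _ measurable_zonal.aemeasurable, ← Measure.volume_eq_prod,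
          lintegral_indicator measurableSet_zone]
    _ = ∫⁻ q, F q ∂zonalMeasure := by
        rw [zonalMeasure, lintegral_withDensity_eq_lintegral_mul _ (by fun_prop) hF]
        rfl

theorem map_norm_coord : (volume : Measure E3).map (fun y => (‖y‖, y 0)) = zonalMeasure :=
  Measure.ext_of_lintegral _ fun F hF => by
    rw [lintegral_map hF measurable_norm_coord, lintegral_norm_coord F hF]

section ZonalIntegral

variable {F : ℝ × ℝ → ℝ}

theorem toReal_ofReal_smul_eqOn_zone :
    EqOn (fun q => (ENNReal.ofReal (2 * π * q.1)).toReal • F q) (fun q => 2 * π * q.1 * F q)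
      zone := fun q hq => by
  have norm_pos : 0 < q.1 := (abs_nonneg _).trans_lt hq
  simp only [ENNReal.toReal_ofReal (show 0 ≤ 2 * π * q.1 by positivity), smul_eq_mul]

theorem integrable_zonalMeasure_iff :
    Integrable F zonalMeasure ↔ IntegrableOn (fun q => 2 * π * q.1 * F q) zone := by
  rw [zonalMeasure, integrable_withDensity_iff_integrable_smul' (by fun_prop) (by simp)]
  exact integrableOn_congr_fun toReal_ofReal_smul_eqOn_zone measurableSet_zone

theorem integral_zonalMeasure : ∫ q, F q ∂zonalMeasure = ∫ q in zone, 2 * π * q.1 * F q := by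
  rw [zonalMeasure, integral_withDensity_eq_integral_toReal_smul (by fun_prop) (by simp)]
  exact setIntegral_congr_fun measurableSet_zone toReal_ofReal_smul_eqOn_zone

theorem integral_indicator_zone (σ : ℝ) :
    ∫ z, zone.indicator (fun q => 2 * π * q.1 * F q) (σ, z) =
      (Ioi 0).indicator (fun σ => 2 * π * σ * ∫ z in -σ..σ, F (σ, z)) σ := by
  rcases lt_or_ge 0 σ with hσ | hσ
  · rw [indicator_of_mem (mem_Ioi.2 hσ), intervalIntegral.integral_of_le (by linarith),
      integral_Ioc_eq_integral_Ioo, ← integral_const_mul, ← integral_indicator measurableSet_Ioo]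
    simp [indicator_apply, zone, abs_lt]
  · rw [indicator_of_notMem (notMem_Ioi.2 hσ)]
    refine integral_eq_zero_of_ae (.of_forall fun z => indicator_of_notMem (fun h => ?_) _)
    exact hσ.not_gt ((abs_nonneg z).trans_lt h)

theorem integral_norm_coord (hF : Measurable F) (hi : Integrable fun y : E3 => F (‖y‖, y 0)) :
    ∫ y : E3, F (‖y‖, y 0) = ∫ σ in Ioi 0, 2 * π * σ * ∫ z in -σ..σ, F (σ, z) := by
  have integrableOn_zone : IntegrableOn (fun q => 2 * π * q.1 * F q) zone := by
    rw [← integrable_zonalMeasure_iff, ← map_norm_coord]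
    exact (integrable_map_measure hF.aestronglyMeasurable measurable_norm_coord.aemeasurable).2 hi
  rw [← integral_map measurable_norm_coord.aemeasurable hF.aestronglyMeasurable, map_norm_coord,
    integral_zonalMeasure, ← integral_indicator measurableSet_zone, Measure.volume_eq_prod,
    integral_prod _ (integrableOn_zone.integrable_indicator measurableSet_zone),
    ← integral_indicator measurableSet_Ioi]
  simp only [integral_indicator_zone]

theorem integral_norm_coord_congr {G : ℝ × ℝ → ℝ} (hF : Measurable F) (hG : Measurable G)
    (hFi : Integrable fun y : E3 => F (‖y‖, y 0)) (hGi : Integrable fun y : E3 => G (‖y‖, y 0))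
    {R : ℝ} (h : ∀ σ, 0 < σ → σ ≠ R → ∫ z in -σ..σ, F (σ, z) = ∫ z in -σ..σ, G (σ, z)) :
    ∫ y : E3, F (‖y‖, y 0) = ∫ y : E3, G (‖y‖, y 0) := by
  rw [integral_norm_coord hF hFi, integral_norm_coord hG hGi]
  refine setIntegral_congr_ae measurableSet_Ioi ?_
  filter_upwards [Measure.ae_ne volume R] with σ hne hσ
  rw [h σ hσ hne]

end ZonalIntegral

theorem hasDerivAt_coulombPrimitive {R σ z : ℝ} (hR : 0 < R)
    (hpos : 0 < R ^ 2 - 2 * R * z + σ ^ 2) :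
    HasDerivAt (fun z => (2 * R ^ 2)⁻¹ * (-√(R ^ 2 - 2 * R * z + σ ^ 2) +
        (R ^ 2 - σ ^ 2) / √(R ^ 2 - 2 * R * z + σ ^ 2)))
      ((R - z) / √(R ^ 2 - 2 * R * z + σ ^ 2) ^ 3) z := by
  have sqrt_pos := Real.sqrt_pos.2 hpos
  have hasDerivAt_sq : HasDerivAt (fun z : ℝ => R ^ 2 - 2 * R * z + σ ^ 2) (-(2 * R)) z := by
    simpa using (((hasDerivAt_id z).const_mul (2 * R)).const_sub (R ^ 2)).add_const (σ ^ 2)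
  have hasDerivAt_sqrt := hasDerivAt_sq.sqrt hpos.ne'
  refine ((hasDerivAt_sqrt.neg.add ((hasDerivAt_const z (R ^ 2 - σ ^ 2)).div hasDerivAt_sqrt
    sqrt_pos.ne')).const_mul (2 * R ^ 2)⁻¹).congr_deriv ?_
  have sq_sqrt := Real.sq_sqrt hpos.le
  set u := √(R ^ 2 - 2 * R * z + σ ^ 2)
  field_simp
  linear_combination R * sq_sqrt

-- Up to `2 * π * σ`, this is the force exerted at distance `R` by the sphere of radius `σ`.
theorem integral_coulomb_zone {R σ : ℝ} (hR : 0 < R) (hσ : 0 < σ) (hne : σ ≠ R) :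
    ∫ z in -σ..σ, (R - z) / √(R ^ 2 - 2 * R * z + σ ^ 2) ^ 3 =
      2 * σ * if σ ≤ R then (R ^ 2)⁻¹ else 0 := by
  have sub_ne : R - σ ≠ 0 := sub_ne_zero.2 hne.symm
  have sq_pos : ∀ z ∈ uIcc (-σ) σ, 0 < R ^ 2 - 2 * R * z + σ ^ 2 := fun z hz => by
    rw [uIcc_of_le (by linarith)] at hz
    nlinarith [mul_nonneg hR.le (sub_nonneg.2 hz.2), sq_pos_of_ne_zero sub_ne]
  have integrand_continuousOn :
      ContinuousOn (fun z => (R - z) / √(R ^ 2 - 2 * R * z + σ ^ 2) ^ 3) (uIcc (-σ) σ) :=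
    ContinuousOn.div (by fun_prop) (by fun_prop) fun z hz =>
      (pow_pos (Real.sqrt_pos.2 (sq_pos z hz)) 3).ne'
  rw [intervalIntegral.integral_eq_sub_of_hasDerivAt
      (fun z hz => hasDerivAt_coulombPrimitive hR (sq_pos z hz))
      integrand_continuousOn.intervalIntegrable,
    show R ^ 2 - 2 * R * σ + σ ^ 2 = (R - σ) ^ 2 by ring,
    show R ^ 2 - 2 * R * -σ + σ ^ 2 = (R + σ) ^ 2 by ring, Real.sqrt_sq_eq_abs,
    Real.sqrt_sq (by linarith)]
  have add_ne : R + σ ≠ 0 := by positivity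
  rcases lt_or_gt_of_ne hne with inside | outside
  · rw [if_pos inside.le, abs_of_pos (by linarith)]
    field_simp
    ring
  · rw [if_neg outside.not_ge, abs_of_neg (by linarith), mul_zero]
    field_simp [neg_ne_zero.2 sub_ne]
    ring

theorem integrable_indicator_inv_norm_sq :
    Integrable ((Metric.ball (0 : E3) 1).indicator fun y => (‖y‖ ^ 2)⁻¹) := by
  refine (integrable_indicator_iff Metric.isOpen_ball.measurableSet).2
    (integrableOn_ball_of_norm_le_rpow (C := 1) (α := 2) (by simp) (by simp; norm_num)
      (.of_forall fun y => ?_) (Measurable.aestronglyMeasurable (by fun_prop)))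
  rw [one_mul, Real.rpow_neg (norm_nonneg _), norm_inv, norm_pow, norm_norm, Real.rpow_two]

/-- The Coulomb field of the charge density `ρ`, without the factor `1 / (4 * π)`. -/
def coulombField (ρ : E3 → ℝ) (x : E3) : E3 := ∫ y, (ρ y / ‖x - y‖ ^ 3) • (x - y)

section Coulomb

variable {ρ : E3 → ℝ} {M : ℝ}

theorem norm_coulombKernel_le (hb : ∀ y, |ρ y| ≤ M) (x y : E3) :
    ‖(ρ y / ‖x - y‖ ^ 3) • (x - y)‖ ≤
      M * (Metric.ball (0 : E3) 1).indicator (fun y => (‖y‖ ^ 2)⁻¹) (x - y) + |ρ y| := by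
  have kernel_eq : ‖(ρ y / ‖x - y‖ ^ 3) • (x - y)‖ = |ρ y| * (‖x - y‖ ^ 2)⁻¹ := by
    rw [norm_smul, norm_div, norm_pow, norm_norm, Real.norm_eq_abs]
    rcases eq_or_ne ‖x - y‖ 0 with h | h
    · simp [h]
    · field_simp
  rw [kernel_eq]
  by_cases hball : x - y ∈ Metric.ball (0 : E3) 1
  · rw [indicator_of_mem hball]
    exact (mul_le_mul_of_nonneg_right (hb y) (by positivity)).trans
      (le_add_of_nonneg_right (abs_nonneg _))
  · rw [indicator_of_notMem hball, mul_zero, zero_add]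
    have one_le_dist : 1 ≤ ‖x - y‖ := by simpa using hball
    exact mul_le_of_le_one_right (abs_nonneg _) (inv_le_one_of_one_le₀ (one_le_pow₀ one_le_dist))

theorem integrable_coulombKernel (hi : Integrable ρ) (hb : ∀ y, |ρ y| ≤ M) (x : E3) :
    Integrable fun y : E3 => (ρ y / ‖x - y‖ ^ 3) • (x - y) := by
  have kernel_measurable : Measurable fun y : E3 => (‖x - y‖ ^ 3)⁻¹ := by fun_prop
  exact Integrable.mono' (((integrable_indicator_inv_norm_sq.comp_sub_left x).const_mul M).add
    hi.abs) ((hi.aestronglyMeasurable.mul kernel_measurable.aestronglyMeasurable).smul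
      (by fun_prop)) (.of_forall fun y => norm_coulombKernel_le hb x y)

theorem coulombField_map (U : E3 ≃ₗᵢ[ℝ] E3) (hU : ∀ y, ρ (U y) = ρ y) (x : E3) :
    coulombField ρ (U x) = U (coulombField ρ x) := by
  unfold coulombField
  rw [← U.measurePreserving.integral_comp U.toHomeomorph.measurableEmbedding]
  refine Eq.trans ?_ (U.toContinuousLinearEquiv.integral_comp_comm _)
  simp [hU, ← map_sub]

end Coulomb

theorem norm_single_sub {R : ℝ} (y : E3) :
    ‖EuclideanSpace.single (0 : Fin 3) R - y‖ = √(R ^ 2 - 2 * R * y 0 + ‖y‖ ^ 2) := by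
  rw [← Real.sqrt_sq (norm_nonneg (_ - y)), norm_sub_sq_real, EuclideanSpace.inner_single_left,
    PiLp.norm_single, Real.norm_eq_abs, sq_abs, RCLike.conj_to_real, mul_assoc]

section Newton

variable {p : ℝ → ℝ} {M : ℝ} (hp : Measurable p) (hb : ∀ r, |p r| ≤ M)
  (hi : Integrable fun y : E3 => p ‖y‖)
include hp hb hi

theorem inner_single_coulombField {R : ℝ} (hR : 0 < R) :
    inner ℝ (EuclideanSpace.single (0 : Fin 3) R)
      (coulombField (fun y => p ‖y‖) (EuclideanSpace.single (0 : Fin 3) R)) =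
      R⁻¹ * ∫ y in {y : E3 | ‖y‖ ≤ R}, p ‖y‖ := by
  have kernel_integrable := integrable_coulombKernel hi (fun y => hb ‖y‖)
    (EuclideanSpace.single (0 : Fin 3) R)
  set F : ℝ × ℝ → ℝ := fun q => p q.1 * R * ((R - q.2) / √(R ^ 2 - 2 * R * q.2 + q.1 ^ 2) ^ 3)
  set G : ℝ × ℝ → ℝ := fun q => p q.1 * R * if q.1 ≤ R then (R ^ 2)⁻¹ else 0
  have inner_kernel : ∀ y : E3, inner ℝ (EuclideanSpace.single (0 : Fin 3) R)
      ((p ‖y‖ / ‖EuclideanSpace.single (0 : Fin 3) R - y‖ ^ 3) •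
        (EuclideanSpace.single (0 : Fin 3) R - y)) = F (‖y‖, y 0) := fun y => by
    rw [inner_smul_right, norm_single_sub, EuclideanSpace.inner_single_left]
    simp only [F, PiLp.sub_apply, PiLp.single_apply, if_true, RCLike.conj_to_real]
    ring
  have measurableSet_closedBall : MeasurableSet {y : E3 | ‖y‖ ≤ R} :=
    measurableSet_le (by fun_prop) (by fun_prop)
  have G_eq : ∀ y : E3, G (‖y‖, y 0) =
      {y : E3 | ‖y‖ ≤ R}.indicator (fun y => R⁻¹ * p ‖y‖) y := fun y => by
    by_cases h : ‖y‖ ≤ R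
    · simp only [G, indicator, mem_ofPred_eq, if_pos h]
      field_simp
    · simp only [G, indicator, mem_ofPred_eq, if_neg h, mul_zero]
  have G_measurable : Measurable G := Measurable.mul (by fun_prop) (Measurable.ite
    (measurableSet_le (by fun_prop) (by fun_prop)) measurable_const measurable_const)
  rw [coulombField, ← integral_inner kernel_integrable]
  calc ∫ y : E3, inner ℝ (EuclideanSpace.single (0 : Fin 3) R)
          ((p ‖y‖ / ‖EuclideanSpace.single (0 : Fin 3) R - y‖ ^ 3) •
            (EuclideanSpace.single (0 : Fin 3) R - y))
      = ∫ y : E3, F (‖y‖, y 0) := integral_congr_ae (.of_forall inner_kernel)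
    _ = ∫ y : E3, G (‖y‖, y 0) := by
        refine integral_norm_coord_congr (R := R) (by fun_prop) G_measurable
          ((kernel_integrable.const_inner _).congr (.of_forall inner_kernel))
          (((hi.const_mul _).indicator measurableSet_closedBall).congr
            (.of_forall fun y => (G_eq y).symm)) fun σ hσ hne => ?_
        simp only [F]
        change _ = ∫ _ in -σ..σ, p σ * R * if σ ≤ R then (R ^ 2)⁻¹ else 0
        rw [intervalIntegral.integral_const_mul, integral_coulomb_zone hR hσ hne,
          intervalIntegral.integral_const, smul_eq_mul]
        ring
    _ = R⁻¹ * ∫ y in {y : E3 | ‖y‖ ≤ R}, p ‖y‖ := by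
        simp only [G_eq, integral_indicator measurableSet_closedBall, integral_const_mul]

-- By symmetry under the reflection fixing the axis, the field at a point of the axis is axial.
theorem coulombField_single {R : ℝ} (hR : 0 < R) :
    coulombField (fun y => p ‖y‖) (EuclideanSpace.single (0 : Fin 3) R) =
      ((∫ y in {y : E3 | ‖y‖ ≤ R}, p ‖y‖) / R ^ 3) • EuclideanSpace.single (0 : Fin 3) R := by
  have inner_eq := inner_single_coulombField hp hb hi hR
  set a : E3 := EuclideanSpace.single (0 : Fin 3) R
  have norm_a : ‖a‖ = R := by simp [a, abs_of_pos hR]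
  have field_fixed := coulombField_map (ρ := fun y => p ‖y‖) (ℝ ∙ a).reflection
    (fun y => by rw [LinearIsometryEquiv.norm_map]) a
  rw [(Submodule.reflection_eq_self_iff a).2 (Submodule.mem_span_singleton_self a), eq_comm,
    Submodule.reflection_eq_self_iff, Submodule.mem_span_singleton] at field_fixed
  obtain ⟨c, field_eq⟩ := field_fixed
  rw [← field_eq, inner_smul_right, real_inner_self_eq_norm_sq, norm_a] at inner_eq
  rw [← field_eq]
  congr 1
  field_simp at inner_eq ⊢
  linarith

theorem coulombField_comp_norm (x : E3) :
    coulombField (fun y => p ‖y‖) x =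
      ((∫ y in {y : E3 | ‖y‖ ≤ ‖x‖}, p ‖y‖) / ‖x‖ ^ 3) • x := by
  have radial : ∀ (U : E3 ≃ₗᵢ[ℝ] E3) (x : E3),
      coulombField (fun y => p ‖y‖) (U x) = U (coulombField (fun y => p ‖y‖) x) :=
    fun U => coulombField_map U fun y => by rw [U.norm_map]
  rcases eq_or_ne x 0 with rfl | hx
  · have field_odd := radial (LinearIsometryEquiv.neg ℝ) 0
    rw [map_zero, LinearIsometryEquiv.coe_neg, eq_neg_iff_add_eq_zero, ← two_smul ℝ] at field_odd
    rw [smul_zero, (smul_eq_zero_iff_right two_ne_zero).1 field_odd]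
  have norm_eq : ‖(EuclideanSpace.single (0 : Fin 3) ‖x‖ : E3)‖ = ‖x‖ := by simp
  have field_eq := radial (ℝ ∙ (EuclideanSpace.single (0 : Fin 3) ‖x‖ - x))ᗮ.reflection
    (EuclideanSpace.single (0 : Fin 3) ‖x‖)
  rwa [coulombField_single hp hb hi (norm_pos_iff.2 hx), map_smul,
    Submodule.reflection_sub norm_eq] at field_eq

end Newton

end ShellTheorem

section RadialDensity

open Filter Topology

/-- The phase-space density that has the values `g` at time `0` and is constant along the
characteristics of the field `E`. -/
def flowDens (g : E3 × E3 → ℝ) (E : ℝ → E3 → E3) (t : ℝ) (z : E3 × E3) : ℝ :=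
  g (odeFlow (phaseVF E) t 0 z)

/-- The spatial density of `flowDens g E t`. -/
def flowRho (g : E3 × E3 → ℝ) (E : ℝ → E3 → E3) (t : ℝ) (x : E3) : ℝ :=
  ∫ v, flowDens g E t (x, v)

section Transport

variable {B D : ℝ} {L : ℝ → ℝ} {E : ℝ → E3 → E3} {g : E3 × E3 → ℝ}

theorem HasPolynomialDecay.flowDens_nonneg (hg : HasPolynomialDecay D g) (t : ℝ) (z : E3 × E3) :
    0 ≤ flowDens g E t z := hg.nonneg _

theorem HasPolynomialDecay.flowRho_nonneg (hg : HasPolynomialDecay D g) (t : ℝ) (x : E3) :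
    0 ≤ flowRho g E t x := integral_nonneg fun _ => hg.flowDens_nonneg _ _

namespace IsLipschitzField

variable (hE : IsLipschitzField B L E) (hg : HasPolynomialDecay D g)
include hE

theorem flowDens_zero (z : E3 × E3) : flowDens g E 0 z = g z := by
  rw [flowDens, hE.isLipschitzFamily.odeFlow_self]

theorem flowDens_odeFlow (s t : ℝ) (z : E3 × E3) :
    flowDens g E t (odeFlow (phaseVF E) s t z) = flowDens g E s z := by
  rw [flowDens, flowDens, hE.isLipschitzFamily.odeFlow_odeFlow]

theorem flowDens_charFlow (t : ℝ) (z : E3 × E3) : flowDens g E t (charFlow E t z) = g z := by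
  rw [charFlow, hE.flowDens_odeFlow, hE.flowDens_zero]

include hg

theorem continuous_flowDens : Continuous fun p : ℝ × E3 × E3 => flowDens g E p.1 p.2 :=
  hg.continuous.comp (hE.isLipschitzFamily.odeFlow_source 0).continuous_uncurry

theorem flowDens_le {T t : ℝ} (ht : |t| ≤ T) (x v : E3) :
    flowDens g E t (x, v) ≤ D * (1 + B * T) ^ 4 * ((1 + ‖v‖) ^ 4)⁻¹ := by
  have hT : 0 ≤ T := (abs_nonneg t).trans ht
  set w := odeFlow (phaseVF E) t 0 (x, v)
  have vel_sub_le : ‖v - w.2‖ ≤ B * T := by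
    have := hE.norm_vel_sub_le t 0 w
    rw [hE.charFlow_zero, charFlow, hE.isLipschitzFamily.odeFlow_odeFlow_self, sub_zero] at this
    exact this.trans (mul_le_mul_of_nonneg_left ht hE.bound_nonneg)
  refine hg.le_of_norm_le_add (mul_nonneg hE.bound_nonneg hT) (z := w) ?_
  linarith [norm_le_norm_add_norm_sub' v w.2]

theorem continuous_flowRho : Continuous fun p : ℝ × E3 => flowRho g E p.1 p.2 := by
  have hF := hE.continuous_flowDens hg
  refine continuous_iff_continuousAt.2 fun ⟨t, x⟩ => continuousAt_of_dominated
    (bound := fun v => D * (1 + B * (|t| + 1)) ^ 4 * ((1 + ‖v‖) ^ 4)⁻¹) ?_ ?_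
    (integrable_inv_one_add_norm_pow_four.const_mul _) ?_
  · exact .of_forall fun p => (hF.comp (by fun_prop : Continuous fun v => (p.1, p.2, v)))
      |>.aestronglyMeasurable
  · have near_t : ∀ᶠ p : ℝ × E3 in 𝓝 (t, x), |p.1| < |t| + 1 :=
      continuous_fst.abs.continuousAt.eventually_lt continuousAt_const (lt_add_one |t|)
    filter_upwards [near_t] with p hp
    refine .of_forall fun v => ?_
    rw [Real.norm_of_nonneg (hg.flowDens_nonneg _ _)]
    exact hE.flowDens_le hg hp.le p.2 v
  · exact .of_forall fun v => (hF.comp (by fun_prop : Continuous fun p : ℝ × E3 => (p.1, p.2, v)))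
      |>.continuousAt

theorem exists_abs_flowRho_le (t : ℝ) : ∃ M, ∀ x, |flowRho g E t x| ≤ M := by
  refine ⟨∫ v : E3, D * (1 + B * |t|) ^ 4 * ((1 + ‖v‖) ^ 4)⁻¹, fun x => ?_⟩
  rw [abs_of_nonneg (hg.flowRho_nonneg t x)]
  exact integral_mono_of_nonneg (.of_forall fun v => hg.flowDens_nonneg _ _)
    (integrable_inv_one_add_norm_pow_four.const_mul _)
    (.of_forall fun v => hE.flowDens_le hg le_rfl x v)

theorem integrable_flowDens (t : ℝ) : Integrable (flowDens g E t) :=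
  (hE.measurePreserving_odeFlow t 0).integrable_comp_of_integrable hg.integrable

theorem integrable_flowRho (t : ℝ) : Integrable (flowRho g E t) :=
  (hE.integrable_flowDens hg t).integral_prod_left

theorem massMeasure_real_preimage_charFlow (t : ℝ) {A : Set (E3 × E3)} (hA : MeasurableSet A) :
    (massMeasure g).real (charFlow E t ⁻¹' A) = ∫ z in A, flowDens g E t z := by
  have hΦ := hE.measurePreserving_charFlow t
  calc (massMeasure g).real (charFlow E t ⁻¹' A)
      = ∫ z in charFlow E t ⁻¹' A, g z := by
        rw [measureReal_def, massMeasure, withDensity_apply _ (hΦ.measurable hA),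
          integral_eq_lintegral_of_nonneg_ae (.of_forall hg.nonneg)
            hg.continuous.aestronglyMeasurable]
    _ = ∫ z in charFlow E t ⁻¹' A, flowDens g E t (charFlow E t z) := by
        simp only [hE.flowDens_charFlow]
    _ = ∫ z in A, flowDens g E t z := by
        rw [← setIntegral_map hA _ hΦ.measurable.aemeasurable, hΦ.map_eq]
        exact hΦ.map_eq.symm ▸ (hE.integrable_flowDens hg t).aestronglyMeasurable

theorem flowMass_eq_setIntegral (t r : ℝ) :
    flowMass g E t r = ∫ x in {x : E3 | ‖x‖ ≤ r}, flowRho g E (max t 0) x := by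
  have measurableSet_ball : MeasurableSet {x : E3 | ‖x‖ ≤ r} :=
    measurableSet_le (by fun_prop) (by fun_prop)
  calc flowMass g E t r
      = (massMeasure g).real (charFlow E (max t 0) ⁻¹' ({x : E3 | ‖x‖ ≤ r} ×ˢ univ)) := by
        rw [flowMass, massIn, prod_univ]
        rfl
    _ = ∫ z in {x : E3 | ‖x‖ ≤ r} ×ˢ univ, flowDens g E (max t 0) z :=
        hE.massMeasure_real_preimage_charFlow hg _ (measurableSet_ball.prod .univ)
    _ = ∫ x in {x : E3 | ‖x‖ ≤ r}, flowRho g E (max t 0) x := by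
        rw [Measure.volume_eq_prod, setIntegral_prod _
          (by exact (hE.integrable_flowDens hg _).integrableOn)]
        simp only [setIntegral_univ, flowRho]

end IsLipschitzField

end Transport

section Rotation

variable {V : Type*} [NormedAddCommGroup V] [InnerProductSpace ℝ V]

theorem exists_ne_zero_inner_eq_zero (hV : 1 < Module.finrank ℝ V) (y : V) :
    ∃ w : V, w ≠ 0 ∧ inner ℝ y w = 0 := by
  have orthogonal_ne_bot : (ℝ ∙ y)ᗮ ≠ ⊥ := by
    rw [Ne, Submodule.orthogonal_eq_bot_iff]
    intro span_eq_top
    have finrank_le := finrank_span_finset_le_card (R := ℝ) {y}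
    rw [Finset.coe_singleton, Set.finrank, span_eq_top, finrank_top] at finrank_le
    exact hV.not_ge finrank_le
  obtain ⟨w, hw, w_ne_zero⟩ := Submodule.exists_mem_ne_zero_of_ne_bot orthogonal_ne_bot
  exact ⟨w, w_ne_zero, Submodule.mem_orthogonal_singleton_iff_inner_right.1 hw⟩

variable [FiniteDimensional ℝ V]

theorem det_reflection_orthogonal_singleton {w : V} (hw : w ≠ 0) :
    (ℝ ∙ w)ᗮ.reflection.toLinearEquiv.det = -1 := by
  rw [Submodule.linearEquiv_det_reflection, Submodule.orthogonal_orthogonal,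
    finrank_span_singleton hw, pow_one]

theorem exists_rotation_apply_eq (hV : 1 < Module.finrank ℝ V) {x y : V} (h : ‖x‖ = ‖y‖) :
    ∃ U : V ≃ₗᵢ[ℝ] V, U.toLinearEquiv.det = 1 ∧ U x = y := by
  rcases eq_or_ne x y with rfl | hne
  · exact ⟨LinearIsometryEquiv.refl ℝ V, LinearEquiv.det_refl, rfl⟩
  obtain ⟨w, w_ne_zero, y_orthogonal⟩ := exists_ne_zero_inner_eq_zero hV y
  -- The reflection exchanging `x` and `y` is followed by one that fixes `y`.
  refine ⟨(ℝ ∙ (x - y))ᗮ.reflection.trans (ℝ ∙ w)ᗮ.reflection, ?_, ?_⟩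
  · change ((ℝ ∙ (x - y))ᗮ.reflection.toLinearEquiv.trans
      (ℝ ∙ w)ᗮ.reflection.toLinearEquiv).det = 1
    rw [LinearEquiv.det_trans, det_reflection_orthogonal_singleton w_ne_zero,
      det_reflection_orthogonal_singleton (sub_ne_zero.2 hne), neg_mul_neg, one_mul]
  · rwa [LinearIsometryEquiv.trans_apply, Submodule.reflection_sub h,
      Submodule.reflection_eq_self_iff, Submodule.mem_orthogonal_singleton_iff_inner_left]

end Rotation

/-- Central fields, of the form `c (t, ‖x‖) • x`. -/
def IsCentral (E : ℝ → E3 → E3) : Prop := ∃ c : ℝ → ℝ → ℝ, ∀ t x, E t x = c t ‖x‖ • x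

/-- Invariance of a phase-space density under the simultaneous rotations of position and
momentum. -/
def IsRotationInvariant (g : E3 × E3 → ℝ) : Prop :=
  ∀ U : E3 ≃ₗᵢ[ℝ] E3, U.toLinearEquiv.det = 1 → ∀ x v, g (U x, U v) = g (x, v)

theorem vhat_map (U : E3 ≃ₗᵢ[ℝ] E3) (v : E3) : vhat (U v) = U (vhat v) := by
  simp [vhat]

namespace IsLipschitzField

variable {B : ℝ} {L : ℝ → ℝ} {E : ℝ → E3 → E3} (hE : IsLipschitzField B L E) (hc : IsCentral E)
include hE hc

theorem odeFlow_map (U : E3 ≃ₗᵢ[ℝ] E3) (s t : ℝ) (z : E3 × E3) :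
    odeFlow (phaseVF E) s t (Prod.map U U z) = Prod.map U U (odeFlow (phaseVF E) s t z) := by
  obtain ⟨c, hc⟩ := hc
  have phaseVF_map : ∀ t z, phaseVF E t (Prod.map U U z) = Prod.map U U (phaseVF E t z) :=
    fun t z => by simp [phaseVF, vhat_map, hc]
  refine hE.isLipschitzFamily.odeFlow_eq
    (α := fun t => Prod.map U U (odeFlow (phaseVF E) s t z))
    (by rw [hE.isLipschitzFamily.odeFlow_self]) (fun t => ?_) t
  rw [phaseVF_map]
  exact ((U : E3 →L[ℝ] E3).prodMap (U : E3 →L[ℝ] E3)).hasFDerivAt.comp_hasDerivAt t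
    (hE.isLipschitzFamily.hasDerivAt_odeFlow s t z)

theorem flowRho_eq_of_norm_eq {g : E3 × E3 → ℝ} (hg : IsRotationInvariant g) (t : ℝ) {x y : E3}
    (h : ‖x‖ = ‖y‖) : flowRho g E t x = flowRho g E t y := by
  obtain ⟨U, det_eq, rfl⟩ := exists_rotation_apply_eq (by simp) h
  have flowDens_map : ∀ v, flowDens g E t (U x, U v) = flowDens g E t (x, v) := fun v => by
    rw [flowDens, flowDens, ← hg U det_eq (odeFlow _ _ _ (x, v)).1]
    exact congrArg g (hE.odeFlow_map hc U t 0 (x, v))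
  calc flowRho g E t x = ∫ v, flowDens g E t (U x, U v) := by simp only [flowDens_map, flowRho]
    _ = flowRho g E t (U x) := U.measurePreserving.integral_comp
        U.toHomeomorph.measurableEmbedding fun v => flowDens g E t (U x, v)

end IsLipschitzField

end RadialDensity

section RadialMean
open Filter Topology Metric

/-- The mean of the radial function `y ↦ p ‖y‖` over the ball of radius `r` in dimension three,
written so that it also makes sense at `r = 0`. -/
def ballMean (p : ℝ → ℝ) (r : ℝ) : ℝ := 3 * ∫ u in (0 : ℝ)..1, u ^ 2 * p (r * u)

theorem pow_three_mul_ballMean (p : ℝ → ℝ) (r : ℝ) :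
    r ^ 3 * ballMean p r = 3 * ∫ s in (0 : ℝ)..r, s ^ 2 * p s := by
  have h_subst := intervalIntegral.mul_integral_comp_mul_left (a := 0) (b := 1) (c := r)
    (f := fun s => s ^ 2 * p s)
  rw [mul_zero, mul_one] at h_subst
  rw [← h_subst, ballMean]
  simp only [← intervalIntegral.integral_const_mul]
  congr 1 with u
  ring

@[simp]
theorem ballMean_zero (p : ℝ → ℝ) : ballMean p 0 = p 0 := by
  simp only [ballMean, zero_mul, intervalIntegral.integral_mul_const, integral_pow]
  ring

theorem continuous_ballMean {X : Type*} [TopologicalSpace X] {p : X → ℝ → ℝ}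
    (hp : Continuous fun q : X × ℝ => p q.1 q.2) :
    Continuous fun q : X × ℝ => ballMean (p q.1) q.2 := by
  refine continuous_const.mul
    (intervalIntegral.continuous_parametric_intervalIntegral_of_continuous' ?_ 0 1)
  have h_scaled : Continuous fun w : (X × ℝ) × ℝ => p w.1.1 (w.1.2 * w.2) :=
    hp.comp (by fun_prop : Continuous fun w : (X × ℝ) × ℝ => (w.1.1, w.1.2 * w.2))
  exact (continuous_snd.pow 2).mul h_scaled

theorem hasDerivAt_ballMean {p : ℝ → ℝ} (hp : Continuous p) {r : ℝ} (hr : 0 < r) :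
    HasDerivAt (ballMean p) (3 * (p r - ballMean p r) / r) r := by
  have hc : Continuous fun s => s ^ 2 * p s := by fun_prop
  have h_int : HasDerivAt (fun r => ∫ s in (0 : ℝ)..r, s ^ 2 * p s) (r ^ 2 * p r) r :=
    intervalIntegral.integral_hasDerivAt_right (hc.intervalIntegrable _ _)
      (hc.stronglyMeasurableAtFilter _ _) hc.continuousAt
  have h_quot := (h_int.const_mul 3).div (hasDerivAt_pow 3 r) (pow_pos hr 3).ne'
  have h_eq : ballMean p =ᶠ[𝓝 r]
      (fun r => 3 * ∫ s in (0 : ℝ)..r, s ^ 2 * p s) / fun r => r ^ 3 := by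
    filter_upwards [lt_mem_nhds hr] with s hs
    rw [Pi.div_apply, eq_div_iff (pow_pos hs 3).ne', ← pow_three_mul_ballMean p s, mul_comm]
  refine (h_quot.congr_of_eventuallyEq h_eq).congr_deriv ?_
  rw [← pow_three_mul_ballMean p r]
  field_simp
  norm_num
  ring

theorem setIntegral_norm_le (p : ℝ → ℝ) {r : ℝ} (hr : 0 ≤ r) :
    ∫ y in {y : E3 | ‖y‖ ≤ r}, p ‖y‖ = 4 / 3 * π * r ^ 3 * ballMean p r := by
  have h_unit : (volume : Measure E3).real (ball 0 1) = π * 4 / 3 := by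
    rw [measureReal_def, EuclideanSpace.volume_ball_fin_three, ENNReal.ofReal_one, one_pow,
      one_mul, ENNReal.toReal_ofReal (by positivity)]
  have h_indicator (y : E3) :
      {y : E3 | ‖y‖ ≤ r}.indicator (fun y => p ‖y‖) y = (Iic r).indicator p ‖y‖ := rfl
  have h_polar : ∫ s in Ioi (0 : ℝ), s ^ 2 • (Iic r).indicator p s =
      ∫ s in (0 : ℝ)..r, s ^ 2 * p s := by
    rw [intervalIntegral.integral_of_le hr, ← Ioi_inter_Iic,
      ← setIntegral_indicator measurableSet_Iic]
    simp only [smul_eq_mul, indicator_mul_right]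
  rw [← integral_indicator (measurableSet_le (by fun_prop) (by fun_prop))]
  simp only [h_indicator]
  rw [integral_fun_norm_addHaar, finrank_euclideanSpace_fin, h_unit, h_polar, mul_assoc,
    pow_three_mul_ballMean, nsmul_eq_mul, smul_eq_mul]
  push_cast
  ring

end RadialMean

section CentralField
open Filter Topology InnerProductSpace

variable {V : Type*} [NormedAddCommGroup V] [InnerProductSpace ℝ V]

theorem starProjection_singleton_eq (x : V) :
    (ℝ ∙ x).starProjection = (‖x‖ ^ 2)⁻¹ • (innerSL ℝ x).smulRight x := by
  ext y
  simp only [Submodule.starProjection_singleton, smul_apply,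
    ContinuousLinearMap.smulRight_apply, innerSL_apply_apply, smul_smul, RCLike.ofReal_real_eq_id,
    id, div_eq_inv_mul]

theorem continuousAt_starProjection_singleton {x : V} (hx : x ≠ 0) :
    ContinuousAt (fun x : V => (ℝ ∙ x).starProjection) x := by
  simp only [starProjection_singleton_eq]
  have hinv : ContinuousAt (fun x : V => (‖x‖ ^ 2)⁻¹) x :=
    ContinuousAt.inv₀ (by fun_prop) (pow_pos (norm_pos_iff.2 hx) 2).ne'
  have hrankOne : Continuous fun x : V =>
      ContinuousLinearMap.smulRightL ℝ V V (innerSL ℝ x) x := by fun_prop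
  exact hinv.smul hrankOne.continuousAt

theorem continuous_smul_starProjection_singleton {X : Type*} [TopologicalSpace X] {c : X → ℝ}
    {x : X → V} (hc : Continuous c) (hx : Continuous x) (h0 : ∀ q, x q = 0 → c q = 0) :
    Continuous fun q => c q • (ℝ ∙ x q).starProjection := by
  refine continuous_iff_continuousAt.2 fun q => ?_
  by_cases hq : x q = 0
  · rw [ContinuousAt, h0 q hq, zero_smul]
    refine squeeze_zero_norm (a := fun q => ‖c q‖) (fun w => ?_) ?_
    · rw [norm_smul]
      exact mul_le_of_le_one_right (norm_nonneg _) (Submodule.starProjection_norm_le _)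
    · simpa only [h0 q hq, norm_zero] using (hc.tendsto q).norm
  · exact hc.continuousAt.smul
      ((continuousAt_starProjection_singleton hq).comp hx.continuousAt)

theorem hasFDerivAt_norm_of_ne_zero {x : V} (hx : x ≠ 0) :
    HasFDerivAt (fun x : V => ‖x‖) (‖x‖⁻¹ • innerSL ℝ x) x := by
  have h_sqrt := (hasStrictFDerivAt_norm_sq x).hasFDerivAt.sqrt
    (pow_pos (norm_pos_iff.2 hx) 2).ne'
  simp only [Real.sqrt_sq (norm_nonneg _)] at h_sqrt
  refine h_sqrt.congr_fderiv ?_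
  ext y
  simp
  field_simp

theorem hasFDerivAt_comp_norm_smul {k : ℝ → ℝ} {k' : ℝ} {x : V} (hx : x ≠ 0)
    (hk : HasDerivAt k k' ‖x‖) :
    HasFDerivAt (fun x : V => k ‖x‖ • x)
      (k ‖x‖ • ContinuousLinearMap.id ℝ V + (‖x‖ * k') • (ℝ ∙ x).starProjection) x := by
  have hr : ‖x‖ ≠ 0 := norm_ne_zero_iff.2 hx
  refine ((hk.comp_hasFDerivAt x (hasFDerivAt_norm_of_ne_zero hx)).smul
    (hasFDerivAt_id x)).congr_fderiv ?_
  ext1 y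
  simp only [starProjection_singleton_eq, add_apply, smul_apply, ContinuousLinearMap.id_apply,
    ContinuousLinearMap.smulRight_apply, smul_smul, id, Function.comp, smul_eq_mul]
  congr 2
  field_simp

theorem hasFDerivAt_zero_comp_norm_smul {k : ℝ → ℝ} (hk : ContinuousAt k 0) :
    HasFDerivAt (fun x : V => k ‖x‖ • x) (k 0 • ContinuousLinearMap.id ℝ V) 0 := by
  rw [hasFDerivAt_iff_isLittleO_nhds_zero, Asymptotics.isLittleO_iff]
  intro ε hε
  have h_lim : Tendsto (fun h : V => k ‖h‖) (𝓝 0) (𝓝 (k 0)) :=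
    hk.tendsto.comp (by simpa using (continuous_norm (E := V)).tendsto 0)
  filter_upwards [Metric.tendsto_nhds.1 h_lim ε hε] with h hh
  simp only [zero_add, smul_zero, sub_zero, smul_apply, ContinuousLinearMap.id_apply]
  rw [← sub_smul, norm_smul, ← dist_eq_norm]
  gcongr

/-- The derivative at `x` of the central field `x ↦ (ballMean p ‖x‖ / 3) • x`, whose divergence
is the density `p ‖x‖`. -/
def centralDeriv (p : ℝ → ℝ) (x : V) : V →L[ℝ] V :=
  (ballMean p ‖x‖ / 3) • ContinuousLinearMap.id ℝ V +
    (p ‖x‖ - ballMean p ‖x‖) • (ℝ ∙ x).starProjection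

theorem hasFDerivAt_ballMean_smul {p : ℝ → ℝ} (hp : Continuous p) (x : V) :
    HasFDerivAt (fun x : V => (ballMean p ‖x‖ / 3) • x) (centralDeriv p x) x := by
  rcases eq_or_ne x 0 with rfl | hx
  · have hk : Continuous (ballMean p) :=
      (continuous_ballMean (X := Unit) (p := fun _ => p) (by fun_prop)).comp
        (by fun_prop : Continuous fun r : ℝ => ((), r))
    refine (hasFDerivAt_zero_comp_norm_smul (k := fun r => ballMean p r / 3)
      (by fun_prop)).congr_fderiv ?_
    simp only [centralDeriv, norm_zero, ballMean_zero, sub_self, zero_smul, add_zero]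
  · have hr : 0 < ‖x‖ := norm_pos_iff.2 hx
    refine (hasFDerivAt_comp_norm_smul hx
      ((hasDerivAt_ballMean hp hr).div_const 3)).congr_fderiv ?_
    rw [centralDeriv]
    congr 2
    field_simp

theorem continuous_centralDeriv {X : Type*} [TopologicalSpace X] {p : X → ℝ → ℝ}
    (hp : Continuous fun q : X × ℝ => p q.1 q.2) :
    Continuous fun q : X × V => centralDeriv (p q.1) q.2 := by
  have h_norm : Continuous fun q : X × V => (q.1, ‖q.2‖) := by fun_prop
  have h_mean : Continuous fun q : X × V => ballMean (p q.1) ‖q.2‖ :=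
    (continuous_ballMean hp).comp h_norm
  refine ((h_mean.div_const 3).smul continuous_const).add
    (continuous_smul_starProjection_singleton ((hp.comp h_norm).sub h_mean) continuous_snd
      fun q hq => ?_)
  rw [hq, norm_zero, ballMean_zero]
  exact sub_self _

end CentralField

section SelfConsistentFlow

variable {B D : ℝ} {L : ℝ → ℝ} {E : ℝ → E3 → E3} {g : E3 × E3 → ℝ}

/-- The radial profile of the spatial density transported by `E` from the datum `g`, frozen at
its initial value for negative times. -/
def rhoProfile (g : E3 × E3 → ℝ) (E : ℝ → E3 → E3) (t r : ℝ) : ℝ :=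
  flowRho g E (max t 0) (EuclideanSpace.single (0 : Fin 3) r)

theorem IsLipschitzField.continuous_rhoProfile (hE : IsLipschitzField B L E)
    (hg : HasPolynomialDecay D g) : Continuous fun q : ℝ × ℝ => rhoProfile g E q.1 q.2 := by
  have h_single : Continuous fun r : ℝ => (EuclideanSpace.single (0 : Fin 3) r : E3) :=
    (Isometry.of_dist_eq fun a b => PiLp.dist_single_same _ _ _ _ _).continuous
  exact (hE.continuous_flowRho hg).comp
    ((continuous_fst.max continuous_const).prodMk (h_single.comp continuous_snd))

/-- The fixed points of the field iteration for radial data: `E` is the central field generated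
by the mass that its own characteristics transport from the rotation invariant datum `g`. -/
structure IsSelfConsistent (g : E3 × E3 → ℝ) (E : ℝ → E3 → E3) : Prop where
  isRotationInvariant : IsRotationInvariant g
  field_eq : ∀ t x, E t x = ((4 * π)⁻¹ * (flowMass g E t ‖x‖ / ‖x‖ ^ 3)) • x

namespace IsSelfConsistent

variable (h : IsSelfConsistent g E) (hE : IsLipschitzField B L E) (hg : HasPolynomialDecay D g)

include h

theorem isCentral : IsCentral E :=
  ⟨fun t r => (4 * π)⁻¹ * (flowMass g E t r / r ^ 3), h.field_eq⟩

include hE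

theorem flowRho_eq (t : ℝ) (x : E3) : flowRho g E (max t 0) x = rhoProfile g E t ‖x‖ :=
  hE.flowRho_eq_of_norm_eq h.isCentral h.isRotationInvariant _ (by simp)

include hg

theorem integrable_rhoProfile (t : ℝ) : Integrable fun y : E3 => rhoProfile g E t ‖y‖ := by
  simp only [← h.flowRho_eq hE]
  exact hE.integrable_flowRho hg _

theorem flowMass_eq (t r : ℝ) :
    flowMass g E t r = ∫ y in {y : E3 | ‖y‖ ≤ r}, rhoProfile g E t ‖y‖ := by
  simp only [hE.flowMass_eq_setIntegral hg, h.flowRho_eq hE]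

theorem field_eq_ballMean (t : ℝ) :
    E t = fun x => (ballMean (rhoProfile g E t) ‖x‖ / 3) • x := by
  ext1 x
  rcases eq_or_ne x 0 with rfl | hx
  · rw [h.field_eq, smul_zero, smul_zero]
  have hr : 0 < ‖x‖ := norm_pos_iff.2 hx
  rw [h.field_eq, h.flowMass_eq hE hg, setIntegral_norm_le _ hr.le]
  congr 1
  field_simp

theorem hasFDerivAt_field (t : ℝ) (x : E3) :
    HasFDerivAt (E t) (centralDeriv (rhoProfile g E t) x) x := by
  rw [h.field_eq_ballMean hE hg t]
  exact hasFDerivAt_ballMean_smul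
    ((hE.continuous_rhoProfile hg).comp (continuous_const.prodMk continuous_id)) x

theorem contDiff_flowDens (hgs : ContDiff ℝ 1 g) :
    ContDiff ℝ 1 fun p : ℝ × E3 × E3 => flowDens g E p.1 p.2 := by
  refine hgs.comp (hE.isLipschitzFamily.contDiff_odeFlow_source
    (dv := fun t z => ((fderiv ℝ vhat z.2).comp (ContinuousLinearMap.snd ℝ E3 E3)).prod
      ((centralDeriv (rhoProfile g E t) z.1).comp (ContinuousLinearMap.fst ℝ E3 E3)))
    (fun t z => ?_) ?_ 0)
  · have h_vel : HasFDerivAt vhat (fderiv ℝ vhat z.2) z.2 :=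
      (contDiff_vhat.differentiable one_ne_zero z.2).hasFDerivAt
    exact (h_vel.comp z hasFDerivAt_snd).prodMk
      ((h.hasFDerivAt_field hE hg t z.1).comp z hasFDerivAt_fst)
  · have h_vel : Continuous fun p : ℝ × E3 × E3 =>
        (fderiv ℝ vhat p.2.2).comp (ContinuousLinearMap.snd ℝ E3 E3) :=
      ((contDiff_vhat.continuous_fderiv one_ne_zero).comp (by fun_prop)).clm_comp continuous_const
    have h_force : Continuous fun p : ℝ × E3 × E3 =>
        (centralDeriv (rhoProfile g E p.1) p.2.1).comp (ContinuousLinearMap.fst ℝ E3 E3) :=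
      ((continuous_centralDeriv (hE.continuous_rhoProfile hg)).comp
        (by fun_prop : Continuous fun p : ℝ × E3 × E3 => (p.1, p.2.1))).clm_comp continuous_const
    exact (ContinuousLinearMap.prodₗᵢ (𝕜 := ℝ) (E := E3 × E3) (F := E3) (G := E3)
      ℝ).continuous.comp (h_vel.prodMk h_force)

theorem fderiv_flowDens_eq_zero (hgs : ContDiff ℝ 1 g) (t : ℝ) (z : E3 × E3) :
    fderiv ℝ (fun p : ℝ × E3 × E3 => flowDens g E p.1 p.2) (t, z) (1, phaseVF E t z) = 0 := by
  have h_self := hE.isLipschitzFamily.odeFlow_self t z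
  have h_curve : HasDerivAt (fun τ => (τ, odeFlow (phaseVF E) t τ z)) (1, phaseVF E t z) t := by
    have h_flow := hE.isLipschitzFamily.hasDerivAt_odeFlow t t z
    rw [h_self] at h_flow
    exact (hasDerivAt_id t).prodMk h_flow
  have h_dens := (h.contDiff_flowDens hE hg hgs).differentiable one_ne_zero
    (t, odeFlow (phaseVF E) t t z)
  have h_chain := h_dens.hasFDerivAt.comp_hasDerivAt t h_curve
  have h_const : (fun p : ℝ × E3 × E3 => flowDens g E p.1 p.2) ∘
      (fun τ => (τ, odeFlow (phaseVF E) t τ z)) = fun _ => flowDens g E t z :=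
    funext fun τ => hE.flowDens_odeFlow t τ z
  rw [h_const, h_self] at h_chain
  exact h_chain.unique (hasDerivAt_const t _)

theorem rvpField_eq {t : ℝ} (ht : 0 ≤ t) (x : E3) :
    rvpField (fun t x v => flowDens g E t (x, v)) t x = E t x := by
  have h_rho : rvpRho (fun t x v => flowDens g E t (x, v)) t = fun y => rhoProfile g E t ‖y‖ := by
    ext y
    rw [← h.flowRho_eq hE, max_eq_left ht]
    rfl
  have h_cont : Continuous (rhoProfile g E t) :=
    (hE.continuous_rhoProfile hg).comp (continuous_const.prodMk continuous_id)
  obtain ⟨M, hM⟩ := hE.exists_abs_flowRho_le hg (max t 0)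
  calc rvpField (fun t x v => flowDens g E t (x, v)) t x
      = (4 * π)⁻¹ • coulombField (fun y => rhoProfile g E t ‖y‖) x := by rw [← h_rho]; rfl
    _ = E t x := by
      rw [coulombField_comp_norm h_cont.measurable (fun r => hM _)
        (h.integrable_rhoProfile hE hg t), h.field_eq, h.flowMass_eq hE hg, smul_smul]

theorem isRVPSolution (hgs : ContDiff ℝ 1 g) :
    IsRVPSolution (Ici 0) fun t x v => flowDens g E t (x, v) := by
  have h_smooth := h.contDiff_flowDens hE hg hgs
  refine ⟨fun t _ x v => hg.flowDens_nonneg _ _, h_smooth.contDiffOn, fun t ht x v => ?_⟩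
  have h_unique : UniqueDiffWithinAt ℝ (Ici (0 : ℝ) ×ˢ (univ : Set (E3 × E3))) (t, x, v) :=
    (uniqueDiffOn_Ici 0).prod uniqueDiffOn_univ _ ⟨ht, mem_univ _⟩
  rw [h.rvpField_eq hE hg ht,
    (h_smooth.differentiable one_ne_zero (t, x, v)).fderivWithin h_unique]
  exact h.fderiv_flowDens_eq_zero hE hg hgs t (x, v)

end IsSelfConsistent

end SelfConsistentFlow

theorem global_existence_radial_general {D : ℝ} {f0 : E3 → E3 → ℝ}
    (hf0_smooth : ContDiff ℝ 1 fun p : E3 × E3 => f0 p.1 p.2)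
    (hf0_decay : HasPolynomialDecay D fun p => f0 p.1 p.2)
    (hf0_radial : IsRotationInvariant fun p => f0 p.1 p.2) :
    ∃ f : ℝ → E3 → E3 → ℝ, IsRVPSolution (Ici 0) f ∧ (∀ x v, f 0 x v = f0 x v) ∧
      ∃ C : ℝ, ∀ t ∈ Ici (0 : ℝ), ∀ x : E3, ‖rvpField f t x‖ ≤ C := by
  obtain ⟨B, L, E, hE, hfix⟩ := hf0_decay.exists_field
  have hsc : IsSelfConsistent (fun p => f0 p.1 p.2) E := ⟨hf0_radial, hfix⟩
  refine ⟨_, hsc.isRVPSolution hE hf0_decay hf0_smooth, fun x v => hE.flowDens_zero (x, v), B,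
    fun t ht x => ?_⟩
  rw [hsc.rvpField_eq hE hf0_decay ht]
  exact hE.norm_le t x

/-- Global existence for the 3D relativistic Vlasov–Poisson system with radially
symmetric initial data decaying polynomially in phase space, together with finiteness
of the electric field on every finite time interval. -/
theorem global_existence_radial
    (s : ℕ) (hs : 6 ≤ s) (f0 : E3 → E3 → ℝ)
    (hf0_nonneg : ∀ x v, 0 ≤ f0 x v)
    (hf0_smooth : ContDiff ℝ s (fun p : E3 × E3 => f0 p.1 p.2))
    (hf0_radial : ∀ R : E3 ≃ₗᵢ[ℝ] E3, R.toLinearEquiv.det = 1 →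
      ∀ x v, f0 (R x) (R v) = f0 x v)
    (hf0_decay : ∀ n : ℕ, n ≤ s →
      MemLp (fun p : E3 × E3 =>
        (1 + ‖p.1‖ + ‖p.2‖) ^ (100 : ℕ) *
          ‖iteratedFDeriv ℝ n (fun q : E3 × E3 => f0 q.1 q.2) p‖) 2 volume) :
    ∃ f : ℝ → E3 → E3 → ℝ,
      IsRVPSolution (Set.Ici 0) f ∧ (∀ x v, f 0 x v = f0 x v) ∧
      ∀ T > (0 : ℝ), ∃ C : ℝ, ∀ t ∈ Set.Icc (0 : ℝ) T, ∀ x : E3, ‖rvpField f t x‖ ≤ C := by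
  have hf0_smooth6 : ContDiff ℝ 6 fun p : E3 × E3 => f0 p.1 p.2 :=
    hf0_smooth.of_le (by exact_mod_cast hs)
  obtain ⟨D, hf0_poly⟩ := exists_hasPolynomialDecay (by norm_num) hf0_smooth6
    (fun p => hf0_nonneg p.1 p.2) fun n hn => hf0_decay n (hn.trans hs)
  obtain ⟨f, hf, hf_zero, C, hC⟩ :=
    global_existence_radial_general (hf0_smooth6.of_le (by norm_num)) hf0_poly hf0_radial
  exact ⟨f, hf, hf_zero, fun T _ => ⟨C, fun t ht => hC t ht.1⟩⟩
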